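/- For every integer n ≥ 1, the averaged prime satisfies p̄_n > (n/2)·(ln n − 1/2) + 1/(4n). -/

import Mathlib

open Finset Real

/-- `nthPrime n` is the n-th prime number with 1-based indexing:
`nthPrime 1 = 2`, `nthPrime 2 = 3`, `nthPrime 3 = 5`, ... -/
noncomputable def nthPrime (n : ℕ) : ℕ := Nat.nth Nat.Prime (n - 1)

/-- The arithmetic average of the first `n` primes. -/
noncomputable def avgPrime (n : ℕ) : ℝ := (1 / (n : ℝ)) * ∑ i ∈ Finset.Icc 1 n, (nthPrime i : ℝ)

/-- The gap in the averaged primes. -/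
noncomputable def avgGap (n : ℕ) : ℝ := avgPrime (n + 1) - avgPrime n

/-- The averaged-prime counting function `π̄(x) = #{i ≥ 1 : p̄_i ≤ x}`. -/
noncomputable def avgPrimeCount (x : ℝ) : ℕ := Nat.card {i : ℕ | 1 ≤ i ∧ avgPrime i ≤ x}

/-- The ordinary prime counting function for a real argument. -/
noncomputable def primeCount (x : ℝ) : ℕ := Nat.card {q : ℕ | q.Prime ∧ (q : ℝ) ≤ x}

open Finset Real

open Filter Topology in
lemma had_fac1 {f : ℂ → ℂ} (hf : Differentiable ℂ f) (h0 : ∃ z, f z ≠ 0) {ρ : ℂ} (hρ : ρ ≠ 0) :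
    ∃ g : ℂ → ℂ, Differentiable ℂ g ∧ g ρ ≠ 0 ∧
      ∀ z, f z = (1 - z / ρ) ^ (analyticOrderNatAt f ρ) * g z := by
  have htop : analyticOrderAt f ρ ≠ ⊤ := by
    intro h
    rw [AnalyticOnNhd.analyticOrderAt_eq_top_iff_eq_zero ρ (fun z => hf.analyticAt z)] at h
    obtain ⟨z, hz⟩ := h0
    exact hz (by rw [h]; rfl)
  obtain ⟨g0, hg0, hg0ρ, hfg⟩ := ((hf.analyticAt ρ).analyticOrderAt_ne_top).1 htop
  set m := analyticOrderNatAt f ρ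
  have hfac : ∀ z, (z - ρ) = (-ρ) * (1 - z / ρ) := by intro z; field_simp; ring
  refine ⟨fun z => if z = ρ then (-ρ) ^ m * g0 ρ else f z / (1 - z / ρ) ^ m, ?_, ?_, ?_⟩
  · intro z
    by_cases hz : z = ρ
    · subst hz
      have : DifferentiableAt ℂ (fun w => (-z) ^ m * g0 w) z :=
        (hg0.differentiableAt).const_mul _
      refine this.congr_of_eventuallyEq ?_
      filter_upwards [hfg] with w hw
      by_cases hwz : w = z
      · simp [hwz]
      · simp only [hwz, if_false]
        rw [hw, hfac w, mul_pow, smul_eq_mul]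
        have : (1 - w / z) ≠ 0 := by
          intro h; apply hwz; have := hfac w; rw [h, mul_zero] at this; exact sub_eq_zero.1 this
        field_simp
    · have h1 : 1 - z / ρ ≠ 0 := by
        intro h; apply hz; have := hfac z; rw [h, mul_zero] at this; exact sub_eq_zero.1 this
      have : DifferentiableAt ℂ (fun w => f w / (1 - w / ρ) ^ m) z := by
        refine DifferentiableAt.fun_div (hf z) (by fun_prop) ?_
        exact pow_ne_zero _ h1
      refine this.congr_of_eventuallyEq ?_
      filter_upwards [isOpen_ne.mem_nhds hz] with w hw
      have hw' : w ≠ ρ := hw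
      simp [hw']
  · simp [hg0ρ, hρ]
  · intro z
    by_cases hz : z = ρ
    · subst hz
      have h2 : f z = (z - z) ^ m * g0 z := hfg.self_of_nhds
      simp only [if_true]
      rw [h2, ← mul_assoc, ← mul_pow, hfac]; ring_nf
    · have h1 : 1 - z / ρ ≠ 0 := by
        intro h; apply hz; have := hfac z; rw [h, mul_zero] at this; exact sub_eq_zero.1 this
      simp only [hz, if_false]
      field_simp

lemma had_facS {f : ℂ → ℂ} (hf : Differentiable ℂ f) (h0 : f 0 = 1) (s : Finset ℂ)
    (hs : ∀ ρ ∈ s, ρ ≠ 0) :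
    ∃ g : ℂ → ℂ, Differentiable ℂ g ∧ (∀ ρ ∈ s, g ρ ≠ 0) ∧
      ∀ z, f z = (∏ ρ ∈ s, (1 - z / ρ) ^ (analyticOrderNatAt f ρ)) * g z := by
  classical
  induction s using Finset.induction_on with
  | empty => exact ⟨f, hf, by simp, by simp⟩
  | insert a s ha ih =>
    obtain ⟨g, hg, hgs, hfg⟩ := ih (fun ρ h => hs ρ (Finset.mem_insert_of_mem h))
    have ha0 : a ≠ 0 := hs a (Finset.mem_insert_self _ _)
    have hg0 : g 0 ≠ 0 := by
      intro h; have := hfg 0; rw [h, h0, mul_zero] at this; exact one_ne_zero this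
    set P : ℂ → ℂ := fun z => ∏ ρ ∈ s, (1 - z / ρ) ^ (analyticOrderNatAt f ρ)
    have hP : Differentiable ℂ P := by
      apply Differentiable.fun_finsetProd; intro i hi; fun_prop
    have hPa : P a ≠ 0 := by
      apply Finset.prod_ne_zero_iff.2
      intro ρ hρ
      apply pow_ne_zero
      have hρ0 := hs ρ (Finset.mem_insert_of_mem hρ)
      intro h
      apply ha
      have : a = ρ := by field_simp at h; rw [mul_zero] at h; exact (sub_eq_zero.1 h).symm
      rwa [this]
    have hord : analyticOrderNatAt f a = analyticOrderNatAt g a := by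
      have : f = P * g := by ext z; exact hfg z
      unfold analyticOrderNatAt
      rw [this, analyticOrderAt_mul (hP.analyticAt a) (hg.analyticAt a),
        ((hP.analyticAt a).analyticOrderAt_eq_zero).2 hPa, zero_add]
    obtain ⟨k, hk, hka, hgk⟩ := had_fac1 hg ⟨0, hg0⟩ ha0
    refine ⟨k, hk, ?_, ?_⟩
    · intro ρ hρ
      rcases Finset.mem_insert.1 hρ with rfl | h
      · exact hka
      · intro h'; apply hgs ρ h; rw [hgk, h', mul_zero]
    · intro z
      rw [Finset.prod_insert ha, hord, hfg z, hgk z]; ring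

lemma had_finite {f : ℂ → ℂ} (hf : Differentiable ℂ f) (h0 : f 0 = 1) (R : ℝ) :
    {z : ℂ | z ∈ Metric.closedBall (0:ℂ) R ∧ f z = 0}.Finite := by
  have h := AnalyticOnNhd.preimage_zero_mem_codiscrete (f := f) (x := 0)
    (fun z _ => hf.analyticAt z) (by simp [h0])
  have h1 := (mem_codiscrete'.mp h)
  have hd := h1.2
  have hc : IsClosed (f ⁻¹' {0}) := isClosed_singleton.preimage hf.continuous
  rw [Set.ofPred_and]
  apply ((isCompact_closedBall (0:ℂ) R).inter_right hc).finite
  rw [Set.preimage_compl, compl_compl] at hd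
  exact hd.mono Set.inter_subset_right

open Finset Real

open Metric in
lemma had_log {g : ℂ → ℂ} (hg : Differentiable ℂ g) (h0 : g 0 = 1) {R M : ℝ} (hR : 0 < R)
    (hM : 0 < M) (hne : ∀ z ∈ ball (0:ℂ) R, g z ≠ 0)
    (hb : ∀ z ∈ ball (0:ℂ) R, ‖g z‖ ≤ Real.exp M) {z w : ℂ} (hz : ‖z‖ ≤ R / 8) (hw : ‖w‖ ≤ R / 8) :
    ‖logDeriv g z - logDeriv g w‖ ≤ 64 * M / R ^ 2 * ‖z - w‖ := by
  have hdg : Differentiable ℂ (deriv g) := by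
    intro z; exact ((hg.analyticAt z).deriv).differentiableAt
  have hld : DifferentiableOn ℂ (logDeriv g) (ball 0 R) := by
    intro z hz
    exact ((hdg z).div (hg z) (hne z hz)).differentiableWithinAt
  obtain ⟨h, hh0, hh⟩ := (hld.isExactOn_ball).with_val_at 0 0
  have hhd : DifferentiableOn ℂ h (ball 0 R) := fun z hz => (hh z hz).differentiableAt.differentiableWithinAt
  have hconst : ∀ z ∈ ball (0:ℂ) R, g z = Complex.exp (h z) := by
    intro z hz
    have key : ∀ y ∈ ball (0:ℂ) R, HasDerivAt (fun y => Complex.exp (- h y) * g y) 0 y := by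
      intro y hy
      have h1 := (((hh y hy).neg).cexp).mul (hg y).hasDerivAt
      refine h1.congr_deriv ?_
      rw [logDeriv_apply]
      have := hne y hy
      field_simp
      simp
    have := IsOpen.is_const_of_deriv_eq_zero (isOpen_ball) ((convex_ball (0:ℂ) R).isPreconnected)
      (fun y hy => (key y hy).differentiableAt.differentiableWithinAt)
      (fun y hy => (key y hy).deriv) hz (mem_ball_self hR)
    simp only [hh0, h0, neg_zero, Complex.exp_zero, mul_one] at this
    calc g z = Complex.exp (h z) * (Complex.exp (-h z) * g z) := by
          rw [← mul_assoc, ← Complex.exp_add]; simp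
      _ = _ := by rw [this, mul_one]
  have hre : Set.MapsTo h (ball 0 R) {z | z.re ≤ M} := by
    intro y hy
    have := hb y hy
    rw [hconst y hy, Complex.norm_exp] at this
    exact Real.exp_le_exp.1 this
  have hb1 : ∀ y, ‖y‖ ≤ R / 2 → ‖h y‖ ≤ 2 * M := by
    intro y hy
    have hy' : y ∈ ball (0:ℂ) R := by rw [mem_ball_zero_iff]; linarith
    refine (Complex.borelCaratheodory_zero hM hhd hre hR hy' hh0).trans ?_
    rw [div_le_iff₀ (by linarith)]
    apply mul_le_mul_of_nonneg_left _ (by linarith); linarith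
  have hdiffball : ∀ (c : ℂ) (r : ℝ), ‖c‖ + r < R → closedBall c r ⊆ ball (0:ℂ) R := by
    intro c r hc y hy
    rw [mem_ball_zero_iff]
    rw [mem_closedBall, dist_eq_norm] at hy
    calc ‖y‖ = ‖c + (y - c)‖ := by ring_nf
      _ ≤ ‖c‖ + ‖y - c‖ := norm_add_le _ _
      _ < R := by linarith
  have hnorm : ∀ (c y : ℂ) (r : ℝ), y ∈ sphere c r → ‖y‖ ≤ ‖c‖ + r := by
    intro c y r hy
    rw [mem_sphere, dist_eq_norm] at hy
    calc ‖y‖ = ‖c + (y - c)‖ := by ring_nf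
      _ ≤ ‖c‖ + ‖y - c‖ := norm_add_le _ _
      _ = _ := by rw [hy]
  have hb2 : ∀ y, ‖y‖ ≤ R / 4 → ‖logDeriv g y‖ ≤ 8 * M / R := by
    intro y hy
    have hy' : y ∈ ball (0:ℂ) R := by rw [mem_ball_zero_iff]; linarith
    have := Complex.norm_deriv_le_of_forall_mem_sphere_norm_le (c := y) (R := R/4) (C := 2 * M) (f := h)
      (by linarith) ((hhd.mono (hdiffball y (R/4) (by linarith))).diffContOnCl_ball subset_rfl)
      (fun v hv => hb1 v (by have := hnorm y v _ hv; linarith))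
    rw [(hh y hy').deriv] at this
    calc _ ≤ _ := this
      _ = _ := by field_simp; ring
  have hb3 : ∀ y ∈ closedBall (0:ℂ) (R/8), ‖deriv (logDeriv g) y‖ ≤ 64 * M / R ^ 2 := by
    intro y hy
    rw [mem_closedBall_zero_iff] at hy
    have := Complex.norm_deriv_le_of_forall_mem_sphere_norm_le (c := y) (R := R/8) (C := 8 * M / R)
      (f := logDeriv g)
      (by linarith) ((hld.mono (hdiffball y (R/8) (by linarith))).diffContOnCl_ball subset_rfl)
      (fun v hv => hb2 v (by have := hnorm y v _ hv; linarith))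
    calc _ ≤ _ := this
      _ = _ := by field_simp; ring
  have := (convex_closedBall (0:ℂ) (R/8)).norm_image_sub_le_of_norm_deriv_le (f := logDeriv g)
    (C := 64 * M / R ^ 2) (x := w) (y := z) (fun y hy => ?_) hb3 (by simpa using hw) (by simpa using hz)
  · exact this
  · have hy' : y ∈ ball (0:ℂ) R := by rw [mem_ball_zero_iff]; rw [mem_closedBall_zero_iff] at hy; linarith
    exact (hld y hy').differentiableAt (isOpen_ball.mem_nhds hy')

/-- zeros in the closed ball -/
noncomputable def zerosIn (f : ℂ → ℂ) (R : ℝ) : Finset ℂ :=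
  open Classical in
  if h : {z : ℂ | z ∈ Metric.closedBall (0:ℂ) R ∧ f z = 0}.Finite then h.toFinset else ∅

lemma mem_zerosIn {f : ℂ → ℂ} (hf : Differentiable ℂ f) (h0 : f 0 = 1) {R : ℝ} {z : ℂ} :
    z ∈ zerosIn f R ↔ ‖z‖ ≤ R ∧ f z = 0 := by
  unfold zerosIn
  rw [dif_pos (had_finite hf h0 R), Set.Finite.mem_toFinset]
  simp

open Metric in
lemma had_est {f : ℂ → ℂ} (hf : Differentiable ℂ f) (h0 : f 0 = 1) {C : ℝ} (hC : 0 < C)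
    (hb : ∀ z, ‖f z‖ ≤ Real.exp (C * (1 + ‖z‖) ^ (3/2:ℝ))) {R : ℝ} (hR : 0 < R) {z w : ℂ}
    (hz : ‖z‖ ≤ R / 8) (hw : ‖w‖ ≤ R / 8) (hfz : f z ≠ 0) (hfw : f w ≠ 0) :
    ‖(logDeriv f z - logDeriv f w) - ∑ ρ ∈ zerosIn f R, (analyticOrderNatAt f ρ : ℂ) *
      (1 / (z - ρ) - 1 / (w - ρ))‖ ≤ 64 * (C * (1 + 4 * R) ^ (3/2:ℝ)) / R ^ 2 * ‖z - w‖ := by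
  have hs : ∀ ρ ∈ zerosIn f R, ρ ≠ 0 := by
    rintro ρ hρ rfl
    have := ((mem_zerosIn hf h0).1 hρ).2
    rw [h0] at this; exact one_ne_zero this
  obtain ⟨g, hg, hgs, hfg⟩ := had_facS hf h0 (zerosIn f R) hs
  have hg0 : g 0 = 1 := by
    have := hfg 0; simp [h0] at this; exact this.symm
  set M := C * (1 + 4 * R) ^ (3/2:ℝ) with hMdef
  have hM : 0 < M := by positivity
  have hne : ∀ z ∈ ball (0:ℂ) R, g z ≠ 0 := by
    intro z hz hgz
    have hfz : f z = 0 := by rw [hfg, hgz, mul_zero]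
    exact hgs z ((mem_zerosIn hf h0).2 ⟨by rw [mem_ball_zero_iff] at hz; exact hz.le, hfz⟩) hgz
  have hbd : ∀ z ∈ ball (0:ℂ) R, ‖g z‖ ≤ Real.exp M := by
    intro z hz
    refine Complex.norm_le_of_forall_mem_frontier_norm_le (U := ball (0:ℂ) (4*R)) isBounded_ball
      hg.diffContOnCl ?_ ?_
    · intro v hv
      rw [frontier_ball _ (by positivity), mem_sphere, dist_zero_right] at hv
      have h1 := hb v
      rw [hfg v, norm_mul, norm_prod, hv] at h1
      refine le_trans ?_ h1
      refine le_mul_of_one_le_left (norm_nonneg _) ?_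
      apply Finset.prod_induction _ (fun x : ℝ => 1 ≤ x)
      · intro a b ha hb; nlinarith
      · exact le_rfl
      · intro ρ hρ
        rw [norm_pow]
        apply one_le_pow₀
        have hρn := ((mem_zerosIn hf h0).1 hρ).1
        have hρ0 : 0 < ‖ρ‖ := norm_pos_iff.2 (hs ρ hρ)
        have h2 : 4 ≤ ‖v / ρ‖ := by
          rw [norm_div, hv, le_div_iff₀ hρ0]; linarith
        have h3 : ‖v / ρ‖ ≤ ‖(1:ℂ)‖ + ‖1 - v / ρ‖ := by
          have := norm_sub_le (1:ℂ) (1 - v/ρ)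
          simpa using this
        rw [norm_one] at h3; linarith
    · apply subset_closure; rw [mem_ball_zero_iff] at *; linarith
  have hlog := had_log hg hg0 hR hM hne hbd hz hw
  have hld : ∀ z, f z ≠ 0 → logDeriv f z = ∑ ρ ∈ zerosIn f R, (analyticOrderNatAt f ρ : ℂ) * (1 / (z - ρ)) + logDeriv g z := by
    intro z hfz
    have hfe : f = fun z => (∏ ρ ∈ zerosIn f R, (1 - z / ρ) ^ (analyticOrderNatAt f ρ)) * g z := by
      ext z; exact hfg z
    have hP : (∏ ρ ∈ zerosIn f R, (1 - z / ρ) ^ (analyticOrderNatAt f ρ)) ≠ 0 := by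
      intro h; apply hfz; rw [hfg z, h, zero_mul]
    have hgz : g z ≠ 0 := by intro h; apply hfz; rw [hfg z, h, mul_zero]
    have hPd : Differentiable ℂ (fun z => ∏ ρ ∈ zerosIn f R, (1 - z / ρ) ^ (analyticOrderNatAt f ρ)) := by
      apply Differentiable.fun_finsetProd; intro i hi; fun_prop
    have e1 : logDeriv f z = logDeriv (fun z => (∏ ρ ∈ zerosIn f R, (1 - z / ρ) ^ (analyticOrderNatAt f ρ)) * g z) z :=
      congrArg (fun k => logDeriv k z) hfe
    rw [e1, logDeriv_mul z hP hgz (hPd z) (hg z)]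
    congr 1
    rw [logDeriv_prod (f := fun ρ z => (1 - z / ρ) ^ (analyticOrderNatAt f ρ))
      (fun i hi => (Finset.prod_ne_zero_iff.1 hP) i hi) (fun i hi => by fun_prop)]
    apply Finset.sum_congr rfl
    intro ρ hρ
    rw [logDeriv_fun_pow (by fun_prop)]
    congr 1
    have hρ0 := hs ρ hρ
    have hzρ : z - ρ ≠ 0 := by
      intro h
      apply hfz; rw [sub_eq_zero.1 h]; exact ((mem_zerosIn hf h0).1 hρ).2
    have h1 : 1 - z / ρ ≠ 0 := by
      intro h; apply hzρ; field_simp at h; rw [mul_zero] at h; linear_combination -h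
    have hd : HasDerivAt (fun z : ℂ => 1 - z / ρ) (-(1/ρ)) z := by
      simpa using ((hasDerivAt_id z).div_const ρ).const_sub 1
    rw [logDeriv_apply, hd.deriv]
    have h2 : ρ - z ≠ 0 := by intro h; apply hzρ; linear_combination -h
    field_simp
    ring
  rw [hld z hfz, hld w hfw]
  refine le_trans (le_of_eq ?_) hlog
  congr 1
  simp only [mul_sub, Finset.sum_sub_distrib]
  ring

open Filter Topology in
lemma had_main {f : ℂ → ℂ} (hf : Differentiable ℂ f) (h0 : f 0 = 1) {C : ℝ} (hC : 0 < C)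
    (hb : ∀ z, ‖f z‖ ≤ Real.exp (C * (1 + ‖z‖) ^ (3/2:ℝ))) {z w : ℂ}
    (hfz : f z ≠ 0) (hfw : f w ≠ 0) :
    Tendsto (fun N : ℕ => ∑ ρ ∈ zerosIn f N, (analyticOrderNatAt f ρ : ℂ) *
      (1 / (z - ρ) - 1 / (w - ρ))) atTop (𝓝 (logDeriv f z - logDeriv f w)) := by
  rw [tendsto_iff_norm_sub_tendsto_zero]
  have hlim : Tendsto (fun N : ℕ => 64 * C * (5:ℝ) ^ (3/2:ℝ) * ‖z - w‖ * (N:ℝ) ^ (-(1/2):ℝ)) atTop (𝓝 0) := by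
    have := ((tendsto_rpow_neg_atTop (show (0:ℝ) < 1/2 by norm_num)).comp tendsto_natCast_atTop_atTop).const_mul
      (64 * C * (5:ℝ) ^ (3/2:ℝ) * ‖z - w‖)
    simpa using this
  refine squeeze_zero' (Eventually.of_forall fun _ => norm_nonneg _) ?_ hlim
  have e1 : ∀ᶠ N : ℕ in atTop, 8 * ‖z‖ ≤ (N:ℝ) := tendsto_natCast_atTop_atTop.eventually_ge_atTop _
  have e2 : ∀ᶠ N : ℕ in atTop, 8 * ‖w‖ ≤ (N:ℝ) := tendsto_natCast_atTop_atTop.eventually_ge_atTop _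
  filter_upwards [e1, e2, eventually_ge_atTop 1] with N h1 h2 h3
  have hN : (1:ℝ) ≤ N := by exact_mod_cast h3
  have hN0 : (0:ℝ) < N := by linarith
  rw [norm_sub_rev]
  refine (had_est hf h0 hC hb hN0 (by linarith) (by linarith) hfz hfw).trans ?_
  have h4 : (1 + 4 * (N:ℝ)) ^ (3/2:ℝ) ≤ (5:ℝ) ^ (3/2:ℝ) * (N:ℝ) ^ (3/2:ℝ) := by
    rw [← Real.mul_rpow (by norm_num) hN0.le]
    exact Real.rpow_le_rpow (by positivity) (by linarith) (by norm_num)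
  have h5 : (N:ℝ) ^ (3/2:ℝ) / (N:ℝ) ^ 2 = (N:ℝ) ^ (-(1/2):ℝ) := by
    rw [← Real.rpow_natCast, ← Real.rpow_sub hN0]; norm_num
  calc _ ≤ 64 * (C * ((5:ℝ) ^ (3/2:ℝ) * (N:ℝ) ^ (3/2:ℝ))) / (N:ℝ) ^ 2 * ‖z - w‖ := by gcongr
    _ = 64 * C * (5:ℝ) ^ (3/2:ℝ) * ‖z - w‖ * ((N:ℝ) ^ (3/2:ℝ) / (N:ℝ) ^ 2) := by ring
    _ = _ := by rw [h5]

open Finset Real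

lemma L0_strip (a b : ℝ) : ∃ K : ℝ, 0 ≤ K ∧ ∀ s : ℂ, a ≤ s.re → s.re ≤ b → ‖completedRiemannZeta₀ s‖ ≤ K := by
  set P := HurwitzZeta.hurwitzEvenFEPair 0
  have hconv : ∀ s : ℂ, MellinConvergent P.f_modif s := fun s =>
    (P.isStrongFEPair_toStrongFEPair.hasMellin s).1
  have hint : ∀ c : ℝ, MeasureTheory.IntegrableOn (fun t : ℝ => t ^ (c - 1) * ‖P.f_modif t‖) (Set.Ioi 0) := by
    intro c
    have := (hconv (c:ℂ)).norm
    refine MeasureTheory.IntegrableOn.congr_fun this ?_ measurableSet_Ioi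
    intro t ht
    simp only [norm_smul]
    rw [Complex.norm_cpow_eq_rpow_re_of_pos ht]
    simp
  refine ⟨∫ t in Set.Ioi (0:ℝ), (t ^ (a/2 - 1) * ‖P.f_modif t‖ + t ^ (b/2 - 1) * ‖P.f_modif t‖), ?_, ?_⟩
  · apply MeasureTheory.setIntegral_nonneg measurableSet_Ioi
    intro t ht
    have ht' : (0:ℝ) < t := ht
    positivity
  · intro s has hsb
    have e : completedRiemannZeta₀ s = mellin P.f_modif (s / 2) / 2 := rfl
    rw [e, norm_div]
    have h1 : ‖mellin P.f_modif (s / 2)‖ ≤ ∫ t in Set.Ioi (0:ℝ), (t ^ (a/2 - 1) * ‖P.f_modif t‖ + t ^ (b/2 - 1) * ‖P.f_modif t‖) := by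
      unfold mellin
      refine MeasureTheory.norm_integral_le_of_norm_le ((hint (a/2)).add (hint (b/2))) ?_
      refine (MeasureTheory.ae_restrict_iff' measurableSet_Ioi).2 (Filter.Eventually.of_forall ?_)
      intro t ht
      have ht' : (0:ℝ) < t := ht
      rw [norm_smul, Complex.norm_cpow_eq_rpow_re_of_pos ht', ← add_mul]
      apply mul_le_mul_of_nonneg_right _ (norm_nonneg _)
      have hre : (s / 2 - 1).re = s.re / 2 - 1 := by simp
      rw [hre]
      rcases le_total t 1 with h | h
      · have := Real.rpow_le_rpow_of_exponent_ge ht' h (show a/2 - 1 ≤ s.re/2 - 1 by linarith)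
        have := Real.rpow_nonneg ht'.le (b/2-1)
        linarith
      · have := Real.rpow_le_rpow_of_exponent_le h (show s.re/2 - 1 ≤ b/2 - 1 by linarith)
        have := Real.rpow_nonneg ht'.le (a/2-1)
        linarith
    have h2 : ‖(2:ℂ)‖ = 2 := by simp
    rw [h2]
    have := norm_nonneg (mellin P.f_modif (s / 2))
    linarith

/-- the Riemann xi function, normalised to be 1 at 0 -/
noncomputable def xi (s : ℂ) : ℂ := s * (s - 1) * completedRiemannZeta₀ s + 1

lemma xi_diff : Differentiable ℂ xi := by
  unfold xi
  have := differentiable_completedZeta₀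
  fun_prop

lemma xi_zero : xi 0 = 1 := by simp [xi]
lemma xi_one : xi 1 = 1 := by simp [xi]
lemma xi_one_sub (s : ℂ) : xi (1 - s) = xi s := by
  unfold xi; rw [completedRiemannZeta₀_one_sub]; ring

lemma xi_eq_completed {s : ℂ} (h0 : s ≠ 0) (h1 : s ≠ 1) : xi s = s * (s - 1) * completedRiemannZeta s := by
  rw [completedRiemannZeta_eq]; unfold xi
  have : 1 - s ≠ 0 := by intro h; apply h1; linear_combination -h
  field_simp
  ring

lemma xi_eq {s : ℂ} (h0 : s ≠ 0) (h1 : s ≠ 1) (hG : s.Gammaℝ ≠ 0) : xi s = s * (s - 1) * (s.Gammaℝ * riemannZeta s) := by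
  rw [xi_eq_completed h0 h1, riemannZeta_def_of_ne_zero h0]
  field_simp

lemma xi_ne_zero_of_one_le {s : ℂ} (hs : 1 ≤ s.re) : xi s ≠ 0 := by
  by_cases h1 : s = 1
  · rw [h1, xi_one]; exact one_ne_zero
  have h0 : s ≠ 0 := by rintro rfl; simp at hs; linarith
  have hG : s.Gammaℝ ≠ 0 := Complex.Gammaℝ_ne_zero_of_re_pos (by linarith)
  rw [xi_eq h0 h1 hG]
  exact mul_ne_zero (mul_ne_zero h0 (sub_ne_zero.2 h1)) (mul_ne_zero hG (riemannZeta_ne_zero_of_one_le_re hs))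

lemma xi_zero_strip {s : ℂ} (hs : xi s = 0) : 0 < s.re ∧ s.re < 1 := by
  constructor
  · by_contra h
    refine xi_ne_zero_of_one_le (s := 1 - s) ?_ (by rw [xi_one_sub, hs])
    simp; linarith
  · by_contra h
    exact xi_ne_zero_of_one_le (by linarith) hs

lemma zeta_bd : ∃ Z : ℝ, 0 ≤ Z ∧ ∀ s : ℂ, 2 ≤ s.re → ‖riemannZeta s‖ ≤ Z := by
  have hsum : Summable (fun n : ℕ => 1 / ((n:ℝ)) ^ (2:ℕ)) := Real.summable_one_div_nat_pow.2 (by norm_num)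
  refine ⟨∑' n : ℕ, 1 / ((n:ℝ)) ^ (2:ℕ), tsum_nonneg (fun n => by positivity), ?_⟩
  intro s hs
  rw [zeta_eq_tsum_one_div_nat_cpow (by linarith)]
  refine tsum_of_norm_bounded hsum.hasSum ?_
  intro n
  rcases Nat.eq_zero_or_pos n with rfl | hn
  · have : s ≠ 0 := by rintro rfl; simp at hs; linarith
    simp [this]
  · rw [norm_div, norm_one, Complex.norm_natCast_cpow_of_pos hn]
    apply one_div_le_one_div_of_le (by positivity)
    rw [← Real.rpow_natCast]
    exact Real.rpow_le_rpow_of_exponent_le (by exact_mod_cast hn) (by exact_mod_cast hs)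

lemma Gamma_norm_le {s : ℂ} (hs : 0 < s.re) : ‖Complex.Gamma s‖ ≤ Real.Gamma s.re := by
  rw [Complex.Gamma_eq_integral hs, Real.Gamma_eq_integral hs, Complex.GammaIntegral]
  refine MeasureTheory.norm_integral_le_of_norm_le (Real.GammaIntegral_convergent hs) ?_
  refine (MeasureTheory.ae_restrict_iff' measurableSet_Ioi).2 (Filter.Eventually.of_forall ?_)
  intro t ht
  rw [norm_mul, Complex.norm_cpow_eq_rpow_re_of_pos ht]
  simp [Complex.norm_exp]

lemma Gamma_growth {x : ℝ} (hx : 2 ≤ x) : Real.Gamma x ≤ Real.exp (2 * (1 + x) ^ (3/2:ℝ)) := by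
  set n := ⌊x⌋₊
  have hn : x ≤ (n:ℝ) + 1 := (Nat.lt_floor_add_one x).le
  have hn2 : (n:ℝ) ≤ x := Nat.floor_le (by linarith)
  have h1 : Real.Gamma x ≤ Real.Gamma (n + 1) :=
    Real.Gamma_strictMonoOn_Ici.monotoneOn hx (by simp; linarith) hn
  rw [Real.Gamma_nat_eq_factorial] at h1
  have h2 : (n.factorial : ℝ) ≤ (n:ℝ) ^ n := by exact_mod_cast Nat.factorial_le_pow n
  have hn0 : 2 ≤ n := Nat.le_floor (by exact_mod_cast hx)
  have hn0' : (2:ℝ) ≤ n := by exact_mod_cast hn0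
  have h3 : (n:ℝ) ^ n = Real.exp (n * Real.log n) := by
    rw [← Real.rpow_natCast, Real.rpow_def_of_pos (by linarith)]; ring_nf
  refine h1.trans (h2.trans ?_)
  rw [h3]
  apply Real.exp_le_exp.2
  have h4 : Real.log n ≤ (n:ℝ) ^ (1/2:ℝ) / (1/2) := Real.log_le_rpow_div (by linarith) (by norm_num)
  have h5 : (1 + x) ^ (3/2:ℝ) = (1+x) * (1+x) ^ (1/2:ℝ) := by
    rw [show (3/2:ℝ) = 1 + 1/2 by norm_num, Real.rpow_add (by linarith), Real.rpow_one]
  have h6 : (n:ℝ) ^ (1/2:ℝ) ≤ (1+x) ^ (1/2:ℝ) := Real.rpow_le_rpow (by linarith) (by linarith) (by norm_num)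
  rw [h5]
  have h7 : 0 ≤ (n:ℝ) ^ (1/2:ℝ) := by positivity
  calc (n:ℝ) * Real.log n ≤ n * ((n:ℝ) ^ (1/2:ℝ) / (1/2)) := by gcongr
    _ = 2 * (n * (n:ℝ) ^ (1/2:ℝ)) := by ring
    _ ≤ 2 * ((1+x) * (1+x) ^ (1/2:ℝ)) := by gcongr; linarith

lemma xi_growth_aux : ∃ A : ℝ, 0 ≤ A ∧ ∀ s : ℂ, 1/2 ≤ s.re → ‖xi s‖ ≤ A * (1 + ‖s‖) ^ 2 * Real.exp (2 * (1 + ‖s‖) ^ (3/2:ℝ)) := by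
  obtain ⟨K, hK0, hK⟩ := L0_strip (-4) 5
  obtain ⟨Z, hZ0, hZ⟩ := zeta_bd
  refine ⟨K + Z + 1, by positivity, ?_⟩
  intro s hs
  have hss : ‖s - 1‖ ≤ 1 + ‖s‖ := by have := norm_sub_le s 1; rw [norm_one] at this; linarith
  have hn := norm_nonneg s
  have hexp1 : 1 ≤ Real.exp (2 * (1 + ‖s‖) ^ (3/2:ℝ)) := Real.one_le_exp (by positivity)
  set E := Real.exp (2 * (1 + ‖s‖) ^ (3/2:ℝ))
  have hprod : ‖s‖ * ‖s - 1‖ ≤ (1 + ‖s‖) ^ 2 := by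
    rw [sq]; exact mul_le_mul (by linarith) hss (norm_nonneg _) (by linarith)
  rcases le_total s.re 5 with h5 | h5
  · have h1 := hK s (by linarith) h5
    calc ‖xi s‖ ≤ ‖s‖ * ‖s - 1‖ * ‖completedRiemannZeta₀ s‖ + 1 := by
          unfold xi; refine (norm_add_le _ _).trans ?_; simp
      _ ≤ (1 + ‖s‖) ^ 2 * K + 1 := by gcongr
      _ ≤ (1 + ‖s‖) ^ 2 * (K + Z + 1) := by nlinarith
      _ ≤ (K + Z + 1) * (1 + ‖s‖) ^ 2 * E := by
          rw [mul_comm]; exact le_mul_of_one_le_right (by positivity) hexp1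
  · have h0 : s ≠ 0 := by rintro rfl; norm_num at h5
    have h1 : s ≠ 1 := by rintro rfl; norm_num at h5
    rw [xi_eq h0 h1 (Complex.Gammaℝ_ne_zero_of_re_pos (by linarith))]
    rw [norm_mul, norm_mul, norm_mul]
    have hG : ‖s.Gammaℝ‖ ≤ E := by
      rw [Complex.Gammaℝ_def, norm_mul, Complex.norm_cpow_eq_rpow_re_of_pos Real.pi_pos]
      have e1 : (-s/2).re = -(s.re/2) := by simp; ring
      have e2 : (s/2).re = s.re/2 := by simp
      have g1 : Real.pi ^ (-s/2).re ≤ 1 := by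
        rw [e1]; exact Real.rpow_le_one_of_one_le_of_nonpos (by linarith [Real.pi_gt_three]) (by linarith)
      have g2 : ‖Complex.Gamma (s/2)‖ ≤ E := by
        refine (Gamma_norm_le (by rw [e2]; linarith)).trans ?_
        rw [e2]
        refine (Gamma_growth (by linarith)).trans ?_
        apply Real.exp_le_exp.2
        have := Complex.re_le_norm s
        gcongr; linarith
      calc _ ≤ 1 * E := by gcongr
        _ = E := one_mul _
    have hz := hZ s (by linarith)
    calc _ ≤ (1 + ‖s‖) ^ 2 * (E * Z) := by gcongr
      _ ≤ (K + Z + 1) * (1 + ‖s‖) ^ 2 * E := by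
        have : 0 ≤ (1 + ‖s‖) ^ 2 * E := by positivity
        nlinarith

lemma xi_growth : ∃ C : ℝ, 0 < C ∧ ∀ s, ‖xi s‖ ≤ Real.exp (C * (1 + ‖s‖) ^ (3/2:ℝ)) := by
  obtain ⟨A, hA0, hA⟩ := xi_growth_aux
  have key : ∀ Y : ℝ, 1 ≤ Y → A * Y ^ 2 * Real.exp (2 * Y ^ (3/2:ℝ)) ≤ Real.exp ((A + 4) * Y ^ (3/2:ℝ)) := by
    intro Y hY
    have hY1 : Y ≤ Y ^ (3/2:ℝ) := by
      have := Real.rpow_le_rpow_of_exponent_le hY (show (1:ℝ) ≤ 3/2 by norm_num)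
      rwa [Real.rpow_one] at this
    have h1 : A ≤ Real.exp (A * Y ^ (3/2:ℝ)) := by
      have := Real.add_one_le_exp (A * Y ^ (3/2:ℝ))
      nlinarith
    have h2 : Y ^ 2 ≤ Real.exp (2 * Y ^ (3/2:ℝ)) := by
      have h3 : Y ≤ Real.exp (Y ^ (3/2:ℝ)) := by
        have := Real.add_one_le_exp (Y ^ (3/2:ℝ)); linarith
      calc Y ^ 2 ≤ (Real.exp (Y ^ (3/2:ℝ))) ^ 2 := by gcongr
        _ = _ := by rw [← Real.exp_nat_mul]; norm_num
    calc _ ≤ Real.exp (A * Y ^ (3/2:ℝ)) * Real.exp (2 * Y ^ (3/2:ℝ)) * Real.exp (2 * Y ^ (3/2:ℝ)) := by gcongr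
      _ = _ := by rw [← Real.exp_add, ← Real.exp_add]; ring_nf
  have key2 : ∀ s : ℂ, 1/2 ≤ s.re → ‖xi s‖ ≤ Real.exp ((A + 4) * (1 + ‖s‖) ^ (3/2:ℝ)) := fun s hs =>
    (hA s hs).trans (key _ (by linarith [norm_nonneg s]))
  refine ⟨(A + 4) * 2 ^ (3/2:ℝ), by positivity, ?_⟩
  have key3 : ∀ s w : ℂ, 1/2 ≤ w.re → ‖w‖ ≤ 1 + ‖s‖ → ‖xi w‖ ≤ Real.exp ((A + 4) * 2 ^ (3/2:ℝ) * (1 + ‖s‖) ^ (3/2:ℝ)) := by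
    intro s w hw hsw
    refine (key2 w hw).trans (Real.exp_le_exp.2 ?_)
    rw [mul_assoc, ← Real.mul_rpow (by norm_num) (by positivity)]
    have := norm_nonneg s
    gcongr
    linarith
  intro s
  rcases le_total (1/2) s.re with h | h
  · exact key3 s s h (by linarith)
  · rw [← xi_one_sub]
    refine key3 s (1 - s) (by simp; linarith) ?_
    have := norm_sub_le 1 s
    rwa [norm_one] at this

open Finset Real

/-- xi'(1) -/
noncomputable def B0 : ℝ := (Real.eulerMascheroniConstant - Real.log (4 * Real.pi)) / 2 + 1

lemma euler_le (n : ℕ) : Real.eulerMascheroniConstant ≤ (harmonic n : ℝ) - Real.log (n + 1/2) := by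
  have hanti : Antitone (fun n : ℕ => (harmonic n : ℝ) - Real.log (n + 1/2)) := by
    apply antitone_nat_of_succ_le
    intro n
    rw [harmonic_succ]
    push_cast
    have h := Real.le_log_one_add_of_nonneg (x := 1 / ((n:ℝ) + 1/2)) (by positivity)
    have e : 2 * (1 / ((n:ℝ) + 1/2)) / (1 / ((n:ℝ) + 1/2) + 2) = ((n:ℝ) + 1)⁻¹ := by
      field_simp; ring
    have e2 : 1 + 1 / ((n:ℝ) + 1/2) = ((n:ℝ) + 1 + 1/2) / (n + 1/2) := by field_simp; ring
    rw [e, e2, Real.log_div (by positivity) (by positivity)] at h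
    linarith
  refine hanti.le_of_tendsto ?_ n
  have h1 := Real.tendsto_harmonic_sub_log
  have h2 : Filter.Tendsto (fun n : ℕ => Real.log (n + 1/2) - Real.log n) Filter.atTop (nhds 0) := by
    have h3 : Filter.Tendsto (fun n : ℕ => Real.log (1 + (1/2) / (n:ℝ))) Filter.atTop (nhds (Real.log (1 + 0))) := by
      apply Filter.Tendsto.log _ (by norm_num)
      apply Filter.Tendsto.const_add
      exact tendsto_const_div_atTop_nhds_zero_nat (1/2)
    rw [add_zero, Real.log_one] at h3
    refine h3.congr' ?_
    filter_upwards [Filter.eventually_ge_atTop 1] with n hn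
    have : (0:ℝ) < n := by exact_mod_cast hn
    rw [← Real.log_div (by positivity) (by positivity)]
    congr 1; field_simp
  have := h1.sub h2
  simp only [sub_zero] at this
  refine this.congr (fun n => by ring)

lemma B0_le : 2 * B0 ≤ 0.04624 := by
  have h := euler_le 40
  have hH : (harmonic 40 : ℝ) ≤ 4.278544 := by
    have : harmonic 40 ≤ (4.278544 : ℚ) := by
      simp only [harmonic, Finset.sum_range_succ, Finset.sum_range_zero]; norm_num
    have h2 : ((harmonic 40 : ℚ) : ℝ) ≤ ((4.278544 : ℚ) : ℝ) := by exact_mod_cast this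
    refine h2.trans (by norm_num)
  have hlog : (6.2323075 : ℝ) ≤ Real.log (4 * Real.pi) + Real.log ((40:ℕ) + 1/2) := by
    rw [← Real.log_mul (by positivity) (by positivity)]
    have h1 : (512:ℝ) * 0.994019 ≤ 4 * Real.pi * ((40:ℕ) + 1/2) := by
      have := Real.pi_gt_d6; push_cast; nlinarith
    refine le_trans ?_ (Real.log_le_log (by norm_num) h1)
    rw [Real.log_mul (by norm_num) (by norm_num), show (512:ℝ) = 2 ^ 9 by norm_num, Real.log_pow]
    have h2 := Real.log_two_gt_d9
    have h3 := Real.one_sub_inv_le_log_of_pos (show (0:ℝ) < 0.994019 by norm_num)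
    norm_num at h3 ⊢
    linarith
  unfold B0
  linarith

open Finset Real

/-- multiplicity of a zero of xi -/
noncomputable def mult (ρ : ℂ) : ℝ := (analyticOrderNatAt xi ρ : ℝ)
/-- weight of a zero -/
noncomputable def wt (ρ : ℂ) : ℝ := mult ρ / (1 + ρ.im ^ 2)

lemma mult_nonneg (ρ : ℂ) : 0 ≤ mult ρ := Nat.cast_nonneg _
lemma mult_eq_zero {ρ : ℂ} (h : xi ρ ≠ 0) : mult ρ = 0 := by
  unfold mult
  have := ((xi_diff.analyticAt ρ).analyticOrderAt_eq_zero).2 h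
  simp [analyticOrderNatAt, this]

lemma xi_order_ne_top (ρ : ℂ) : analyticOrderAt xi ρ ≠ ⊤ := by
  intro h
  rw [AnalyticOnNhd.analyticOrderAt_eq_top_iff_eq_zero ρ (fun z => xi_diff.analyticAt z)] at h
  have := xi_zero
  rw [h] at this; simp at this

lemma one_le_mult {ρ : ℂ} (h : xi ρ = 0) : 1 ≤ mult ρ := by
  have h1 := ((xi_diff.analyticAt ρ).analyticOrderAt_ne_zero).2 h
  have h2 : analyticOrderNatAt xi ρ ≠ 0 := by
    intro h3
    rw [← Nat.cast_analyticOrderNatAt (xi_order_ne_top ρ), h3] at h1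
    simp at h1
  unfold mult
  exact_mod_cast Nat.one_le_iff_ne_zero.2 h2

lemma wt_nonneg (ρ : ℂ) : 0 ≤ wt ρ := div_nonneg (mult_nonneg ρ) (by positivity)
lemma wt_eq_zero {ρ : ℂ} (h : xi ρ ≠ 0) : wt ρ = 0 := by simp [wt, mult_eq_zero h]

lemma mem_zx {N : ℝ} {z : ℂ} : z ∈ zerosIn xi N ↔ ‖z‖ ≤ N ∧ xi z = 0 := mem_zerosIn xi_diff xi_zero

lemma mult_one_sub (ρ : ℂ) : mult (1 - ρ) = mult ρ := by
  unfold mult analyticOrderNatAt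
  have hc : (xi ∘ (fun z => 1 - z)) = xi := by ext z; exact xi_one_sub z
  have hd : HasDerivAt (fun z : ℂ => 1 - z) (-1) ρ := by
    simpa using (hasDerivAt_id ρ).const_sub 1
  have := analyticOrderAt_comp_of_deriv_ne_zero (f := xi) (g := fun z => 1 - z) (z₀ := ρ)
    (by fun_prop) (by rw [hd.deriv]; simp)
  rw [hc] at this
  rw [this]

open Filter Topology in
lemma xi_main {z w : ℂ} (hz : xi z ≠ 0) (hw : xi w ≠ 0) :
    Tendsto (fun N : ℕ => ∑ ρ ∈ zerosIn xi N, (mult ρ : ℂ) *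
      (1 / (z - ρ) - 1 / (w - ρ))) atTop (𝓝 (logDeriv xi z - logDeriv xi w)) := by
  obtain ⟨C, hC, hb⟩ := xi_growth
  have := had_main xi_diff xi_zero hC hb hz hw
  simpa [mult] using this

lemma xi_deriv_one : logDeriv xi 1 = B0 := by
  have hd : HasDerivAt xi (completedRiemannZeta₀ 1) 1 := by
    have h1 : HasDerivAt (fun s : ℂ => s * (s - 1)) (1 * (1 - 1) + 1 * 1) 1 :=
      (hasDerivAt_id (1:ℂ)).mul ((hasDerivAt_id (1:ℂ)).sub_const 1)
    have h2 := (h1.mul (differentiable_completedZeta₀ 1).hasDerivAt).add_const 1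
    refine h2.congr_deriv ?_
    simp
  rw [logDeriv_apply, hd.deriv, xi_one, completedRiemannZeta₀_one, div_one]
  unfold B0
  push_cast
  rw [Complex.ofReal_log (by positivity)]
  push_cast; rfl

lemma xi_logDeriv_one_sub (s : ℂ) : logDeriv xi (1 - s) = - logDeriv xi s := by
  have hd : HasDerivAt (fun z : ℂ => 1 - z) (-1) s := by
    simpa using (hasDerivAt_id s).const_sub 1
  have h1 : HasDerivAt xi (deriv xi (1 - s) * (-1)) s := by
    have := HasDerivAt.comp s (xi_diff (1 - s)).hasDerivAt hd
    have hc : (xi ∘ (fun z => 1 - z)) = xi := by ext z; exact xi_one_sub z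
    rwa [hc] at this
  rw [logDeriv_apply, logDeriv_apply, h1.deriv, xi_one_sub]; ring

lemma re_inv_sub (s ρ : ℂ) : (1 / (s - ρ)).re = (s.re - ρ.re) / ((s.re - ρ.re) ^ 2 + (s.im - ρ.im) ^ 2) := by
  rw [one_div, Complex.inv_re, Complex.normSq_apply]; simp [sq]

open Filter Topology in
lemma wt_summable_le : Summable wt ∧ ∑' ρ, wt ρ ≤ 2 * B0 := by
  have hlim := xi_main (z := 1) (w := 0) (by rw [xi_one]; simp) (by rw [xi_zero]; simp)
  have h10 : logDeriv xi 0 = - B0 := by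
    have := xi_logDeriv_one_sub 1; rw [sub_self, xi_deriv_one] at this; exact this
  rw [h10, xi_deriv_one] at hlim
  have hre := (Complex.continuous_re.tendsto _).comp hlim
  have hB : ((B0:ℂ) - -(B0:ℂ)).re = 2 * B0 := by simp; ring
  rw [hB] at hre
  have hle : ∀ N : ℕ, ∑ ρ ∈ zerosIn xi N, wt ρ ≤ (∑ ρ ∈ zerosIn xi N, (mult ρ : ℂ) *
      (1 / (1 - ρ) - 1 / (0 - ρ))).re := by
    intro N
    rw [Complex.re_sum]
    apply Finset.sum_le_sum
    intro ρ hρ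
    obtain ⟨h1, h2⟩ := xi_zero_strip (mem_zx.1 hρ).2
    rw [Complex.re_ofReal_mul]
    unfold wt
    rw [div_eq_mul_one_div]
    apply mul_le_mul_of_nonneg_left _ (mult_nonneg ρ)
    rw [Complex.sub_re, re_inv_sub, re_inv_sub]
    simp only [Complex.one_re, Complex.zero_re, Complex.one_im, Complex.zero_im]
    have e1 : (1 - ρ.re) / (1 + ρ.im ^ 2) ≤ (1 - ρ.re) / ((1 - ρ.re) ^ 2 + (0 - ρ.im) ^ 2) := by
      apply div_le_div_of_nonneg_left (by linarith)
      · nlinarith [sq_nonneg ρ.im]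
      · nlinarith
    have e2 : ρ.re / (1 + ρ.im ^ 2) ≤ ρ.re / ((0 - ρ.re) ^ 2 + (0 - ρ.im) ^ 2) := by
      apply div_le_div_of_nonneg_left (by linarith)
      · nlinarith [sq_nonneg ρ.im]
      · nlinarith
    have e3 : (0 - ρ.re) / ((0 - ρ.re) ^ 2 + (0 - ρ.im) ^ 2) = - (ρ.re / ((0 - ρ.re) ^ 2 + (0 - ρ.im) ^ 2)) := by
      rw [zero_sub, neg_div]
    have e4 : 1 / (1 + ρ.im ^ 2) = (1 - ρ.re) / (1 + ρ.im ^ 2) + ρ.re / (1 + ρ.im ^ 2) := by ring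
    rw [e3, e4]; linarith
  have hmono : Monotone (fun N : ℕ => ∑ ρ ∈ zerosIn xi N, wt ρ) := by
    intro a b hab
    apply Finset.sum_le_sum_of_subset_of_nonneg
    · intro z hz; rw [mem_zx] at hz ⊢
      exact ⟨hz.1.trans (by exact_mod_cast hab), hz.2⟩
    · intro i _ _; exact wt_nonneg i
  have hbd : ∀ N : ℕ, ∑ ρ ∈ zerosIn xi N, wt ρ ≤ 2 * B0 := by
    intro N
    refine ge_of_tendsto hre ?_
    filter_upwards [eventually_ge_atTop N] with M hM
    exact (hmono hM).trans (hle M)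
  have hbd2 : ∀ u : Finset ℂ, ∑ ρ ∈ u, wt ρ ≤ 2 * B0 := by
    intro u
    obtain ⟨N, hN⟩ : ∃ N : ℕ, ∀ z ∈ u, ‖z‖ ≤ N := by
      obtain ⟨N, hN⟩ := exists_nat_ge (∑ z ∈ u, ‖z‖)
      exact ⟨N, fun z hz => (Finset.single_le_sum (f := fun z : ℂ => ‖z‖) (fun i _ => norm_nonneg i) hz).trans hN⟩
    classical
    refine le_trans ?_ (hbd N)
    rw [← Finset.sum_filter_add_sum_filter_not u (fun z => xi z = 0)]
    have h0 : ∑ x ∈ u with ¬xi x = 0, wt x = 0 :=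
      Finset.sum_eq_zero (fun i hi => wt_eq_zero (Finset.mem_filter.1 hi).2)
    rw [h0, add_zero]
    apply Finset.sum_le_sum_of_subset_of_nonneg
    · intro z hz
      rw [Finset.mem_filter] at hz
      rw [mem_zx]; exact ⟨hN z hz.1, hz.2⟩
    · intro i _ _; exact wt_nonneg i
  have hs : Summable wt := summable_of_sum_le wt_nonneg hbd2
  exact ⟨hs, hs.tsum_le_of_sum_le hbd2⟩

lemma zero_im_sq {ρ : ℂ} (h : xi ρ = 0) : 20 ≤ ρ.im ^ 2 := by
  have h1 : wt ρ ≤ 2 * B0 := (wt_summable_le.1.le_tsum ρ (fun j _ => wt_nonneg j)).trans wt_summable_le.2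
  have h2 := B0_le
  have h3 := one_le_mult h
  unfold wt at h1
  rw [div_le_iff₀ (by positivity)] at h1
  by_contra hc
  push Not at hc
  nlinarith

lemma zero_norm_sq {ρ : ℂ} (h : xi ρ = 0) : (20/21) * (1 + ρ.im ^ 2) ≤ ‖ρ‖ ^ 2 := by
  have := zero_im_sq h
  rw [Complex.sq_norm, Complex.normSq_apply]; nlinarith [sq_nonneg ρ.re]

open Filter Topology in
lemma tendsto_zx {F : ℂ → ℂ} (hF : Summable F) (h0 : ∀ ρ, xi ρ ≠ 0 → F ρ = 0) :
    Tendsto (fun N : ℕ => ∑ ρ ∈ zerosIn xi N, F ρ) atTop (𝓝 (∑' ρ, F ρ)) := by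
  classical
  have h1 : ∀ N : ℕ, ∑ ρ ∈ zerosIn xi N, F ρ = ∑' ρ, (if ‖ρ‖ ≤ N then F ρ else 0) := by
    intro N
    rw [tsum_eq_sum (s := zerosIn xi N)]
    · apply Finset.sum_congr rfl; intro ρ hρ; rw [if_pos (mem_zx.1 hρ).1]
    · intro ρ hρ
      split_ifs with h
      · apply h0; intro h2; exact hρ (mem_zx.2 ⟨h, h2⟩)
      · rfl
  simp_rw [h1]
  refine tendsto_tsum_of_dominated_convergence (bound := fun ρ => ‖F ρ‖) hF.norm ?_ ?_
  · intro ρ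
    apply tendsto_const_nhds.congr'
    filter_upwards [tendsto_natCast_atTop_atTop.eventually_ge_atTop ‖ρ‖] with N hN
    rw [if_pos hN]
  · filter_upwards with N ρ
    split_ifs <;> simp

lemma summable_of_wt {F : ℂ → ℂ} (C : ℝ) (h : ∀ ρ, xi ρ = 0 → ‖F ρ‖ ≤ C * wt ρ) (h0 : ∀ ρ, xi ρ ≠ 0 → F ρ = 0) :
    Summable F := by
  refine Summable.of_norm_bounded (wt_summable_le.1.mul_left C) ?_
  intro ρ
  by_cases hρ : xi ρ = 0
  · exact h ρ hρ
  · rw [h0 ρ hρ, wt_eq_zero hρ]; simp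

lemma norm_term_le {s ρ : ℂ} (hs : 1 < s.re) (h : xi ρ = 0) :
    ‖(mult ρ : ℂ) * (s / (ρ * (s - ρ)))‖ ≤ (‖s‖ * (1 + ‖s‖ / (s.re - 1)) * (21/20)) * wt ρ := by
  obtain ⟨h1, h2⟩ := xi_zero_strip h
  have hn := zero_norm_sq h
  have him := zero_im_sq h
  have hd : s.re - 1 ≤ ‖s - ρ‖ := by
    have := Complex.re_le_norm (s - ρ); rw [Complex.sub_re] at this; linarith
  have hdpos : 0 < ‖s - ρ‖ := by linarith
  have hρ0 : 0 < ‖ρ‖ := by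
    rw [norm_pos_iff]; rintro rfl; simp at h1
  rw [norm_mul, norm_div, norm_mul, Complex.norm_real, Real.norm_of_nonneg (mult_nonneg ρ)]
  unfold wt
  have h3 : ‖ρ‖ ≤ ‖s‖ + ‖s - ρ‖ := by
    have := norm_sub_le s (s - ρ); simpa using this
  have h4 : ‖ρ‖ ≤ (1 + ‖s‖ / (s.re - 1)) * ‖s - ρ‖ := by
    have : ‖s‖ ≤ ‖s‖ / (s.re - 1) * ‖s - ρ‖ := by
      rw [div_mul_eq_mul_div, le_div_iff₀ (by linarith)]
      gcongr
    linarith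
  have hc : 0 ≤ 1 + ‖s‖ / (s.re - 1) := by
    have : 0 ≤ ‖s‖ / (s.re - 1) := div_nonneg (norm_nonneg _) (by linarith)
    linarith
  have h5 : 1 / (‖ρ‖ * ‖s - ρ‖) ≤ (1 + ‖s‖ / (s.re - 1)) * (21/20) / (1 + ρ.im ^ 2) := by
    rw [div_le_div_iff₀ (by positivity) (by positivity)]
    have : ‖ρ‖ * ‖ρ‖ ≤ ‖ρ‖ * ((1 + ‖s‖ / (s.re - 1)) * ‖s - ρ‖) := by gcongr
    nlinarith
  calc mult ρ * (‖s‖ / (‖ρ‖ * ‖s - ρ‖)) = mult ρ * ‖s‖ * (1 / (‖ρ‖ * ‖s - ρ‖)) := by ring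
    _ ≤ mult ρ * ‖s‖ * ((1 + ‖s‖ / (s.re - 1)) * (21/20) / (1 + ρ.im ^ 2)) := by
        apply mul_le_mul_of_nonneg_left h5
        exact mul_nonneg (mult_nonneg ρ) (norm_nonneg _)
    _ = _ := by ring

lemma xi_hasSum {s : ℂ} (hs : 1 < s.re) :
    HasSum (fun ρ => (mult ρ : ℂ) * (s / (ρ * (s - ρ)))) (logDeriv xi s + B0) := by
  have h0 : ∀ ρ, xi ρ ≠ 0 → (mult ρ : ℂ) * (s / (ρ * (s - ρ))) = 0 := by
    intro ρ h; rw [mult_eq_zero h]; simp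
  have hsum : Summable (fun ρ => (mult ρ : ℂ) * (s / (ρ * (s - ρ)))) :=
    summable_of_wt _ (fun ρ h => norm_term_le hs h) h0
  have hlim := tendsto_zx hsum h0
  have hlim2 := xi_main (z := s) (w := 0) (xi_ne_zero_of_one_le hs.le) (by rw [xi_zero]; simp)
  have h10 : logDeriv xi 0 = - B0 := by
    have := xi_logDeriv_one_sub 1; rw [sub_self, xi_deriv_one] at this; exact this
  rw [h10, sub_neg_eq_add] at hlim2
  have he : (fun N : ℕ => ∑ ρ ∈ zerosIn xi N, (mult ρ : ℂ) * (1 / (s - ρ) - 1 / (0 - ρ))) =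
      (fun N : ℕ => ∑ ρ ∈ zerosIn xi N, (mult ρ : ℂ) * (s / (ρ * (s - ρ)))) := by
    ext N
    apply Finset.sum_congr rfl
    intro ρ hρ
    obtain ⟨h1, h2⟩ := xi_zero_strip (mem_zx.1 hρ).2
    have hρ0 : ρ ≠ 0 := by rintro rfl; simp at h1
    have hsρ : s - ρ ≠ 0 := by
      intro h; have := congrArg Complex.re h; simp at this; linarith
    congr 1
    field_simp
    ring
  rw [he] at hlim2
  rw [← tendsto_nhds_unique hlim hlim2]
  exact hsum.hasSum

lemma B0_hasSum : HasSum (fun ρ => mult ρ * (1 / ρ).re) B0 := by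
  have h0 : ∀ ρ, xi ρ ≠ 0 → ((mult ρ * (1 / ρ).re : ℝ) : ℂ) = 0 := by
    intro ρ h; rw [mult_eq_zero h]; simp
  have hsum : Summable (fun ρ => ((mult ρ * (1 / ρ).re : ℝ) : ℂ)) := by
    refine summable_of_wt (21/20) (fun ρ h => ?_) h0
    obtain ⟨h1, h2⟩ := xi_zero_strip h
    have hn := zero_norm_sq h
    rw [Complex.norm_real, norm_mul, Real.norm_of_nonneg (mult_nonneg ρ), one_div, Complex.inv_re,
      ← Complex.sq_norm, Real.norm_of_nonneg (by positivity)]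
    unfold wt
    rw [← mul_div_assoc, mul_div_assoc', div_le_div_iff₀ (by nlinarith [sq_nonneg ρ.im]) (by positivity)]
    have hm := mult_nonneg ρ
    have : ρ.re * (1 + ρ.im ^ 2) ≤ 21 / 20 * ‖ρ‖ ^ 2 := by nlinarith [sq_nonneg ρ.im]
    nlinarith
  have hsumR : Summable (fun ρ => mult ρ * (1 / ρ).re) := Complex.summable_ofReal.1 hsum
  have hlim := tendsto_zx hsum h0
  have hsymm : ∑' ρ, mult ρ * (1 / (1 - ρ)).re = ∑' ρ, mult ρ * (1 / ρ).re := by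
    rw [← (Equiv.subLeft (1:ℂ)).tsum_eq (fun ρ => mult ρ * (1 / ρ).re)]
    apply tsum_congr; intro ρ
    simp only [Equiv.subLeft_apply, mult_one_sub]
  have hsumR2 : Summable (fun ρ => mult ρ * (1 / (1 - ρ)).re) := by
    have := ((Equiv.subLeft (1:ℂ)).summable_iff).2 hsumR
    refine this.congr (fun ρ => ?_)
    simp only [Function.comp, Equiv.subLeft_apply, mult_one_sub]
  have h3 := tendsto_zx (F := fun ρ => ((mult ρ * (1 / (1 - ρ)).re + mult ρ * (1 / ρ).re : ℝ) : ℂ))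
    (by exact_mod_cast (hsumR2.add hsumR)) (by intro ρ h; rw [mult_eq_zero h]; simp)
  have hlim2 := xi_main (z := 1) (w := 0) (by rw [xi_one]; simp) (by rw [xi_zero]; simp)
  have h10 : logDeriv xi 0 = - B0 := by
    have := xi_logDeriv_one_sub 1; rw [sub_self, xi_deriv_one] at this; exact this
  rw [h10, xi_deriv_one] at hlim2
  have h4 := (Complex.continuous_re.tendsto _).comp hlim2
  have h5 := (Complex.continuous_re.tendsto _).comp h3
  have hB : ((B0:ℂ) - -(B0:ℂ)).re = 2 * B0 := by simp; ring
  rw [hB] at h4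
  have he : (Complex.re ∘ fun N : ℕ => ∑ ρ ∈ zerosIn xi N, (mult ρ : ℂ) * (1 / (1 - ρ) - 1 / (0 - ρ))) =
      (Complex.re ∘ fun N : ℕ => ∑ ρ ∈ zerosIn xi N, ((mult ρ * (1 / (1 - ρ)).re + mult ρ * (1 / ρ).re : ℝ) : ℂ)) := by
    ext N
    simp only [Function.comp, Complex.re_sum]
    apply Finset.sum_congr rfl
    intro ρ hρ
    rw [Complex.re_ofReal_mul, Complex.ofReal_re, Complex.sub_re, zero_sub, one_div (-ρ), inv_neg, Complex.neg_re, ← one_div]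
    ring
  rw [he] at h4
  have h6 := tendsto_nhds_unique h4 h5
  rw [← Complex.ofReal_tsum, Complex.ofReal_re, hsumR2.tsum_add hsumR, hsymm] at h6
  have h7 : B0 = ∑' ρ, mult ρ * (1 / ρ).re := by linarith
  rw [h7]; exact hsumR.hasSum

lemma xi_re_hasSum {s : ℂ} (hs : 1 < s.re) :
    HasSum (fun ρ => mult ρ * ((s.re - ρ.re) / ((s.re - ρ.re) ^ 2 + (s.im - ρ.im) ^ 2))) (logDeriv xi s).re := by
  have h1 := Complex.hasSum_re (xi_hasSum hs)
  have h2 := h1.sub B0_hasSum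
  have e : (logDeriv xi s + B0).re - B0 = (logDeriv xi s).re := by simp
  rw [e] at h2
  refine h2.congr_fun (fun ρ => ?_) |> fun h => h
  by_cases h : xi ρ = 0
  · obtain ⟨g1, g2⟩ := xi_zero_strip h
    rw [← re_inv_sub, Complex.re_ofReal_mul, ← mul_sub, ← Complex.sub_re]
    have hρ0 : ρ ≠ 0 := by rintro rfl; simp at g1
    have hsρ : s - ρ ≠ 0 := by
      intro h; have := congrArg Complex.re h; simp at this; linarith
    congr 2
    field_simp
    ring
  · rw [mult_eq_zero h]; simp

open Finset Real

lemma GammaSeq_norm_le {s : ℂ} (hs : 0 < s.re) {n : ℕ} (hn : n ≠ 0) : ‖Complex.GammaSeq s n‖ ≤ Real.Gamma s.re := by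
  rw [Complex.GammaSeq_eq_approx_Gamma_integral hs hn, Real.Gamma_eq_integral hs,
    intervalIntegral.integral_of_le (by positivity)]
  have hI := Real.GammaIntegral_convergent hs
  have h1 : ‖∫ x in Set.Ioc (0:ℝ) n, (((1 - x / n) ^ n : ℝ) : ℂ) * (x : ℂ) ^ (s - 1)‖ ≤
      ∫ x in Set.Ioc (0:ℝ) n, Real.exp (-x) * x ^ (s.re - 1) := by
    refine MeasureTheory.norm_integral_le_of_norm_le (hI.mono_set Set.Ioc_subset_Ioi_self) ?_
    refine (MeasureTheory.ae_restrict_iff' measurableSet_Ioc).2 (Filter.Eventually.of_forall ?_)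
    intro t ht
    rw [norm_mul, Complex.norm_cpow_eq_rpow_re_of_pos ht.1, Complex.norm_real]
    have hn0 : (0:ℝ) < n := by exact_mod_cast Nat.pos_of_ne_zero hn
    have h2 : 0 ≤ 1 - t / n := by rw [sub_nonneg, div_le_one hn0]; exact ht.2
    rw [Real.norm_of_nonneg (by positivity)]
    have := Real.one_sub_div_pow_le_exp_neg ht.2
    rw [Complex.sub_re, Complex.one_re]
    gcongr
    exact (Real.rpow_nonneg ht.1.le _)
  refine h1.trans ?_
  apply MeasureTheory.setIntegral_mono_set hI
  · refine (MeasureTheory.ae_restrict_iff' measurableSet_Ioi).2 (Filter.Eventually.of_forall ?_)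
    intro t ht
    have : (0:ℝ) < t := ht
    simp only [Pi.zero_apply]; positivity
  · exact (Set.Ioc_subset_Ioi_self).eventuallyLE

lemma GammaSeq_hasDerivAt {z : ℂ} (hz : 0 < z.re) {n : ℕ} (hn : n ≠ 0) :
    HasDerivAt (fun z => Complex.GammaSeq z n)
      (Complex.GammaSeq z n * (Real.log n - ∑ k ∈ range (n + 1), 1 / (z + k))) z := by
  unfold Complex.GammaSeq
  have hn0 : (n:ℂ) ≠ 0 := by exact_mod_cast hn
  have hne : ∀ k : ℕ, z + k ≠ 0 := by
    intro k h; have := congrArg Complex.re h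
    simp at this; have h2 : (0:ℝ) ≤ k := by positivity
    linarith
  have hP : HasDerivAt (fun z : ℂ => ∏ j ∈ Finset.range (n + 1), (z + j))
      ((∏ j ∈ Finset.range (n + 1), (z + j)) * ∑ k ∈ range (n + 1), 1 / (z + k)) z := by
    have hd : DifferentiableAt ℂ (fun z : ℂ => ∏ j ∈ Finset.range (n + 1), (z + j)) z := by
      apply DifferentiableAt.fun_finsetProd; intro i hi; fun_prop
    have h0 : (∏ j ∈ Finset.range (n + 1), (z + j)) ≠ 0 := Finset.prod_ne_zero_iff.2 (fun k _ => hne k)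
    have h1 := logDeriv_prod (s := Finset.range (n+1)) (f := fun (j:ℕ) (z:ℂ) => z + j) (x := z)
      (fun i hi => hne i) (fun i hi => by fun_prop)
    refine hd.hasDerivAt.congr_deriv ?_
    rw [logDeriv_apply, div_eq_iff h0] at h1
    rw [h1, mul_comm]
    congr 1
    apply Finset.sum_congr rfl
    intro k _
    have : HasDerivAt (fun z : ℂ => z + k) 1 z := (hasDerivAt_id z).add_const _
    rw [logDeriv_apply, this.deriv]
  have h0 : (∏ j ∈ Finset.range (n + 1), (z + j)) ≠ 0 := Finset.prod_ne_zero_iff.2 (fun k _ => hne k)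
  have hN : HasDerivAt (fun z : ℂ => (n:ℂ) ^ z * (n.factorial : ℂ)) ((n:ℂ) ^ z * Complex.log n * 1 * n.factorial) z :=
    ((hasDerivAt_id z).const_cpow (Or.inl hn0)).mul_const _
  refine (hN.div hP h0).congr_deriv ?_
  rw [← Complex.ofReal_natCast, ← Complex.ofReal_log (by positivity)]
  field_simp
  try ring

open Filter Topology Metric in
lemma digamma_lim {z : ℂ} (hz : 0 < z.re) :
    Tendsto (fun n : ℕ => (Real.log n : ℂ) - ∑ k ∈ range (n + 1), 1 / (z + k)) atTop (𝓝 (Complex.digamma z)) := by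
  set r := z.re / 2 with hr
  have hr0 : 0 < r := by linarith
  have hball : ∀ w ∈ closedBall z r, r ≤ w.re := by
    intro w hw
    rw [mem_closedBall, dist_eq_norm] at hw
    have := (Complex.abs_re_le_norm (w - z)).trans hw
    rw [abs_le, Complex.sub_re] at this
    linarith [this.1]
  have hneg : ∀ w : ℂ, 0 < w.re → ∀ m : ℕ, w ≠ -m := by
    intro w hw m h; rw [h] at hw; simp at hw; have : (0:ℝ) ≤ m := by positivity
    linarith
  have hGne : Complex.Gamma z ≠ 0 := Complex.Gamma_ne_zero_of_re_pos hz
  have hGd : DifferentiableOn ℂ Complex.Gamma (closedBall z r) := fun w hw =>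
    (Complex.differentiableAt_Gamma w (hneg w (by linarith [hball w hw]))).differentiableWithinAt
  have hSd : ∀ n : ℕ, n ≠ 0 → DifferentiableOn ℂ (fun w => Complex.GammaSeq w n) (closedBall z r) := fun n hn w hw =>
    (GammaSeq_hasDerivAt (by linarith [hball w hw]) hn).differentiableAt.differentiableWithinAt
  obtain ⟨K, hK⟩ : ∃ K, ∀ w ∈ closedBall z r, Real.Gamma w.re ≤ K := by
    have hc : ContinuousOn (fun w : ℂ => Real.Gamma w.re) (closedBall z r) := by
      intro w hw
      have h1 : ContinuousAt Real.Gamma w.re := by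
        apply (Real.differentiableAt_Gamma _).continuousAt
        intro m h; have := hball w hw; have : (0:ℝ) ≤ m := by positivity
        linarith
      exact (ContinuousAt.comp (f := Complex.re) h1 Complex.continuous_re.continuousAt).continuousWithinAt
    obtain ⟨K, hK⟩ := ((isCompact_closedBall z r).image_of_continuousOn hc).bddAbove
    exact ⟨K, fun w hw => hK ⟨w, hw, rfl⟩⟩
  have hsph : ∀ θ : ℝ, circleMap z r θ ∈ closedBall z r := fun θ => circleMap_mem_closedBall z hr0.le θ
  have hderiv : Tendsto (fun n : ℕ => deriv (fun w => Complex.GammaSeq w n) z) atTop (𝓝 (deriv Complex.Gamma z)) := by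
    have hI : Tendsto (fun n : ℕ => ∮ w in C(z, r), (1 / (w - z) ^ 2) • Complex.GammaSeq w n) atTop
        (𝓝 (∮ w in C(z, r), (1 / (w - z) ^ 2) • Complex.Gamma w)) := by
      unfold circleIntegral
      refine intervalIntegral.tendsto_integral_filter_of_dominated_convergence (fun _ => r * (1 / r ^ 2 * K)) ?_ ?_ ?_ ?_
      · filter_upwards [eventually_ne_atTop 0] with n hn
        apply Continuous.aestronglyMeasurable
        have hcm := continuous_circleMap z r
        have e : (fun θ => deriv (circleMap z r) θ) = fun θ => circleMap 0 r θ * Complex.I := by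
          ext θ; rw [deriv_circleMap]
        simp only [deriv_circleMap]
        have h1 : Continuous (fun θ => Complex.GammaSeq (circleMap z r θ) n) :=
          (hSd n hn).continuousOn.comp_continuous hcm hsph
        have h2 : Continuous (fun θ => 1 / (circleMap z r θ - z) ^ 2) := by
          apply Continuous.div continuous_const (by fun_prop)
          intro θ
          apply pow_ne_zero
          rw [circleMap_sub_center]
          exact circleMap_ne_center hr0.ne'
        have h3 := continuous_circleMap 0 r
        fun_prop
      · filter_upwards [eventually_ne_atTop 0] with n hn
        refine Eventually.of_forall (fun θ _ => ?_)
        rw [deriv_circleMap, norm_smul, norm_smul, norm_mul, Complex.norm_I, norm_div, norm_pow, norm_one,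
          circleMap_sub_center, norm_circleMap_zero, abs_of_pos hr0, mul_one]
        gcongr
        have hh := hball _ (hsph θ)
        exact (GammaSeq_norm_le (by linarith) hn).trans (hK _ (hsph θ))
      · simp
      · refine Eventually.of_forall (fun θ _ => ?_)
        exact ((Complex.GammaSeq_tendsto_Gamma _).const_smul _).const_smul _
    rw [hGd.deriv_eq_smul_circleIntegral hr0] at hI
    have h2pi : (2 * (π:ℂ) * Complex.I) ≠ 0 := by simp [Real.pi_ne_zero]
    have h3 := hI.const_smul ((2 * (π:ℂ) * Complex.I)⁻¹)
    rw [inv_smul_smul₀ h2pi] at h3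
    refine h3.congr' ?_
    filter_upwards [eventually_ne_atTop 0] with n hn
    rw [(hSd n hn).deriv_eq_smul_circleIntegral hr0, inv_smul_smul₀ h2pi]
  have hG := Complex.GammaSeq_tendsto_Gamma z
  have hq := hderiv.div hG hGne
  refine hq.congr' ?_
  filter_upwards [eventually_ne_atTop 0, hG.eventually_ne hGne] with n hn hne
  simp only [Pi.div_apply]
  rw [(GammaSeq_hasDerivAt hz hn).deriv]
  field_simp

open Filter Topology in
lemma digamma_hasSum {z : ℂ} (hz : 0 < z.re) :
    HasSum (fun k : ℕ => 1 / ((k:ℂ) + 1) - 1 / (z + k)) (Complex.digamma z + Real.eulerMascheroniConstant) := by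
  have hne : ∀ k : ℕ, z + k ≠ 0 := by
    intro k h; have := congrArg Complex.re h
    simp at this; have h2 : (0:ℝ) ≤ k := by positivity
    linarith
  have hsum : Summable (fun k : ℕ => 1 / ((k:ℂ) + 1) - 1 / (z + k)) := by
    set c := min z.re 1
    have hc : 0 < c := lt_min hz one_pos
    have hs2 : Summable (fun k : ℕ => ‖z - 1‖ * c⁻¹ * (1 / ((k:ℝ) + 1) ^ 2)) := by
      apply Summable.mul_left
      have := (summable_nat_add_iff 1).2 (Real.summable_one_div_nat_pow.2 (show 1 < 2 by norm_num))
      simpa using this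
    refine Summable.of_norm_bounded hs2 ?_
    intro k
    have hk1 : ((k:ℂ) + 1) ≠ 0 := by exact_mod_cast Nat.succ_ne_zero k
    have e : 1 / ((k:ℂ) + 1) - 1 / (z + k) = (z - 1) / (((k:ℂ) + 1) * (z + k)) := by
      have := hne k
      field_simp; ring
    have h1 : ‖(k:ℂ) + 1‖ = k + 1 := by
      have : ((k:ℂ) + 1) = (((k:ℝ) + 1 : ℝ) : ℂ) := by push_cast; rfl
      rw [this, Complex.norm_real, Real.norm_of_nonneg (by positivity)]
    have h2 : c * (k + 1) ≤ ‖z + k‖ := by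
      have h3 := Complex.re_le_norm (z + k)
      simp at h3
      have h4 : c ≤ z.re := min_le_left _ _
      have h5 : c ≤ 1 := min_le_right _ _
      have : (0:ℝ) ≤ k := by positivity
      nlinarith
    rw [e, norm_div, norm_mul, h1]
    calc _ ≤ ‖z - 1‖ / (((k:ℝ) + 1) * (c * (k + 1))) := by gcongr
      _ = _ := by field_simp
  have hl := digamma_lim hz
  have hh : Tendsto (fun n : ℕ => (((harmonic (n + 1) : ℝ) - Real.log (n + 1 : ℕ) + (Real.log (n + 1 : ℕ) - Real.log n) : ℝ) : ℂ)) atTop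
      (𝓝 ((Real.eulerMascheroniConstant + 0 : ℝ) : ℂ)) := by
    apply (Complex.continuous_ofReal.tendsto _).comp
    apply Tendsto.add
    · exact (tendsto_add_atTop_iff_nat 1).2 Real.tendsto_harmonic_sub_log
    · have h3 : Tendsto (fun n : ℕ => Real.log (1 + 1 / (n:ℝ))) atTop (nhds (Real.log (1 + 0))) := by
        apply Tendsto.log _ (by norm_num)
        apply Tendsto.const_add
        exact tendsto_const_div_atTop_nhds_zero_nat 1
      rw [add_zero, Real.log_one] at h3
      refine h3.congr' ?_
      filter_upwards [eventually_ge_atTop 1] with n hn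
      have : (0:ℝ) < n := by exact_mod_cast hn
      rw [← Real.log_div (by positivity) (by positivity)]
      congr 1; push_cast; field_simp
  have hadd := hl.add hh
  have hps := (hsum.hasSum.tendsto_sum_nat).comp (tendsto_add_atTop_nat 1)
  have he : (fun n : ℕ => (Real.log n : ℂ) - ∑ k ∈ range (n + 1), 1 / (z + k) + (((harmonic (n + 1) : ℝ) - Real.log (n + 1 : ℕ) + (Real.log (n + 1 : ℕ) - Real.log n) : ℝ) : ℂ))
      = ((fun n => ∑ i ∈ range n, (1 / ((i:ℂ) + 1) - 1 / (z + i))) ∘ fun a => a + 1) := by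
    ext n
    simp only [Function.comp, Finset.sum_sub_distrib, harmonic]
    push_cast
    simp only [one_div]
    ring
  rw [he, add_zero] at hadd
  rw [← tendsto_nhds_unique hps hadd]
  exact hsum.hasSum

lemma log_norm_one_add (w : ℂ) (hw : 1 + w ≠ 0) : Real.log ‖1 + w‖ ≤ w.re + ‖w‖ ^ 2 / 2 := by
  have h : 0 < ‖1 + w‖ := norm_pos_iff.2 hw
  have h1 := Real.log_le_sub_one_of_pos (show 0 < ‖1 + w‖ ^ 2 by positivity)
  rw [Real.log_pow] at h1
  have h2 : ‖1 + w‖ ^ 2 = 1 + 2 * w.re + ‖w‖ ^ 2 := by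
    rw [Complex.sq_norm, Complex.sq_norm, Complex.normSq_apply, Complex.normSq_apply]; simp; ring
  push_cast at h1
  linarith

open Filter Topology in
lemma digamma_re_le {z : ℂ} (hz : 1 / 2 < z.re) :
    (Complex.digamma z).re ≤ Real.log ‖z‖ + 1 / (z.re + |z.im| - 1 / 2) := by
  have hl := (Complex.continuous_re.tendsto _).comp (digamma_lim (z := z) (by linarith))
  refine le_of_tendsto hl ?_
  filter_upwards [eventually_ge_atTop 1] with N hN
  have hB := abs_nonneg z.im
  have hne : ∀ k : ℕ, z + k ≠ 0 := by
    intro k h; have := congrArg Complex.re h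
    simp at this; have h2 : (0:ℝ) ≤ k := by positivity
    linarith
  have key : ∀ M : ℕ, Real.log ‖z + M‖ - Real.log ‖z‖ - (1 / (z.re + |z.im| - 1 / 2) - 1 / (z.re + M + |z.im| - 1 / 2))
      ≤ ∑ k ∈ range M, (1 / (z + k)).re := by
    intro M
    induction M with
    | zero => simp
    | succ M ih =>
      rw [Finset.sum_range_succ]
      have h1 := log_norm_one_add (1 / (z + M)) (by
        have := hne M
        intro h
        apply hne (M + 1)
        field_simp at h
        push_cast
        rw [mul_zero] at h
        linear_combination h)
      have h2 : 1 + 1 / (z + M) = (z + (M + 1 : ℕ)) / (z + M) := by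
        have := hne M; push_cast; field_simp; ring
      rw [h2, norm_div, Real.log_div (norm_ne_zero_iff.2 (hne _)) (norm_ne_zero_iff.2 (hne _))] at h1
      have h3 : ‖1 / (z + M)‖ ^ 2 / 2 ≤ 1 / (z.re + M + |z.im| - 1 / 2) - 1 / (z.re + (M + 1 : ℕ) + |z.im| - 1 / 2) := by
        rw [norm_div, norm_one, div_pow, one_pow, Complex.sq_norm, Complex.normSq_apply]
        simp only [Complex.add_re, Complex.natCast_re, Complex.add_im, Complex.natCast_im, add_zero]
        have hM : (0:ℝ) ≤ M := by positivity
        set u := z.re + M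
        have hu : 1/2 < u := by simp only [u]; linarith
        push_cast
        have e : z.re + ((M:ℝ) + 1) = u + 1 := by simp only [u]; ring
        rw [e, ← abs_mul_abs_self z.im]
        set B := |z.im|
        have hq : 1 / (u + B - 1 / 2) - 1 / (u + 1 + B - 1 / 2) = 1 / ((u + B) ^ 2 - 1/4) := by
          have a1 : u + B - 1/2 ≠ 0 := by linarith
          have a2 : u + 1 + B - 1/2 ≠ 0 := by linarith
          have a3 : (u + B) ^ 2 - 1/4 ≠ 0 := by nlinarith
          rw [div_sub_div _ _ a1 a2, div_eq_div_iff (mul_ne_zero a1 a2) a3]; ring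
        rw [hq, div_div]
        apply one_div_le_one_div_of_le
        · nlinarith
        · nlinarith [sq_nonneg (u - B)]
      push_cast at *
      linarith
  have hk := key (N + 1)
  have hp : 0 ≤ 1 / (z.re + (N + 1 : ℕ) + |z.im| - 1 / 2) := by
    apply one_div_nonneg.2
    have : (0:ℝ) ≤ (N + 1 : ℕ) := by positivity
    linarith
  have hN2 : Real.log N ≤ Real.log ‖z + (N + 1 : ℕ)‖ := by
    apply Real.log_le_log (by exact_mod_cast hN)
    have := Complex.re_le_norm (z + (N + 1 : ℕ))
    simp only [Complex.add_re, Complex.natCast_re] at this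
    push_cast at this ⊢
    linarith
  simp only [Function.comp, Complex.sub_re, Complex.ofReal_re, Complex.re_sum]
  linarith

open Finset Real

noncomputable def Phi (s : ℂ) : ℂ := LSeries (fun n => ((ArithmeticFunction.vonMangoldt n : ℝ) : ℂ)) s

lemma Phi_eq {s : ℂ} (hs : 1 < s.re) :
    Phi s = 1 / (s - 1) - Real.log π / 2 + Complex.digamma (s / 2 + 1) / 2 - logDeriv xi s := by
  have hs0 : s ≠ 0 := by rintro rfl; norm_num at hs
  have hs1 : s - 1 ≠ 0 := by
    intro h
    have : s = 1 := by linear_combination h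
    subst this; norm_num at hs
  have hs1' : s ≠ 1 := fun h => hs1 (by simp [h])
  have hG : Complex.Gamma (s / 2) ≠ 0 := Complex.Gamma_ne_zero_of_re_pos (by simp; linarith)
  have hz : riemannZeta s ≠ 0 := riemannZeta_ne_zero_of_one_le_re hs.le
  have hpi : ((π : ℝ) : ℂ) ≠ 0 := by exact_mod_cast Real.pi_ne_zero
  have hev : xi =ᶠ[nhds s] fun s => (s * (s - 1)) * (((π:ℂ) ^ (-s / 2) * Complex.Gamma (s / 2)) * riemannZeta s) := by
    have : {z : ℂ | 1 < z.re} ∈ nhds s := (isOpen_lt continuous_const Complex.continuous_re).mem_nhds hs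
    filter_upwards [this] with z hz
    have hz' : 1 < z.re := hz
    have h0 : z ≠ 0 := by rintro rfl; norm_num at hz'
    have h1 : z ≠ 1 := by rintro rfl; norm_num at hz'
    exact xi_eq h0 h1 (Complex.Gammaℝ_ne_zero_of_re_pos (by linarith))
  have hd1 : DifferentiableAt ℂ (fun s : ℂ => s * (s - 1)) s := by fun_prop
  have hm : ∀ m : ℕ, s / 2 ≠ -m := by
    intro m h
    have := congrArg Complex.re h
    simp at this
    have : (0:ℝ) ≤ m := by positivity
    linarith
  have hdG : HasDerivAt (fun s : ℂ => Complex.Gamma (s / 2)) (deriv Complex.Gamma (s/2) * (1/2)) s := by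
    have h := (Complex.differentiableAt_Gamma (s/2) hm).hasDerivAt
    exact h.comp s ((hasDerivAt_id s).div_const 2)
  have hdP : HasDerivAt (fun s : ℂ => (π:ℂ) ^ (-s / 2)) ((π:ℂ) ^ (-s / 2) * Complex.log π * (-1/2)) s := by
    have h : HasDerivAt (fun s : ℂ => -s / 2) (-1/2) s := by
      simpa using ((hasDerivAt_id s).neg.div_const 2)
    exact h.const_cpow (Or.inl hpi)
  have hdz := differentiableAt_riemannZeta hs1'
  have hPne : (π:ℂ) ^ (-s / 2) ≠ 0 := by simp [Complex.cpow_eq_zero_iff, hpi]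
  have hlx : logDeriv xi s = 1 / s + 1 / (s - 1) + (-(Real.log π : ℂ) / 2 + Complex.digamma (s/2) / 2 + deriv riemannZeta s / riemannZeta s) := by
    have e1 : logDeriv xi s = logDeriv (fun s => (s * (s - 1)) * (((π:ℂ) ^ (-s / 2) * Complex.Gamma (s / 2)) * riemannZeta s)) s := by
      rw [logDeriv_apply, logDeriv_apply, hev.deriv_eq, hev.self_of_nhds]
    rw [e1, logDeriv_mul (f := fun s : ℂ => s * (s - 1)) (g := fun s => ((π:ℂ) ^ (-s / 2) * Complex.Gamma (s / 2)) * riemannZeta s) s (mul_ne_zero hs0 hs1) (mul_ne_zero (mul_ne_zero hPne hG) hz) hd1 ((hdP.differentiableAt.mul hdG.differentiableAt).mul hdz)]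
    rw [logDeriv_mul (f := fun s : ℂ => (π:ℂ) ^ (-s / 2) * Complex.Gamma (s / 2)) (g := fun s => riemannZeta s) s (mul_ne_zero hPne hG) hz (hdP.differentiableAt.mul hdG.differentiableAt) hdz]
    rw [logDeriv_mul (f := fun s : ℂ => (π:ℂ) ^ (-s / 2)) (g := fun s => Complex.Gamma (s / 2)) s hPne hG hdP.differentiableAt hdG.differentiableAt]
    rw [logDeriv_mul (f := fun s : ℂ => s) (g := fun s => s - 1) s hs0 hs1 (by fun_prop) (by fun_prop)]
    rw [Complex.digamma_def]
    simp only [logDeriv_apply, hdP.deriv, hdG.deriv]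
    rw [Complex.ofReal_log Real.pi_pos.le]
    simp
    field_simp
  have hL : Phi s = - deriv riemannZeta s / riemannZeta s := ArithmeticFunction.LSeries_vonMangoldt_eq_deriv_riemannZeta_div hs
  rw [hL, hlx, Complex.digamma_apply_add_one _ hm]
  field_simp
  ring

lemma Phi_hasSum {s : ℂ} (hs : 1 < s.re) :
    HasSum (fun n => LSeries.term (fun n => ((ArithmeticFunction.vonMangoldt n : ℝ) : ℂ)) s n) (Phi s) :=
  (ArithmeticFunction.LSeriesSummable_vonMangoldt hs).hasSum

lemma term_re (σ t : ℝ) (n : ℕ) :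
    ∃ a c : ℝ, 0 ≤ a ∧ ∀ k : ℕ, k ≤ 2 → (LSeries.term (fun n => ((ArithmeticFunction.vonMangoldt n : ℝ) : ℂ)) (σ + (k * t : ℝ) * Complex.I) n).re = a * (if k = 0 then 1 else if k = 1 then c else 2 * c ^ 2 - 1) := by
  rcases Nat.eq_zero_or_pos n with rfl | hn
  · exact ⟨0, 0, le_rfl, by simp⟩
  have hn' : (0:ℝ) < n := by exact_mod_cast hn
  have hnc : (n : ℂ) ≠ 0 := by exact_mod_cast hn.ne'
  refine ⟨ArithmeticFunction.vonMangoldt n * (n:ℝ) ^ (-σ), Real.cos (t * Real.log n), mul_nonneg ArithmeticFunction.vonMangoldt_nonneg (by positivity), ?_⟩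
  have key : ∀ k : ℕ, (LSeries.term (fun n => ((ArithmeticFunction.vonMangoldt n : ℝ) : ℂ)) (σ + (k * t : ℝ) * Complex.I) n).re = ArithmeticFunction.vonMangoldt n * (n:ℝ) ^ (-σ) * Real.cos (k * (t * Real.log n)) := by
    intro k
    rw [LSeries.term_of_ne_zero hn.ne', div_eq_mul_inv, ← Complex.cpow_neg, Complex.cpow_def_of_ne_zero hnc,
      ← Complex.natCast_log, Complex.re_ofReal_mul, Complex.exp_re, mul_assoc, Real.rpow_def_of_pos hn']
    congr 2
    · simp [-Complex.natCast_log]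
    · rw [← Real.cos_neg]; congr 1; simp [-Complex.natCast_log]; ring
  intro k hk
  rw [key]
  interval_cases k
  · simp
  · simp
  · simp only [Nat.cast_ofNat, Real.cos_two_mul]; simp

lemma Phi_341 {σ : ℝ} (hσ : 1 < σ) (t : ℝ) :
    0 ≤ 3 * (Phi σ).re + 4 * (Phi (σ + t * Complex.I)).re + (Phi (σ + (2 * t : ℝ) * Complex.I)).re := by
  have h0 := Complex.hasSum_re (Phi_hasSum (s := σ) (by simpa))
  have h1 := Complex.hasSum_re (Phi_hasSum (s := σ + t * Complex.I) (by simpa))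
  have h2 := Complex.hasSum_re (Phi_hasSum (s := σ + (2 * t : ℝ) * Complex.I) (by simpa))
  refine ((h0.mul_left 3).add (h1.mul_left 4)).add h2 |>.nonneg ?_
  intro n
  obtain ⟨a, c, ha, h⟩ := term_re σ t n
  have e0 := h 0 (by norm_num)
  have e1 := h 1 (by norm_num)
  have e2 := h 2 (by norm_num)
  simp at e0 e1 e2
  simp only [Complex.ofReal_mul, Complex.ofReal_ofNat, e0, e1, e2]
  nlinarith [mul_nonneg ha (sq_nonneg (1 + c))]

lemma Phi_real_nonneg {σ : ℝ} (hσ : 1 < σ) : 0 ≤ (Phi σ).re := by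
  have h0 := Complex.hasSum_re (Phi_hasSum (s := σ) (by simpa))
  refine h0.nonneg ?_
  intro n
  obtain ⟨a, c, ha, h⟩ := term_re σ 0 n
  have e0 := h 0 (by norm_num)
  simp at e0
  simp only [e0]
  exact ha

open Finset Real

lemma xi_re_nonneg_ge {s : ℂ} (hs : 1 < s.re) {ρ : ℂ} (h : xi ρ = 0) :
    (s.re-ρ.re)/((s.re-ρ.re)^2+(s.im-ρ.im)^2) ≤ (logDeriv xi s).re := by
  have h1 := xi_re_hasSum hs
  have hnn : ∀ ρ, 0 ≤ mult ρ*((s.re-ρ.re)/((s.re-ρ.re)^2+(s.im-ρ.im)^2)) := by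
    intro ρ
    by_cases hρ : xi ρ = 0
    · have := xi_zero_strip hρ
      exact mul_nonneg (mult_nonneg _) (div_nonneg (by linarith) (by positivity))
    · simp [mult_eq_zero hρ]
  have h2 := le_hasSum h1 ρ (fun j _ => hnn j)
  have h3 := one_le_mult h
  have := xi_zero_strip h
  have h4 : 0 ≤ (s.re-ρ.re)/((s.re-ρ.re)^2+(s.im-ρ.im)^2) := div_nonneg (by linarith) (by positivity)
  nlinarith

lemma xi_re_nonneg {s : ℂ} (hs : 1 < s.re) : 0 ≤ (logDeriv xi s).re := by
  refine (xi_re_hasSum hs).nonneg ?_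
  intro ρ
  by_cases hρ : xi ρ = 0
  · have := xi_zero_strip hρ
    exact mul_nonneg (mult_nonneg _) (div_nonneg (by linarith) (by positivity))
  · simp [mult_eq_zero hρ]

lemma digamma_le_half {x : ℝ} (hx : 0 < x) (hx2 : x ≤ 2) : (Complex.digamma x).re ≤ 1/2 := by
  have h1 := Complex.hasSum_re (digamma_hasSum (z := x) (by simpa))
  have h2 := Complex.hasSum_re (digamma_hasSum (z := 2) (by norm_num))
  have h3 := hasSum_le (fun k => by
    have e1 : ((1/((k:ℂ)+1) - 1/((x:ℂ)+k))).re = 1/((k:ℝ)+1) - 1/(x+k) := by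
      rw [← Complex.ofReal_re (1/((k:ℝ)+1) - 1/(x+k))]; push_cast; rfl
    have e2 : ((1/((k:ℂ)+1) - 1/((2:ℂ)+k))).re = 1/((k:ℝ)+1) - 1/(2+k) := by
      rw [← Complex.ofReal_re (1/((k:ℝ)+1) - 1/(2+k))]; push_cast; rfl
    show ((1/((k:ℂ)+1) - 1/((x:ℂ)+k))).re ≤ ((1/((k:ℂ)+1) - 1/((2:ℂ)+k))).re
    rw [e1, e2]
    gcongr) h1 h2
  have h4 : Complex.digamma 2 = 1 - Real.eulerMascheroniConstant := by
    have := Complex.digamma_apply_add_one 1 (by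
      intro m h
      have := congrArg Complex.re h
      simp at this
      have : (0:ℝ) ≤ m := by positivity
      linarith)
    rw [show (2:ℂ) = 1 + 1 by norm_num, this, Complex.digamma_one]; norm_num; ring
  rw [h4] at h3
  simp at h3
  have := Real.one_half_lt_eulerMascheroniConstant
  linarith

/-- bound for Re Phi at height t -/
lemma Phi_re_le {σ t : ℝ} (hσ : 1 < σ) (hσ2 : σ ≤ 1.1) :
    (Phi (σ + t * Complex.I)).re ≤ (σ - 1) / ((σ-1)^2 + t^2) - Real.log π / 2 + (Real.log (4 + (t/2)^2) / 2 + 2/(2 + |t|)) / 2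
      - (logDeriv xi (σ + t * Complex.I)).re := by
  rw [Phi_eq (by simpa)]
  have hz : ((σ + t * Complex.I : ℂ) / 2 + 1).re = σ / 2 + 1 := by simp
  have hz2 : ((σ + t * Complex.I : ℂ) / 2 + 1).im = t / 2 := by simp
  have h1 := digamma_re_le (z := (σ + t * Complex.I : ℂ) / 2 + 1) (by rw [hz]; linarith)
  rw [hz, hz2] at h1
  have h2 : Real.log ‖(σ + t * Complex.I : ℂ) / 2 + 1‖ ≤ Real.log (4 + (t/2)^2) / 2 := by
    have : ‖(σ + t * Complex.I : ℂ) / 2 + 1‖ = √((σ/2+1)^2 + (t/2)^2) := by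
      rw [Complex.norm_def, Complex.normSq_apply, hz, hz2]; ring_nf
    rw [this, Real.log_sqrt (by positivity)]
    gcongr
    nlinarith
  have h3 : 1 / (σ / 2 + 1 + |t/2| - 1/2) ≤ 2 / (2 + |t|) := by
    have := abs_nonneg t
    rw [abs_div, abs_of_pos (show (0:ℝ) < 2 by norm_num), div_le_div_iff₀ (by linarith) (by linarith)]
    linarith
  have h4 : (1 / ((σ + t * Complex.I : ℂ) - 1)).re = (σ - 1) / ((σ-1)^2 + t^2) := by
    rw [re_inv_sub]; simp
  have h5 : ((Real.log π : ℂ)/2).re = Real.log π / 2 := by simp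
  have h6 : (Complex.digamma ((σ + t * Complex.I : ℂ) / 2 + 1) / 2).re = (Complex.digamma ((σ + t * Complex.I : ℂ) / 2 + 1)).re/2 := by simp
  rw [Complex.sub_re, Complex.add_re, Complex.sub_re, h4, h5, h6]
  linarith

lemma Phi_real_le {σ : ℝ} (hσ : 1 < σ) (hσ2 : σ ≤ 1.1) :
    (Phi σ).re ≤ 1 / (σ - 1) - Real.log π / 2 + 1/4 := by
  rw [Phi_eq (by simpa)]
  have h1 := digamma_le_half (x := σ / 2 + 1) (by linarith) (by linarith)
  have h2 := xi_re_nonneg (s := σ) (by simpa)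
  have h4 : (1 / ((σ : ℂ) - 1)).re = 1 / (σ - 1) := by
    rw [← Complex.ofReal_re (1 / (σ-1))]; push_cast; rfl
  have h5 : ((Real.log π : ℂ)/2).re = Real.log π / 2 := by simp
  have h6 : (Complex.digamma ((σ : ℂ) / 2 + 1) / 2).re = (Complex.digamma ((σ / 2 + 1 : ℝ) : ℂ)).re/2 := by simp
  rw [Complex.sub_re, Complex.add_re, Complex.sub_re, h4, h5, h6]
  linarith

lemma log_pi_ge : 1.143 ≤ Real.log π := by
  have h1 : (2:ℝ)^33 ≤ π^20 := by
    have : (3.14:ℝ)^20 ≤ π^20 := by gcongr; exact Real.pi_gt_d2.le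
    refine le_trans ?_ this
    norm_num
  have h2 := Real.log_le_log (by norm_num) h1
  rw [Real.log_pow, Real.log_pow] at h2
  have := Real.log_two_gt_d9
  norm_num at h2
  linarith

lemma log_T_ge {T : ℝ} (hT : 300 ≤ T) : 5 ≤ Real.log T := by
  rw [Real.le_log_iff_exp_le (by linarith)]
  have h := Real.exp_one_lt_d9
  have : Real.exp 5 = Real.exp 1 ^ 5 := by rw [← Real.exp_nat_mul]; norm_num
  rw [this]
  have h2 : Real.exp 1 ^ 5 ≤ 2.72 ^ 5 := by gcongr; linarith
  norm_num at h2
  linarith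

lemma zero_free {T : ℝ} (hT : 300 ≤ T) {ρ : ℂ} (hρ : xi ρ = 0) (hT2 : |ρ.im| ≤ T) :
    0.0717 / (2.5 * (Real.log T - 2)) ≤ 1 - ρ.re := by
  set K := 2.5 * (Real.log T - 2) with hK
  have hlT := log_T_ge hT
  have hK0 : 7.5 ≤ K := by rw [hK]; linarith
  obtain ⟨δ, hδ⟩ : ∃ δ, δ = 0.464 / K := ⟨_, rfl⟩
  have hδ0 : 0 < δ := by rw [hδ]; positivity
  have hδ1 : δ ≤ 0.1 := by rw [hδ, div_le_iff₀ (by linarith)]; linarith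
  have hst := xi_zero_strip hρ
  have him := zero_im_sq hρ
  set g := ρ.im with hg
  have h341 := Phi_341 (σ := 1 + δ) (by linarith) g
  have a0 := Phi_real_le (σ := 1 + δ) (by linarith) (by linarith)
  have a1 := Phi_re_le (σ := 1 + δ) (t := g) (by linarith) (by linarith)
  have a2 := Phi_re_le (σ := 1 + δ) (t := 2 * g) (by linarith) (by linarith)
  have b1 := xi_re_nonneg_ge (s := ((1 + δ : ℝ) : ℂ) + g * Complex.I) (by simp; linarith) hρ
  have b2 := xi_re_nonneg (s := ((1 + δ : ℝ) : ℂ) + (2 * g : ℝ) * Complex.I) (by simp; linarith)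
  have b3 : 1 / (δ + (1 - ρ.re)) ≤ (logDeriv xi (((1 + δ : ℝ) : ℂ) + g * Complex.I)).re := by
    refine le_trans (le_of_eq ?_) b1
    have : δ + (1 - ρ.re) ≠ 0 := by linarith
    have e : (((1 + δ : ℝ) : ℂ) + g * Complex.I).re = 1 + δ := by simp
    have e' : (((1 + δ : ℝ) : ℂ) + g * Complex.I).im = g := by simp
    rw [e, e', show 1 + δ - ρ.re = δ + (1 - ρ.re) by ring, ← hg]
    field_simp
    ring
  have sqd := sq_nonneg δ
  have hT2' : 90000 ≤ T^2 := by nlinarith only [hT]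
  have c1 : (1 + δ - 1) / ((1 + δ - 1)^2 + g^2) ≤ 0.001 + (if |g| < 100 then 0.01 else 0) := by
    split_ifs with h
    · rw [div_le_iff₀ (by positivity)]; linarith
    · push Not at h
      have : 10000 ≤ g^2 := by rw [← sq_abs]; nlinarith only [h]
      rw [div_le_iff₀ (by positivity)]; linarith
  have c2 : (1 + δ - 1) / ((1 + δ - 1)^2 + (2*g)^2) ≤ 0.001 + (if |g| < 100 then 0.01 else 0) := by
    refine le_trans (div_le_div_of_nonneg_left (by linarith) (by positivity) ?_) c1
    linarith
  have hlog1 : Real.log (4 + (g/2)^2) = Real.log (16 + g^2) - 2 * Real.log 2 := by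
    rw [show 4 + (g/2)^2 = (16 + g^2) / 2^2 by ring, Real.log_div (by positivity) (by norm_num), Real.log_pow]; norm_num
  have hlog2 : Real.log (4 + (2*g/2)^2) ≤ Real.log (16 + g^2) :=
    Real.log_le_log (by positivity) (by linarith)
  have l2 := Real.log_two_gt_d9
  have lp := log_pi_ge
  have hmain : 4 / (δ + (1 - ρ.re)) ≤ 3 / δ + K := by
    have e4 : 4 / (δ + (1 - ρ.re)) = 4 * (1 / (δ + (1 - ρ.re))) := by ring
    have e3 : 3 / δ = 3 * (1 / (1 + δ - 1)) := by rw [show 1 + δ - 1 = δ by ring]; ring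
    rw [e4, e3]
    have habs := abs_nonneg g
    by_cases h : |g| < 100
    · simp only [h, if_true] at c1 c2
      have hg2 : g^2 ≤ 10000 := by rw [← sq_abs]; nlinarith only [h, habs]
      have hL : Real.log (16 + g^2) ≤ 2 * Real.log T - 3 * Real.log 2 := by
        have : Real.log (T^2 / 2^3) = 2 * Real.log T - 3 * Real.log 2 := by
          rw [Real.log_div (by positivity) (by norm_num), Real.log_pow, Real.log_pow]; norm_num
        rw [← this]
        exact Real.log_le_log (by positivity) (by linarith)
      have d1 : 2 / (2 + |g|) ≤ 1/3 := by
        have : 4 ≤ |g| := by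
          by_contra hh; push Not at hh
          have : g^2 < 16 := by rw [← sq_abs]; nlinarith only [hh, habs]
          linarith
        rw [div_le_div_iff₀ (by linarith) (by norm_num)]; linarith
      have d2 : 2 / (2 + |2*g|) ≤ 1/3 := by
        refine le_trans (div_le_div_of_nonneg_left (by norm_num) (by linarith) ?_) d1
        rw [abs_mul, abs_of_pos (show (0:ℝ) < 2 by norm_num)]; linarith
      rw [hK]
      linarith
    · simp only [h, if_false] at c1 c2
      push Not at h
      have hL : Real.log (16 + g^2) ≤ 2 * Real.log T + 0.01 := by
        have h1 : Real.log (16 + g^2) ≤ Real.log (T^2 * 1.01) := by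
          have : g^2 ≤ T^2 := by rw [← sq_abs]; gcongr
          exact Real.log_le_log (by positivity) (by linarith)
        rw [Real.log_mul (by positivity) (by norm_num), Real.log_pow] at h1
        have := Real.log_le_sub_one_of_pos (show (0:ℝ) < 1.01 by norm_num)
        norm_num at this h1
        linarith
      have d1 : 2 / (2 + |g|) ≤ 0.02 := by
        rw [div_le_iff₀ (by linarith)]; linarith
      have d2 : 2 / (2 + |2*g|) ≤ 0.02 := by
        refine le_trans (div_le_div_of_nonneg_left (by norm_num) (by linarith) ?_) d1
        rw [abs_mul, abs_of_pos (show (0:ℝ) < 2 by norm_num)]; linarith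
      rw [hK]
      linarith
  have hd : 0 < 1 - ρ.re := by linarith
  have hKδ : 3 / δ = 3 * K / 0.464 := by rw [hδ]; field_simp
  rw [hKδ, div_le_iff₀ (by linarith)] at hmain
  have hKd : δ * K = 0.464 := by rw [hδ]; field_simp
  rw [div_le_iff₀ (by linarith)]
  have e : (3 * K / 0.464 + K) * (δ + (1 - ρ.re)) = (3 / 0.464 + 1) * (δ * K + (1 - ρ.re) * K) := by ring
  rw [e, hKd] at hmain
  generalize (1 - ρ.re) * K = X at *
  norm_num at hmain ⊢
  linarith only [hmain]

lemma tail_le {T : ℝ} (hT : 300 ≤ T) :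
    ∑' ρ, (if T < |ρ.im| then wt ρ else 0) ≤ (1 / (T - 1)) * (Real.log ((T + 2) / (2 * π)) + 4 / (T - 1)) := by
  have h1 := xi_re_hasSum (s := (T:ℂ)) (by simp; linarith)
  have h2 := (h1.mul_left (2 / (T - 1)))
  have hX : (logDeriv xi T).re ≤ 1 / (T - 1) - Real.log π / 2 + (Real.log ((T + 2) / 2) + 2 / (T - 1)) / 2 := by
    have hP := Phi_real_nonneg (σ := T) (by linarith)
    rw [Phi_eq (by simp; linarith)] at hP
    have hz : ((T : ℂ) / 2 + 1).re = T / 2 + 1 := by simp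
    have hz2 : ((T : ℂ) / 2 + 1).im = 0 := by simp
    have h1 := digamma_re_le (z := (T : ℂ) / 2 + 1) (by rw [hz]; linarith)
    rw [hz, hz2] at h1
    have h2 : ‖(T : ℂ) / 2 + 1‖ = (T + 2) / 2 := by
      rw [show (T : ℂ) / 2 + 1 = (((T + 2) / 2 : ℝ) : ℂ) by push_cast; ring, Complex.norm_real, Real.norm_of_nonneg (by linarith)]
    have h3 : 1 / (T / 2 + 1 + |0| - 1/2) ≤ 2 / (T - 1) := by
      rw [abs_zero, div_le_div_iff₀ (by linarith) (by linarith)]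
      linarith
    have h4 : (1 / ((T : ℂ) - 1)).re = 1 / (T - 1) := by
      rw [← Complex.ofReal_re (1 / (T-1))]; push_cast; rfl
    have h5 : ((Real.log π : ℂ)/2).re = Real.log π / 2 := by simp
    have h6 : (Complex.digamma ((T : ℂ) / 2 + 1) / 2).re = (Complex.digamma ((T : ℂ) / 2 + 1)).re/2 := by simp
    rw [Complex.sub_re, Complex.add_re, Complex.sub_re, h4, h5, h6] at hP
    rw [h2] at h1
    linarith
  have hle : ∀ ρ, (if T < |ρ.im| then wt ρ else 0) ≤ 2 / (T - 1) * (mult ρ * (((T:ℂ).re - ρ.re) / (((T:ℂ).re - ρ.re) ^ 2 + ((T:ℂ).im - ρ.im) ^ 2))) := by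
    intro ρ
    by_cases hρ : xi ρ = 0
    · have hst := xi_zero_strip hρ
      have hm := mult_nonneg ρ
      simp only [Complex.ofReal_re, Complex.ofReal_im]
      split_ifs with hc
      · rw [wt]
        have hT2 : T^2 < ρ.im^2 := by rw [← sq_abs ρ.im]; gcongr
        have : 1 / (1 + ρ.im^2) ≤ 2 / (T-1) * ((T - ρ.re) / ((T - ρ.re)^2 + (0 - ρ.im)^2)) := by
          rw [div_mul_div_comm, div_le_div_iff₀ (by positivity) (mul_pos (by linarith) (add_pos_of_pos_of_nonneg (pow_pos (by linarith) 2) (sq_nonneg _)))]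
          have e1 : (T - 1) ≤ T - ρ.re := by linarith
          have e2 : (T - ρ.re)^2 ≤ T^2 := by nlinarith
          have e3 : 0 ≤ T - 1 := by linarith
          nlinarith [mul_nonneg e3 (sub_nonneg.2 e2), mul_nonneg (sub_nonneg.2 e1) (sq_nonneg ρ.im)]
        calc mult ρ / (1 + ρ.im^2) = mult ρ * (1 / (1 + ρ.im^2)) := by ring
          _ ≤ mult ρ * (2 / (T-1) * ((T - ρ.re) / ((T - ρ.re)^2 + (0 - ρ.im)^2))) := by gcongr
          _ = _ := by ring
      · exact mul_nonneg (div_nonneg (by norm_num) (by linarith)) (mul_nonneg hm (div_nonneg (by linarith) (by positivity)))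
    · simp [mult_eq_zero hρ, wt_eq_zero hρ]
  have hs : Summable (fun ρ => (if T < |ρ.im| then wt ρ else 0)) := by
    refine Summable.of_nonneg_of_le ?_ ?_ wt_summable_le.1
    · intro ρ; split_ifs; exacts [wt_nonneg ρ, le_rfl]
    · intro ρ; split_ifs; exacts [le_rfl, wt_nonneg ρ]
  refine (hasSum_le hle hs.hasSum h2).trans ?_
  have hlog : Real.log ((T + 2) / (2 * π)) = Real.log ((T + 2) / 2) - Real.log π := by
    rw [← Real.log_div (by positivity) (by positivity)]; congr 1; field_simp
  rw [hlog]
  have : 2 / (T - 1) = 2 * (1 / (T - 1)) := by ring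
  rw [this, mul_assoc, mul_left_comm]
  have hpos : 0 ≤ 1 / (T - 1) := div_nonneg (by norm_num) (by linarith)
  refine mul_le_mul_of_nonneg_left ?_ hpos
  have e : 4 / (T - 1) = 4 * (1 / (T-1)) := by ring
  rw [e]
  rw [this] at hX
  linarith

open Finset Real

open MeasureTheory in
def LTr (F : ℝ → ℂ) (G : ℂ → ℂ) : Prop :=
  ContinuousOn F (Set.Ici 0) ∧ (∃ C : ℝ, ∀ u : ℝ, 0 ≤ u → ‖F u‖ ≤ C * Real.exp (2 * u)) ∧
    ∀ s : ℂ, s.re = 3 → ∫ u in Set.Ioi (0:ℝ), F u * Complex.exp (-s * u) = G s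

open MeasureTheory in
lemma exp_integrable : IntegrableOn (fun u : ℝ => Real.exp (-1 * u)) (Set.Ioi 0) :=
  integrableOn_exp_mul_Ioi (by norm_num) 0

lemma norm_exp3 {s : ℂ} (hs : s.re = 3) (u : ℝ) : ‖Complex.exp (-s * u)‖ = Real.exp (-3 * u) := by
  rw [Complex.norm_exp]; simp [hs]

lemma norm_mul_exp3 {F : ℝ → ℂ} {C : ℝ} (hF : ∀ u : ℝ, 0 ≤ u → ‖F u‖ ≤ C * Real.exp (2 * u)) {s : ℂ} (hs : s.re = 3) {u : ℝ} (hu : 0 ≤ u) :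
    ‖F u * Complex.exp (-s * u)‖ ≤ C * Real.exp (-1 * u) := by
  rw [norm_mul, norm_exp3 hs]
  calc ‖F u‖ * Real.exp (-3 * u) ≤ C * Real.exp (2 * u) * Real.exp (-3 * u) := by gcongr; exact hF u hu
    _ = _ := by rw [mul_assoc, ← Real.exp_add]; ring_nf

open MeasureTheory in
lemma lt_integrable {F : ℝ → ℂ} (hc : ContinuousOn F (Set.Ici 0)) {C : ℝ} (hF : ∀ u : ℝ, 0 ≤ u → ‖F u‖ ≤ C * Real.exp (2 * u)) {s : ℂ} (hs : s.re = 3) :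
    IntegrableOn (fun u : ℝ => F u * Complex.exp (-s * u)) (Set.Ioi 0) := by
  refine Integrable.mono' (exp_integrable.const_mul C) ?_ ?_
  · refine ContinuousOn.aestronglyMeasurable ?_ measurableSet_Ioi
    refine (hc.mono Set.Ioi_subset_Ici_self).mul ?_
    fun_prop
  · refine (ae_restrict_iff' measurableSet_Ioi).2 (Filter.Eventually.of_forall fun u hu => ?_)
    exact norm_mul_exp3 hF hs (le_of_lt hu)

lemma LTr.intble {F : ℝ → ℂ} {G : ℂ → ℂ} (h : LTr F G) {s : ℂ} (hs : s.re = 3) :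
    MeasureTheory.IntegrableOn (fun u : ℝ => F u * Complex.exp (-s * u)) (Set.Ioi 0) := by
  obtain ⟨hc, ⟨C, hC⟩, _⟩ := h
  exact lt_integrable hc hC hs

lemma LTr.add {F F' : ℝ → ℂ} {G G' : ℂ → ℂ} (h : LTr F G) (h' : LTr F' G') :
    LTr (fun u => F u + F' u) (fun s => G s + G' s) := by
  refine ⟨h.1.add h'.1, ?_, ?_⟩
  · obtain ⟨C, hC⟩ := h.2.1
    obtain ⟨C', hC'⟩ := h'.2.1
    refine ⟨C + C', fun u hu => (norm_add_le _ _).trans ?_⟩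
    rw [add_mul]
    exact add_le_add (hC u hu) (hC' u hu)
  · intro s hs
    simp_rw [add_mul]
    rw [MeasureTheory.integral_add (h.intble hs) (h'.intble hs), h.2.2 s hs, h'.2.2 s hs]

lemma LTr.smul {F : ℝ → ℂ} {G : ℂ → ℂ} (h : LTr F G) (c : ℂ) :
    LTr (fun u => c * F u) (fun s => c * G s) := by
  refine ⟨continuousOn_const.mul h.1, ?_, ?_⟩
  · obtain ⟨C, hC⟩ := h.2.1
    refine ⟨‖c‖ * C, fun u hu => ?_⟩
    rw [norm_mul, mul_assoc]
    exact mul_le_mul_of_nonneg_left (hC u hu) (norm_nonneg _)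
  · intro s hs
    simp_rw [mul_assoc]
    rw [MeasureTheory.integral_const_mul, h.2.2 s hs]

lemma LTr.congr {F F' : ℝ → ℂ} {G G' : ℂ → ℂ} (h : LTr F G) (hF : ∀ u, F' u = F u) (hG : ∀ s, s.re = 3 → G' s = G s) : LTr F' G' := by
  have : F' = F := funext hF
  subst this
  exact ⟨h.1, h.2.1, fun s hs => by rw [hG s hs, h.2.2 s hs]⟩

lemma LTr_exp (a : ℂ) (ha : a.re ≤ 2) : LTr (fun u => Complex.exp (a * u)) (fun s => 1 / (s - a)) := by
  refine ⟨by fun_prop, ⟨1, fun u hu => ?_⟩, ?_⟩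
  · rw [Complex.norm_exp, one_mul]
    simp
    gcongr
  · intro s hs
    have : ∀ u : ℝ, Complex.exp (a * u) * Complex.exp (-s * u) = Complex.exp ((a - s) * u) := by
      intro u; rw [← Complex.exp_add]; ring_nf
    simp_rw [this]
    rw [integral_exp_mul_complex_Ioi (by simp; linarith)]
    simp
    rw [← neg_sub a s, inv_neg, neg_div, one_div]

lemma LTr_max (m : ℕ) (hm : 1 ≤ m) : LTr (fun u => ((max (1 - m * Real.exp (-u)) 0 : ℝ) : ℂ)) (fun s => (m:ℂ)^(-s) / (s * (s + 1))) := by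
  have hm0 : (0:ℝ) < m := by exact_mod_cast hm
  refine ⟨by fun_prop, ⟨1, fun u hu => ?_⟩, ?_⟩
  · rw [Complex.norm_real, Real.norm_of_nonneg (le_max_right _ _)]
    have h1 : 1 ≤ Real.exp (2 * u) := Real.one_le_exp (by linarith)
    have h2 : 0 < m * Real.exp (-u) := by positivity
    rw [max_le_iff]
    constructor <;> linarith
  · intro s hs
    have hl : 0 ≤ Real.log m := Real.log_nonneg (by exact_mod_cast hm)
    have hs0 : s ≠ 0 := by rintro rfl; norm_num at hs
    have hs1 : s + 1 ≠ 0 := by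
      intro h; have := congrArg Complex.re h; simp [hs] at this; norm_num at this
    have e1 : ∫ u in Set.Ioi (0:ℝ), ((max (1 - m * Real.exp (-u)) 0 : ℝ) : ℂ) * Complex.exp (-s * u)
        = ∫ u in Set.Ioi (Real.log m), (Complex.exp (-s * u) - m * Complex.exp (-(s+1) * u)) := by
      rw [MeasureTheory.setIntegral_eq_of_subset_of_forall_sdiff_eq_zero (s := Set.Ioi (Real.log m)) measurableSet_Ioi (Set.Ioi_subset_Ioi hl)]
      · refine MeasureTheory.setIntegral_congr_fun measurableSet_Ioi ?_
        intro u hu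
        have hu' : Real.log m < u := hu
        have : m * Real.exp (-u) ≤ 1 := by
          rw [Real.exp_neg, ← div_eq_mul_inv, div_le_one (Real.exp_pos _)]
          rw [Real.log_lt_iff_lt_exp hm0] at hu'
          exact hu'.le
        show ((max (1 - m * Real.exp (-u)) 0 : ℝ) : ℂ) * Complex.exp (-s * u) = _
        rw [max_eq_left (by linarith)]
        push_cast
        rw [sub_mul, one_mul, mul_assoc, ← Complex.exp_add]
        ring_nf
      · intro u hu
        have hu' : u ≤ Real.log m := by
          have := hu.2; simpa using this
        have : 1 ≤ m * Real.exp (-u) := by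
          rw [Real.exp_neg, ← div_eq_mul_inv, one_le_div (Real.exp_pos _)]
          rwa [Real.le_log_iff_exp_le hm0] at hu'
        rw [max_eq_right (by linarith)]
        simp
    rw [e1, MeasureTheory.integral_sub, MeasureTheory.integral_const_mul, integral_exp_mul_complex_Ioi (by simp [hs]), integral_exp_mul_complex_Ioi (by simp [hs]; norm_num)]
    · have hmc : (m : ℂ) ≠ 0 := by exact_mod_cast hm0.ne'
      have a1 : Complex.exp (-s * (Real.log m : ℝ)) = (m:ℂ)^(-s) := by
        rw [Complex.cpow_def_of_ne_zero hmc, ← Complex.natCast_log]; ring_nf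
      have a2 : Complex.exp (-(s+1) * (Real.log m : ℝ)) = (m:ℂ)^(-s) / m := by
        rw [show -(s+1) * ((Real.log m : ℝ):ℂ) = -s * (Real.log m : ℝ) - (Real.log m : ℝ) by ring, Complex.exp_sub, a1, Complex.natCast_log, Complex.exp_log hmc]
      rw [a1, a2]
      field_simp
      ring
    · exact integrableOn_exp_mul_complex_Ioi (by simp [hs]) _
    · exact (integrableOn_exp_mul_complex_Ioi (by simp [hs]; norm_num) _).const_mul _

lemma LTr_sum {ι : Type*} [Countable ι] {f : ι → ℝ → ℂ} {g : ι → ℂ → ℂ} {b : ι → ℝ} (hb : Summable b) (h : ∀ i, LTr (f i) (g i))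
    (hf : ∀ i, ∀ u : ℝ, 0 ≤ u → ‖f i u‖ ≤ b i * Real.exp (2 * u)) :
    LTr (fun u => ∑' i, f i u) (fun s => ∑' i, g i s) := by
  have hb0 : ∀ i, 0 ≤ b i := fun i => by
    have := (norm_nonneg _).trans (hf i 0 le_rfl); simpa using this
  have hsum : ∀ u : ℝ, 0 ≤ u → Summable (fun i => ‖f i u‖) := fun u hu =>
    Summable.of_nonneg_of_le (fun i => norm_nonneg _) (fun i => hf i u hu) (hb.mul_right _)
  refine ⟨?_, ⟨∑' i, b i, fun u hu => ?_⟩, ?_⟩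
  · intro u hu
    have : ContinuousOn (fun u => ∑' i, f i u) (Set.Icc 0 (u + 1)) := by
      refine continuousOn_tsum (fun i => (h i).1.mono Set.Icc_subset_Ici_self) (hb.mul_right (Real.exp (2 * (u+1)))) ?_
      intro i v hv
      refine (hf i v hv.1).trans ?_
      have := hb0 i
      gcongr
      exact hv.2
    refine (this u ⟨hu, by linarith⟩).mono_of_mem_nhdsWithin ?_
    have : Set.Icc 0 (u+1) = Set.Ici 0 ∩ Set.Iic (u+1) := rfl
    rw [this]
    exact Filter.inter_mem self_mem_nhdsWithin (mem_nhdsWithin_of_mem_nhds (Iic_mem_nhds (by linarith)))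
  · refine (norm_tsum_le_tsum_norm (hsum u hu)).trans ?_
    rw [← tsum_mul_right]
    exact (hsum u hu).tsum_le_tsum (fun i => hf i u hu) (hb.mul_right _)
  · intro s hs
    have key := MeasureTheory.hasSum_integral_of_summable_integral_norm (μ := MeasureTheory.volume.restrict (Set.Ioi (0:ℝ))) (F := fun i u => f i u * Complex.exp (-s * u)) (fun i => (h i).intble hs) ?_
    · simp_rw [(h _).2.2 s hs, tsum_mul_right] at key
      exact key.tsum_eq.symm
    · refine Summable.of_nonneg_of_le (fun i => MeasureTheory.integral_nonneg fun u => norm_nonneg _) (fun i => ?_) (hb.mul_right (∫ u in Set.Ioi (0:ℝ), Real.exp (-1 * u)))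
      rw [← MeasureTheory.integral_const_mul]
      refine MeasureTheory.setIntegral_mono_on ((h i).intble hs).norm (exp_integrable.const_mul _) measurableSet_Ioi ?_
      intro u hu
      exact norm_mul_exp3 (hf i) hs (le_of_lt hu)

open MeasureTheory FourierTransform in
lemma LTr_unique {D : ℝ → ℂ} {G : ℂ → ℂ} (h : LTr D G) (hG : ∀ s, s.re = 3 → G s = 0) (h0 : D 0 = 0) {u : ℝ} (hu : 0 ≤ u) : D u = 0 := by
  set g : ℝ → ℂ := fun u => if 0 ≤ u then D u * Complex.exp (-(3:ℂ) * u) else 0 with hg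
  have hgc : Continuous g := by
    rw [hg]
    refine continuous_if_le (f := fun _ => (0:ℝ)) (g := fun x : ℝ => x) (f' := fun u : ℝ => D u * Complex.exp (-(3:ℂ) * u)) (g' := fun _ => (0:ℂ)) continuous_const continuous_id ?_ continuousOn_const ?_
    · exact h.1.mul (by fun_prop)
    · intro x hx; rw [← hx, h0]; simp
  have hgi : ∀ w : ℂ, w.re = 0 → IntegrableOn (fun u : ℝ => Complex.exp (-w * u) * g u) (Set.Ioi 0) := by
    intro w hw
    refine (h.intble (s := 3 + w) (by simp [hw])).congr_fun ?_ measurableSet_Ioi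
    intro u hu
    have hu' : 0 ≤ u := le_of_lt hu
    simp only [hg, hu', if_true]
    rw [mul_left_comm, ← Complex.exp_add]; ring_nf
  have hzero : ∀ u ∉ Set.Ioi (0:ℝ), g u = 0 := by
    intro u hu
    simp only [Set.mem_Ioi, not_lt] at hu
    simp only [hg]
    split_ifs with h1
    · have : u = 0 := le_antisymm hu h1
      subst this; simp [h0]
    · rfl
  have hint : Integrable g := by
    have := hgi 0 (by simp)
    simp only [neg_zero, zero_mul, Complex.exp_zero, one_mul] at this
    rw [← integrableOn_univ]
    exact this.of_forall_sdiff_eq_zero MeasurableSet.univ (fun x hx => hzero x hx.2)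
  have hF : 𝓕 g = 0 := by
    ext w
    rw [Real.fourier_real_eq_integral_exp_smul]
    simp only [smul_eq_mul, Pi.zero_apply]
    rw [← hG (3 + (2 * π * w : ℝ) * Complex.I) (by simp), ← h.2.2 (3 + (2 * π * w : ℝ) * Complex.I) (by simp)]
    rw [← MeasureTheory.setIntegral_eq_integral_of_forall_compl_eq_zero (s := Set.Ioi (0:ℝ))]
    · refine setIntegral_congr_fun measurableSet_Ioi ?_
      intro u hu
      have hu' : 0 ≤ u := le_of_lt hu
      simp only [hg, hu', if_true]
      rw [mul_left_comm, ← Complex.exp_add]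
      push_cast
      ring_nf
    · intro u hu; rw [hzero u hu, mul_zero]
  have hinv := hgc.fourierInv_fourier_eq hint (by rw [hF]; exact integrable_zero _ _ _)
  have h2 : g u = 0 := by
    rw [← hinv, hF]
    rw [Real.fourierInv_eq]; simp
  simp only [hg, hu, if_true] at h2
  exact (mul_eq_zero.1 h2).resolve_right (Complex.exp_ne_zero _)

open Finset Real

noncomputable def psiA (u : ℝ) : ℝ := ∑' m : ℕ, ArithmeticFunction.vonMangoldt (m+1) * max (1 - ((m+1 : ℕ) : ℝ) * Real.exp (-u)) 0

lemma lam_summable : Summable (fun m : ℕ => ArithmeticFunction.vonMangoldt (m+1) / ((m+1 : ℕ) : ℝ)^2) := by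
  have h := (ArithmeticFunction.LSeriesSummable_vonMangoldt (s := 2) (by norm_num)).norm
  have h2 := (summable_nat_add_iff 1).2 h
  refine h2.congr fun m => ?_
  rw [LSeries.term_of_ne_zero (by omega), norm_div]
  have : (((m + 1 : ℕ) : ℂ)) ^ (2:ℂ) = (((m+1:ℕ):ℂ))^2 := by
    rw [← Complex.cpow_natCast]; norm_num
  rw [this, Complex.norm_real, Real.norm_of_nonneg ArithmeticFunction.vonMangoldt_nonneg, norm_pow, Complex.norm_natCast]

lemma lam_bd (m : ℕ) (u : ℝ) (_hu : 0 ≤ u) : ArithmeticFunction.vonMangoldt (m+1) * max (1 - ((m+1 : ℕ) : ℝ) * Real.exp (-u)) 0 ≤ ArithmeticFunction.vonMangoldt (m+1) / ((m+1 : ℕ) : ℝ)^2 * Real.exp (2 * u) := by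
  have h0 : (0:ℝ) < ((m+1:ℕ):ℝ) := by positivity
  rw [div_mul_eq_mul_div, mul_div_assoc]
  refine mul_le_mul_of_nonneg_left ?_ ArithmeticFunction.vonMangoldt_nonneg
  rw [max_le_iff]
  refine ⟨?_, by positivity⟩
  by_cases h : ((m+1:ℕ):ℝ) ≤ Real.exp u
  · have : 1 ≤ Real.exp (2 * u) / ((m+1 : ℕ) : ℝ)^2 := by
      rw [one_le_div (by positivity), two_mul, Real.exp_add, ← sq]; gcongr
    have h3 : 0 ≤ ((m+1:ℕ):ℝ) * Real.exp (-u) := by positivity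
    linarith
  · push Not at h
    have : 1 ≤ ((m+1:ℕ):ℝ) * Real.exp (-u) := by
      rw [Real.exp_neg, ← div_eq_mul_inv, one_le_div (Real.exp_pos _)]; exact h.le
    have h3 : 0 ≤ Real.exp (2 * u) / ((m+1 : ℕ) : ℝ)^2 := by positivity
    linarith

lemma psiA_summable {u : ℝ} (hu : 0 ≤ u) : Summable (fun m : ℕ => ArithmeticFunction.vonMangoldt (m+1) * max (1 - ((m+1 : ℕ) : ℝ) * Real.exp (-u)) 0) :=
  Summable.of_nonneg_of_le (fun _ => mul_nonneg ArithmeticFunction.vonMangoldt_nonneg (le_max_right _ _)) (fun m => lam_bd m u hu) (lam_summable.mul_right _)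

lemma LTr_psiA : LTr (fun u => (psiA u : ℂ)) (fun s => Phi s / (s * (s + 1))) := by
  have h := LTr_sum (f := fun (m:ℕ) u => ((ArithmeticFunction.vonMangoldt (m+1) : ℝ) : ℂ) * ((max (1 - ((m+1 : ℕ):ℝ) * Real.exp (-u)) 0 : ℝ) : ℂ)) lam_summable (fun m => (LTr_max (m+1) (by omega)).smul _) ?_
  · refine h.congr (fun u => ?_) (fun s hs => ?_)
    · rw [psiA, Complex.ofReal_tsum]; simp only [Complex.ofReal_mul]
    · have hP := Phi_hasSum (s := s) (by rw [hs]; norm_num)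
      rw [← hasSum_nat_add_iff' 1] at hP
      simp only [sum_range_one, LSeries.term_zero, sub_zero] at hP
      have := hP.div_const (s * (s+1))
      rw [← this.tsum_eq]
      refine tsum_congr fun m => ?_
      rw [LSeries.term_of_ne_zero (by omega), Complex.cpow_neg]
      ring
  · intro m u hu
    rw [← Complex.ofReal_mul, Complex.norm_real, Real.norm_of_nonneg (mul_nonneg ArithmeticFunction.vonMangoldt_nonneg (le_max_right _ _))]
    exact lam_bd m u hu

lemma inv_sq_summable : Summable (fun k : ℕ => 1 / ((k:ℝ)+1)^2) := by
  have h := (summable_nat_add_iff 1).2 (Real.summable_one_div_nat_pow.2 (show 1 < 2 by norm_num))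
  refine h.congr fun k => by push_cast; rfl

noncomputable def trivA (u : ℝ) : ℝ := ∑' k : ℕ, 1 / (2 * ((k:ℝ)+1) * (2*k+1)) * (Real.exp (-u) - Real.exp (-(2*k+2)*u))

lemma triv_bd (k : ℕ) {u : ℝ} (hu : 0 ≤ u) : 0 ≤ 1 / (2 * ((k:ℝ)+1) * (2*k+1)) * (Real.exp (-u) - Real.exp (-(2*k+2)*u)) ∧ 1 / (2 * ((k:ℝ)+1) * (2*k+1)) * (Real.exp (-u) - Real.exp (-(2*k+2)*u)) ≤ 1 / (2 * ((k:ℝ)+1) * (2*k+1)) * Real.exp (-u) := by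
  have h1 : Real.exp (-(2*k+2)*u) ≤ Real.exp (-u) := by
    gcongr
    have : 0 ≤ (k:ℝ) * u := by positivity
    nlinarith
  have h2 := Real.exp_pos (-(2*k+2)*u)
  constructor
  · exact mul_nonneg (by positivity) (by linarith)
  · gcongr; linarith

lemma triv_summable : Summable (fun k : ℕ => 1 / (2 * ((k:ℝ)+1) * (2*k+1))) := by
  refine Summable.of_nonneg_of_le (fun k => by positivity) (fun k => ?_) inv_sq_summable
  rw [div_le_div_iff₀ (by positivity) (by positivity)]
  have : (0:ℝ) ≤ k := by positivity
  nlinarith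

lemma LTr_trivA : LTr (fun u => (trivA u : ℂ)) (fun s => (Complex.digamma (s/2+1) + Real.eulerMascheroniConstant) / 2 / (s * (s + 1))) := by
  have h := LTr_sum (f := fun (k:ℕ) u => (1 / (2 * ((k:ℂ)+1) * (2*k+1))) * (Complex.exp (-1 * u) + (-1) * Complex.exp (-(2*k+2)*u))) triv_summable (fun k => ((LTr_exp (-1) (by norm_num)).add ((LTr_exp (-(2*k+2)) (by simp; linarith)).smul (-1))).smul _) ?_
  · refine h.congr (fun u => ?_) (fun s hs => ?_)
    · rw [trivA, Complex.ofReal_tsum]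
      refine tsum_congr fun k => ?_
      push_cast
      ring_nf
    · have hP := (digamma_hasSum (z := s/2+1) (by simp; linarith)).div_const 2 |>.div_const (s * (s+1))
      rw [← hP.tsum_eq]
      refine tsum_congr fun k => ?_
      have a1 : s ≠ 0 := by rintro rfl; norm_num at hs
      have a2 : s + 1 ≠ 0 := by
        intro h; have := congrArg Complex.re h; simp [hs] at this; norm_num at this
      have a3 : s + 2 * k + 2 ≠ 0 := by
        intro h; have := congrArg Complex.re h; simp [hs] at this; 
        have : (0:ℝ) ≤ k := by positivity
        linarith
      have a4 : (k:ℂ) + 1 ≠ 0 := by exact_mod_cast Nat.succ_ne_zero k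
      have a5 : 2 * (k:ℂ) + 1 ≠ 0 := by exact_mod_cast Nat.succ_ne_zero (2*k)
      have e1 : s - -1 = s + 1 := by ring
      have e2 : s - -(2*k+2) = s + 2*k+2 := by ring
      have e3 : s/2 + 1 + k = (s + 2*k+2)/2 := by ring
      rw [e1, e2, e3]
      clear e1 e2 e3 hP h
      generalize (k:ℂ) = K at *
      obtain ⟨q, hq⟩ : ∃ q, q = s + 2 * K + 2 := ⟨_, rfl⟩
      obtain ⟨r, hr⟩ : ∃ r, r = 2 * K + 1 := ⟨_, rfl⟩
      obtain ⟨w, hw⟩ : ∃ w, w = K + 1 := ⟨_, rfl⟩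
      rw [← hq] at a3 ⊢
      rw [← hr] at a5 ⊢
      rw [← hw] at a4 ⊢
      field_simp
      rw [hq, hr, hw]
      ring
  · intro k u hu
    have e : (1 / (2 * ((k:ℂ)+1) * (2*k+1))) * (Complex.exp (-1 * u) + (-1) * Complex.exp (-(2*k+2)*u)) = ((1 / (2 * ((k:ℝ)+1) * (2*k+1)) * (Real.exp (-u) - Real.exp (-(2*k+2)*u)) : ℝ) : ℂ) := by
      push_cast; ring_nf
    have hb := triv_bd k hu
    rw [e, Complex.norm_real, Real.norm_of_nonneg hb.1]
    refine hb.2.trans ?_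
    gcongr
    linarith

lemma zero_ne {ρ : ℂ} (h : xi ρ = 0) : ρ ≠ 0 ∧ ρ + 1 ≠ 0 := by
  have := xi_zero_strip h
  constructor
  · rintro rfl; norm_num at this
  · intro h; have := congrArg Complex.re h; simp at this; linarith

noncomputable def zsumA (u : ℝ) : ℂ := ∑' ρ : ℂ, (mult ρ / (ρ * (ρ + 1)) : ℂ) * (Complex.exp (ρ * u) - Complex.exp (-u))

lemma zcoef_le {ρ : ℂ} (h : xi ρ = 0) : ‖(mult ρ / (ρ * (ρ + 1)) : ℂ)‖ ≤ 1.05 * wt ρ := by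
  have hn := zero_norm_sq h
  have hne := zero_ne h
  have hst := xi_zero_strip h
  have h1 : ‖ρ‖ ≤ ‖ρ + 1‖ := by
    rw [Complex.norm_def, Complex.norm_def]
    apply Real.sqrt_le_sqrt
    rw [Complex.normSq_apply, Complex.normSq_apply]; simp; nlinarith
  rw [norm_div, Complex.norm_real, Real.norm_of_nonneg (mult_nonneg _), norm_mul, wt]
  have h2 : (20/21) * (1 + ρ.im^2) ≤ ‖ρ‖ * ‖ρ + 1‖ := by
    refine hn.trans ?_
    rw [sq]; gcongr
  rw [div_le_iff₀ (by have := norm_pos_iff.2 hne.1; have := norm_pos_iff.2 hne.2; positivity)]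
  have hm := mult_nonneg ρ
  calc mult ρ = 1.05 * (mult ρ / (1 + ρ.im^2)) * ((20/21) * (1 + ρ.im^2)) := by field_simp; ring
    _ ≤ _ := by gcongr

lemma LTr_zsumA : LTr zsumA (fun s => (logDeriv xi s + B0) / (s * (s + 1))) := by
  have hct : (Function.support wt).Countable := wt_summable_le.1.countable_support
  have : Countable (Function.support wt) := hct.to_subtype
  have hz : ∀ ρ : Function.support wt, xi ρ = 0 := fun ρ => by
    by_contra h; exact ρ.2 (wt_eq_zero h)
  have hsup : ∀ ρ, ρ ∉ Function.support wt → mult ρ = 0 := by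
    intro ρ h
    rw [Function.notMem_support, wt, div_eq_zero_iff] at h
    rcases h with h | h
    · exact h
    · nlinarith [sq_nonneg ρ.im]
  have h := LTr_sum (ι := Function.support wt) (b := fun ρ => 2.1 * wt ρ) (f := fun ρ u => (mult ρ / (ρ * (ρ + 1)) : ℂ) * (Complex.exp (ρ * u) + (-1) * Complex.exp (-1 * u))) ((wt_summable_le.1.subtype _).mul_left _) (fun ρ => ((LTr_exp ρ (by have := xi_zero_strip (hz ρ); linarith)).add ((LTr_exp (-1) (by norm_num)).smul (-1))).smul _) ?_
  · refine h.congr (fun u => ?_) (fun s hs => ?_)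
    · rw [zsumA]
      rw [← tsum_subtype_eq_of_support_subset (s := Function.support wt)]
      · refine tsum_congr fun ρ => ?_
        ring_nf
      · intro ρ hρ
        by_contra hc
        simp [hsup ρ hc] at hρ
    · have hP := (xi_hasSum (s := s) (by linarith)).div_const (s * (s+1))
      rw [← hP.tsum_eq]
      rw [← tsum_subtype_eq_of_support_subset (s := Function.support wt)]
      · refine tsum_congr fun ρ => ?_
        have hne := zero_ne (hz ρ)
        have hst := xi_zero_strip (hz ρ)
        have a1 : s ≠ 0 := by rintro rfl; norm_num at hs
        have a2 : s + 1 ≠ 0 := by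
          intro h; have := congrArg Complex.re h; simp [hs] at this; norm_num at this
        have a3 : s - ρ ≠ 0 := by
          intro h; have := congrArg Complex.re h; simp [hs] at this; linarith
        have a4 := hne.1
        have a5 := hne.2
        rw [show s - -1 = s + 1 by ring]
        field_simp
        ring
      · intro ρ hρ
        by_contra hc
        simp [hsup ρ hc] at hρ
  · intro ρ u hu
    have hst := xi_zero_strip (hz ρ)
    rw [norm_mul]
    have h1 : ‖Complex.exp (ρ * u) + (-1) * Complex.exp (-1 * u)‖ ≤ 2 * Real.exp (2 * u) := by
      refine (norm_add_le _ _).trans ?_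
      rw [norm_mul, Complex.norm_exp, Complex.norm_exp]
      simp
      have e1 : Real.exp ((ρ:ℂ).re * u) ≤ Real.exp (2 * u) := by gcongr; linarith
      have e2 : Real.exp (-u) ≤ Real.exp (2 * u) := by gcongr; linarith
      linarith
    have h2 := zcoef_le (hz ρ)
    have h3 := wt_nonneg ρ
    calc _ ≤ 1.05 * wt ρ * (2 * Real.exp (2 * u)) := by gcongr
      _ = _ := by ring

theorem explicit {u : ℝ} (hu : 0 ≤ u) :
    (psiA u : ℂ) = ((Real.exp u / 2 - 1 + Real.exp (-u) / 2 + (1 - Real.log (2 * π)) * (1 - Real.exp (-u)) + trivA u : ℝ) : ℂ) - zsumA u := by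
  set c : ℂ := ((1 - Real.log (2 * π) : ℝ) : ℂ) with hc
  have hD := (LTr_psiA.add ((LTr_exp 1 (by norm_num)).smul (-1/2))).add (((LTr_exp 0 (by norm_num)).smul (1 - c)).add (((LTr_exp (-1) (by norm_num)).smul (c - 1/2)).add ((LTr_trivA.smul (-1)).add LTr_zsumA)))
  have hc2 : c = B0 - Real.log π / 2 - Real.eulerMascheroniConstant / 2 := by
    rw [hc, B0, Real.log_mul (by norm_num) Real.pi_ne_zero, Real.log_mul (by norm_num) Real.pi_ne_zero, show (4:ℝ) = 2^2 by norm_num, Real.log_pow]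
    push_cast
    ring
  have := LTr_unique hD ?_ ?_ hu
  · have e0 : Complex.exp (0 * u) = 1 := by simp
    rw [e0] at this
    push_cast
    rw [← sub_eq_zero, ← this]
    rw [hc]
    push_cast
    ring_nf
  · intro s hs
    rw [Phi_eq (by linarith)]
    have a1 : s ≠ 0 := by rintro rfl; norm_num at hs
    have a2 : s + 1 ≠ 0 := by
      intro h; have := congrArg Complex.re h; simp [hs] at this; norm_num at this
    have a3 : s - 1 ≠ 0 := by
      intro h; have := congrArg Complex.re h; simp [hs] at this; norm_num at this
    rw [hc2, show s - -1 = s + 1 by ring, sub_zero]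
    field_simp
    ring
  · have e1 : psiA 0 = 0 := by
      rw [psiA]
      convert tsum_zero with m
      rw [max_eq_right]; simp
      simp
    have e2 : trivA 0 = 0 := by rw [trivA]; simp
    have e3 : zsumA 0 = 0 := by rw [zsumA]; simp
    simp [e1, e2, e3]
    ring

open Finset Real

noncomputable def zc (ρ : ℂ) : ℂ := (mult ρ / (ρ * (ρ + 1)) : ℂ)

lemma zc_zero {ρ : ℂ} (h : xi ρ ≠ 0) : zc ρ = 0 := by simp [zc, mult_eq_zero h]

lemma zc_le (ρ : ℂ) : ‖zc ρ‖ ≤ 1.05 * wt ρ := by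
  by_cases h : xi ρ = 0
  · exact zcoef_le h
  · simp [zc_zero h, wt_eq_zero h]

lemma zc_le' (ρ : ℂ) (hβ : 1/2 ≤ ρ.re) : ‖zc ρ‖ ≤ wt ρ := by
  by_cases h : xi ρ = 0
  · have him := zero_im_sq h
    have hne := zero_ne h
    have hst := xi_zero_strip h
    rw [zc, norm_div, Complex.norm_real, Real.norm_of_nonneg (mult_nonneg _), wt]
    refine div_le_div_of_nonneg_left (mult_nonneg _) (by positivity) ?_
    refine abs_le_of_sq_le_sq' ?_ (norm_nonneg _) |>.2
    rw [norm_mul, mul_pow, ← Complex.normSq_eq_norm_sq, ← Complex.normSq_eq_norm_sq, Complex.normSq_apply, Complex.normSq_apply]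
    simp
    have e1 : 1/4 + ρ.im^2 ≤ ρ.re * ρ.re + ρ.im * ρ.im := by nlinarith
    have e2 : 9/4 + ρ.im^2 ≤ (ρ.re+1) * (ρ.re+1) + ρ.im * ρ.im := by nlinarith
    calc (1 + ρ.im^2)^2 ≤ (1/4 + ρ.im^2) * (9/4 + ρ.im^2) := by nlinarith
      _ ≤ _ := mul_le_mul e1 e2 (by positivity) (by nlinarith [sq_nonneg ρ.im, sq_nonneg ρ.re])
  · simp [zc_zero h, wt_eq_zero h]

lemma wt_one_sub (ρ : ℂ) : wt (1 - ρ) = wt ρ := by simp [wt, mult_one_sub]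

lemma xi_re_bd {ρ : ℂ} (h : wt ρ ≠ 0) : 0 < ρ.re ∧ ρ.re < 1 := by
  apply xi_zero_strip
  by_contra hc; exact h (wt_eq_zero hc)

/-- the quantity summed over zeros -/
noncomputable def eps (u : ℝ) : ℝ := ∑' ρ : ℂ, wt ρ * (Real.exp ((max ρ.re (1 - ρ.re) - 1) * u) + 1.05 * Real.exp (-u/2))

lemma eps_term_le (ρ : ℂ) {u : ℝ} (hu : 0 ≤ u) : wt ρ * (Real.exp ((max ρ.re (1 - ρ.re) - 1) * u) + 1.05 * Real.exp (-u/2)) ≤ 2.05 * wt ρ := by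
  by_cases h : wt ρ = 0
  · simp [h]
  · have hst := xi_re_bd h
    have h1 : Real.exp ((max ρ.re (1 - ρ.re) - 1) * u) ≤ 1 := by
      rw [Real.exp_le_one_iff]
      refine mul_nonpos_of_nonpos_of_nonneg ?_ hu
      rw [sub_nonpos, max_le_iff]; constructor <;> linarith
    have h2 : Real.exp (-u/2) ≤ 1 := by rw [Real.exp_le_one_iff]; linarith
    have := wt_nonneg ρ
    nlinarith

lemma eps_summable {u : ℝ} (hu : 0 ≤ u) : Summable (fun ρ : ℂ => wt ρ * (Real.exp ((max ρ.re (1 - ρ.re) - 1) * u) + 1.05 * Real.exp (-u/2))) :=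
  Summable.of_nonneg_of_le (fun ρ => mul_nonneg (wt_nonneg ρ) (by positivity)) (fun ρ => eps_term_le ρ hu) (wt_summable_le.1.mul_left _)

lemma zc_exp_summable {u : ℝ} (hu : 0 ≤ u) : Summable (fun ρ : ℂ => ‖zc ρ‖ * Real.exp ((ρ.re - 1) * u)) := by
  refine Summable.of_nonneg_of_le (fun ρ => by positivity) (fun ρ => ?_) (wt_summable_le.1.mul_left 1.05)
  by_cases h : xi ρ = 0
  · have hst := xi_zero_strip h
    have h1 : Real.exp ((ρ.re - 1) * u) ≤ 1 := by
      rw [Real.exp_le_one_iff]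
      exact mul_nonpos_of_nonpos_of_nonneg (by linarith) hu
    have := zc_le ρ
    calc _ ≤ ‖zc ρ‖ * 1 := by gcongr
      _ ≤ _ := by linarith
  · simp [zc_zero h, wt_eq_zero h]

lemma two_zsum_le {u : ℝ} (hu : 0 ≤ u) : 2 * ∑' ρ : ℂ, ‖zc ρ‖ * Real.exp ((ρ.re - 1) * u) ≤ eps u := by
  have hs := zc_exp_summable hu
  have hs2 : Summable (fun ρ : ℂ => ‖zc (1 - ρ)‖ * Real.exp (((1 - ρ).re - 1) * u)) :=
    (Equiv.subLeft (1:ℂ)).summable_iff (f := fun ρ : ℂ => ‖zc ρ‖ * Real.exp ((ρ.re - 1) * u)) |>.2 hs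
  have he : ∑' ρ : ℂ, ‖zc (1 - ρ)‖ * Real.exp (((1 - ρ).re - 1) * u) = ∑' ρ : ℂ, ‖zc ρ‖ * Real.exp ((ρ.re - 1) * u) :=
    (Equiv.subLeft (1:ℂ)).tsum_eq (fun ρ : ℂ => ‖zc ρ‖ * Real.exp ((ρ.re - 1) * u))
  rw [two_mul]
  nth_rewrite 2 [← he]
  rw [← hs.tsum_add hs2, eps]
  refine (hs.add hs2).tsum_le_tsum (fun ρ => ?_) (eps_summable hu)
  have aux : ∀ ρ : ℂ, 1/2 ≤ ρ.re → ‖zc ρ‖ * Real.exp ((ρ.re - 1) * u) + ‖zc (1 - ρ)‖ * Real.exp (((1 - ρ).re - 1) * u) ≤ wt ρ * (Real.exp ((max ρ.re (1 - ρ.re) - 1) * u) + 1.05 * Real.exp (-u/2)) := by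
    intro ρ hρ
    have h1 := zc_le' ρ hρ
    have h2 := zc_le (1 - ρ)
    rw [wt_one_sub] at h2
    rw [max_eq_left (by linarith)]
    have hw := wt_nonneg ρ
    have h3 : Real.exp (((1 - ρ).re - 1) * u) ≤ Real.exp (-u/2) := by
      gcongr
      simp; nlinarith
    calc _ ≤ wt ρ * Real.exp ((ρ.re - 1) * u) + 1.05 * wt ρ * Real.exp (-u/2) := by gcongr
      _ = _ := by ring
  rcases le_total (1/2) ρ.re with h | h
  · exact aux ρ h
  · have := aux (1 - ρ) (by simp; linarith)
    rw [wt_one_sub, sub_sub_cancel, show 1 - (1 - ρ).re = ρ.re by simp, show (1 - ρ).re = 1 - ρ.re by simp, max_comm] at this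
    rw [show (1 - ρ).re = 1 - ρ.re by simp]
    linarith

lemma wt_sum_le : ∑' ρ, wt ρ ≤ 0.04624 := wt_summable_le.2.trans B0_le

lemma triv_sum_le : ∑' k : ℕ, 1 / (2 * ((k:ℝ)+1) * (2*k+1)) ≤ 1 := by
  have h : HasSum (fun k : ℕ => 1 / ((k:ℝ)+1)^2) (π^2/6) := by
    have h := hasSum_zeta_two
    rw [← hasSum_nat_add_iff' 1] at h
    simpa using h
  have h2 := (h.mul_left (1/2)).tsum_eq
  have hp : π^2/6 ≤ 2 := by nlinarith [Real.pi_lt_d2, Real.pi_pos]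
  have : ∑' k : ℕ, 1 / (2 * ((k:ℝ)+1) * (2*k+1)) ≤ ∑' k : ℕ, (1/2) * (1 / ((k:ℝ)+1)^2) := by
    refine triv_summable.tsum_le_tsum (fun k => ?_) (inv_sq_summable.mul_left _)
    rw [div_mul_div_comm, div_le_div_iff₀ (by positivity) (by positivity)]
    have : (0:ℝ) ≤ k := by positivity
    nlinarith
  linarith

lemma psiA_le {u : ℝ} (hu : 5 ≤ u) : psiA u ≤ Real.exp u / 2 * (1 + eps u) - 1.8 := by
  have hu0 : 0 ≤ u := by linarith
  have hE := congrArg Complex.re (explicit hu0)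
  rw [Complex.sub_re, Complex.ofReal_re, Complex.ofReal_re] at hE
  have hx : Real.exp (-u) ≤ 0.0068 := by
    have : Real.exp (-u) ≤ Real.exp (-5) := by gcongr
    refine this.trans ?_
    rw [Real.exp_neg, inv_le_comm₀ (Real.exp_pos _) (by norm_num)]
    have h := Real.exp_one_gt_d9
    have : Real.exp 5 = Real.exp 1 ^ 5 := by rw [← Real.exp_nat_mul]; norm_num
    rw [this]
    have h2 : 2.718 ^ 5 ≤ Real.exp 1 ^ 5 := by gcongr; linarith
    norm_num at h2 ⊢
    linarith
  have hx0 := Real.exp_pos (-u)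
  have ht : trivA u ≤ Real.exp (-u) := by
    rw [trivA]
    have hs : Summable (fun k : ℕ => 1 / (2 * ((k:ℝ)+1) * (2*k+1)) * (Real.exp (-u) - Real.exp (-(2*k+2)*u))) :=
      Summable.of_nonneg_of_le (fun k => (triv_bd k hu0).1) (fun k => (triv_bd k hu0).2) (triv_summable.mul_right _)
    refine (hs.tsum_le_tsum (fun k => (triv_bd k hu0).2) (triv_summable.mul_right _)).trans ?_
    rw [tsum_mul_right]
    have := triv_sum_le
    nlinarith
  have hzs : Summable (fun ρ : ℂ => ‖zc ρ‖) :=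
    Summable.of_nonneg_of_le (fun ρ => norm_nonneg _) zc_le (wt_summable_le.1.mul_left _)
  have hze := zc_exp_summable hu0
  have hz : -(zsumA u).re ≤ Real.exp u * (∑' ρ : ℂ, ‖zc ρ‖ * Real.exp ((ρ.re - 1) * u)) + 0.05 * Real.exp (-u) := by
    have h1 : ‖zsumA u‖ ≤ Real.exp u * (∑' ρ : ℂ, ‖zc ρ‖ * Real.exp ((ρ.re - 1) * u)) + 0.05 * Real.exp (-u) := by
      have hsum2 := (hze.mul_left (Real.exp u)).add (hzs.mul_right (Real.exp (-u)))
      have hb : ∀ ρ : ℂ, ‖(mult ρ / (ρ * (ρ + 1)) : ℂ) * (Complex.exp (ρ * u) - Complex.exp (-u))‖ ≤ Real.exp u * (‖zc ρ‖ * Real.exp ((ρ.re - 1) * u)) + ‖zc ρ‖ * Real.exp (-u) := by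
        intro ρ
        change ‖zc ρ * _‖ ≤ _
        rw [norm_mul]
        have e1 : Real.exp u * (‖zc ρ‖ * Real.exp ((ρ.re - 1) * u)) = ‖zc ρ‖ * Real.exp (ρ.re * u) := by
          rw [mul_left_comm, ← Real.exp_add]; ring_nf
        rw [e1, ← mul_add]
        refine mul_le_mul_of_nonneg_left ?_ (norm_nonneg _)
        refine (norm_sub_le _ _).trans ?_
        rw [Complex.norm_exp, Complex.norm_exp]
        simp
      refine (tsum_of_norm_bounded hsum2.hasSum hb).trans ?_
      rw [Summable.tsum_add (hze.mul_left _) (hzs.mul_right _), tsum_mul_left, tsum_mul_right]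
      have h2 : ∑' ρ, ‖zc ρ‖ ≤ 0.05 := by
        refine (hzs.tsum_le_tsum zc_le (wt_summable_le.1.mul_left _)).trans ?_
        rw [tsum_mul_left]
        have := wt_sum_le
        linarith
      gcongr
    have := abs_le.1 ((Complex.abs_re_le_norm (zsumA u)).trans h1)
    linarith [this.1]
  have h2z := two_zsum_le hu0
  have hpos := Real.exp_pos u
  have h3 : Real.exp u * (∑' ρ : ℂ, ‖zc ρ‖ * Real.exp ((ρ.re - 1) * u)) ≤ Real.exp u / 2 * eps u := by
    nlinarith
  have hc : 1.835 ≤ Real.log (2 * π) := by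
    rw [Real.log_mul (by norm_num) Real.pi_ne_zero]
    have := log_pi_ge
    have := Real.log_two_gt_d9
    linarith
  have h4 : (1 - Real.log (2 * π)) * (1 - Real.exp (-u)) ≤ -0.835 * (1 - Real.exp (-u)) := by
    apply mul_le_mul_of_nonneg_right <;> linarith
  linarith

lemma eps_le {u : ℝ} (hu : 0 ≤ u) : eps u ≤ 0.04624 + 0.04856 * Real.exp (-u/2) := by
  have h : eps u ≤ ∑' ρ, wt ρ * (1 + 1.05 * Real.exp (-u/2)) := by
    refine (eps_summable hu).tsum_le_tsum (fun ρ => ?_) (wt_summable_le.1.mul_right _)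
    by_cases h : wt ρ = 0
    · simp [h]
    · have hst := xi_re_bd h
      have h1 : Real.exp ((max ρ.re (1 - ρ.re) - 1) * u) ≤ 1 := by
        rw [Real.exp_le_one_iff]
        refine mul_nonpos_of_nonpos_of_nonneg ?_ hu
        rw [sub_nonpos, max_le_iff]; constructor <;> linarith
      have := wt_nonneg ρ
      gcongr
  rw [tsum_mul_right] at h
  have := wt_sum_le
  have h2 := Real.exp_pos (-u/2)
  nlinarith

lemma psiA_le_one {u : ℝ} (hu : 5 ≤ u) : psiA u ≤ Real.exp u / 2 * (1 + 0.0465) := by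
  have h1 := psiA_le hu
  have h2 := eps_le (u := u) (by linarith)
  obtain ⟨z, hz⟩ : ∃ z, z = Real.exp (u/2) := ⟨_, rfl⟩
  have hz0 : 0 < z := hz ▸ Real.exp_pos _
  have e1 : Real.exp u = z^2 := by rw [hz, ← Real.exp_nat_mul]; ring_nf
  have e2 : Real.exp (-u/2) = 1/z := by rw [hz, neg_div, Real.exp_neg, one_div]
  rw [e2] at h2
  rw [e1] at h1 ⊢
  have h3 : z^2/2 * (1 + eps u) ≤ z^2/2 * (1 + (0.04624 + 0.04856 * (1/z))) := by gcongr
  have h4 : z^2/2 * (1 + (0.04624 + 0.04856 * (1/z))) = z^2/2 * 1.04624 + 0.02428 * z := by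
    field_simp; ring
  nlinarith [sq_nonneg (z - 93)]

lemma eps_le_two {u : ℝ} (hu : 60 ≤ u) : eps u ≤ (0.794 * Real.log (5 * u) - 1.547) / u := by
  have hu0 : 0 ≤ u := by linarith
  set T := 5 * u with hT
  have hT3 : 300 ≤ T := by linarith
  have hlT := log_T_ge hT3
  obtain ⟨δ, hδ⟩ : ∃ δ, δ = 0.0717 / (2.5 * (Real.log T - 2)) := ⟨_, rfl⟩
  have hδ0 : 0 < δ := by rw [hδ]; apply div_pos (by norm_num); linarith
  set q := Real.exp (-δ * u) + 1.05 * Real.exp (-u/2) with hq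
  have hq0 : 0 ≤ q := by positivity
  have hst : Summable (fun ρ : ℂ => (if T < |ρ.im| then wt ρ else 0)) := by
    refine Summable.of_nonneg_of_le ?_ ?_ wt_summable_le.1
    · intro ρ; split_ifs; exacts [wt_nonneg ρ, le_rfl]
    · intro ρ; split_ifs; exacts [le_rfl, wt_nonneg ρ]
  have h : eps u ≤ ∑' ρ : ℂ, (wt ρ * q + (if T < |ρ.im| then wt ρ else 0)) := by
    refine (eps_summable hu0).tsum_le_tsum (fun ρ => ?_) ((wt_summable_le.1.mul_right _).add hst)
    by_cases h : xi ρ = 0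
    · have hs := xi_zero_strip h
      have hw := wt_nonneg ρ
      split_ifs with hc
      · have h1 : Real.exp ((max ρ.re (1 - ρ.re) - 1) * u) ≤ 1 := by
          rw [Real.exp_le_one_iff]
          refine mul_nonpos_of_nonpos_of_nonneg ?_ hu0
          rw [sub_nonpos, max_le_iff]; constructor <;> linarith
        have h2 : Real.exp ((max ρ.re (1 - ρ.re) - 1) * u) + 1.05 * Real.exp (-u/2) ≤ q + 1 := by
          have := Real.exp_pos (-δ * u)
          rw [hq]; linarith
        calc _ ≤ wt ρ * (q + 1) := by gcongr
          _ = _ := by ring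
      · push Not at hc
        have a1 := zero_free hT3 h hc
        have h' : xi (1 - ρ) = 0 := by rw [xi_one_sub, h]
        have a2 := zero_free hT3 h' (by simpa using hc)
        rw [← hδ] at a1 a2
        simp at a2
        have : max ρ.re (1 - ρ.re) - 1 ≤ -δ := by
          rw [sub_le_iff_le_add, max_le_iff]; constructor <;> linarith
        rw [add_zero, hq]
        gcongr
    · simp [wt_eq_zero h]
  rw [Summable.tsum_add (wt_summable_le.1.mul_right _) hst, tsum_mul_right] at h
  have ht := tail_le hT3
  have hw := wt_sum_le
  have hwq : (∑' ρ, wt ρ) * q ≤ 0.04624 * q := by gcongr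
  have hexp : Real.exp (-δ * u) ≤ 1 / (2.7182 * (δ * u)) := by
    have h1 : δ * u ≤ Real.exp (δ * u - 1) := by have := Real.add_one_le_exp (δ * u - 1); linarith
    have h2 : Real.exp (δ * u) = Real.exp 1 * Real.exp (δ * u - 1) := by rw [← Real.exp_add]; ring_nf
    have h3 := Real.exp_one_gt_d9
    have hp : 0 < δ * u := by positivity
    rw [neg_mul, Real.exp_neg, ← one_div, h2]
    gcongr
    linarith
  have hexp2 : 1 / (2.7182 * (δ * u)) = (2.5 / (0.0717 * 2.7182)) * (Real.log T - 2) / u := by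
    rw [hδ]
    have : Real.log T - 2 ≠ 0 := by linarith
    field_simp
  have hsm : Real.exp (-u/2) ≤ 0.0001 / u := by
    rw [neg_div, Real.exp_neg, ← one_div, div_le_div_iff₀ (Real.exp_pos _) (by linarith)]
    have h1 := Real.pow_div_factorial_le_exp (x := u/2) (by linarith) 6
    norm_num [Nat.factorial] at h1
    have h2 : (u/2)^6 = (u/2)^5 * (u/2) := by ring
    have h3 : (30:ℝ)^5 ≤ (u/2)^5 := by gcongr; linarith
    have h4 : (30:ℝ)^5 * (u/2) ≤ (u/2)^6 := by rw [h2]; gcongr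
    norm_num at h4
    linarith
  have htail : (1 / (T - 1)) * (Real.log ((T + 2) / (2 * π)) + 4 / (T - 1)) ≤ 0.2007 * (Real.log T - 1.81) / u := by
    have b1 : Real.log ((T + 2) / (2 * π)) ≤ Real.log T + 0.007 - 1.835 := by
      rw [Real.log_div (by positivity) (by positivity), Real.log_mul (by norm_num) Real.pi_ne_zero]
      have h1 : Real.log (T + 2) ≤ Real.log (T * 1.007) := Real.log_le_log (by linarith) (by linarith)
      rw [Real.log_mul (by linarith) (by norm_num)] at h1
      have := Real.log_le_sub_one_of_pos (show (0:ℝ) < 1.007 by norm_num)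
      have := log_pi_ge
      have := Real.log_two_gt_d9
      linarith
    have b2 : 4 / (T - 1) ≤ 0.0134 := by
      rw [div_le_iff₀ (by linarith)]; linarith
    have b3 : 1 / (T - 1) ≤ 0.2007 / u := by
      rw [div_le_div_iff₀ (by linarith) (by linarith)]; linarith
    calc _ ≤ (0.2007 / u) * (Real.log T - 1.81) := by
          apply mul_le_mul b3 (by linarith) _ (by positivity)
          have : 0 ≤ Real.log ((T + 2) / (2 * π)) := by
            apply Real.log_nonneg
            rw [le_div_iff₀ (by positivity)]
            have := Real.pi_lt_d2
            linarith
          have : 0 ≤ 4 / (T - 1) := div_nonneg (by norm_num) (by linarith)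
          linarith
      _ = _ := by ring
  have hfin : 0.04624 * q ≤ 0.5933 * (Real.log T - 2) / u + 0.00001 / u := by
    have c1 : 0.04624 * ((2.5 / (0.0717 * 2.7182)) * (Real.log T - 2) / u) ≤ 0.5933 * (Real.log T - 2) / u := by
      have : 0 ≤ (Real.log T - 2) / u := div_nonneg (by linarith) hu0
      rw [mul_div_assoc, mul_div_assoc, ← mul_assoc]
      gcongr
      norm_num
    rw [hq]
    have c2 : 0.04624 * (1.05 * (0.0001 / u)) ≤ 0.00001 / u := by
      have : 0 ≤ 1 / u := by positivity
      rw [div_eq_mul_one_div, div_eq_mul_one_div 0.00001]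
      linarith
    linarith
  have : (0.794 * Real.log T - 1.547) / u - (0.5933 * (Real.log T - 2) / u + 0.00001 / u + 0.2007 * (Real.log T - 1.81) / u) = 0.002857 / u := by
    field_simp; ring
  have h9 : 0 ≤ 0.002857 / u := by positivity
  linarith

open Finset Real


noncomputable def PiS (y : ℝ) : ℝ := ∑ p ∈ (range (⌊y⌋₊ + 1)).filter Nat.Prime, (y - p)

lemma sum_ge (n : ℕ) {y : ℝ} (hy : 0 ≤ y) : n * y - PiS y ≤ ∑ i ∈ Icc 1 n, (nthPrime i : ℝ) := by
  have h1 : ∑ i ∈ Icc 1 n, (y - (nthPrime i : ℝ)) = n * y - ∑ i ∈ Icc 1 n, (nthPrime i : ℝ) := by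
    rw [Finset.sum_sub_distrib]; simp
  have h2 : ∑ i ∈ Icc 1 n, (y - (nthPrime i : ℝ)) ≤ PiS y := by
    have hinj : Set.InjOn nthPrime (Icc 1 n : Finset ℕ) := by
      intro a ha b hb hab
      simp only [coe_Icc, Set.mem_Icc] at ha hb
      have := Nat.nth_injective Nat.infinite_setOfPred_prime hab
      omega
    calc ∑ i ∈ Icc 1 n, (y - (nthPrime i : ℝ)) = ∑ p ∈ (Icc 1 n).image nthPrime, (y - (p:ℝ)) := by
          rw [Finset.sum_image hinj]
      _ ≤ ∑ p ∈ ((Icc 1 n).image nthPrime).filter (fun p : ℕ => (p:ℝ) ≤ y), (y - (p:ℝ)) := by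
          rw [Finset.sum_filter]
          refine Finset.sum_le_sum fun p _ => ?_
          split_ifs with h
          · exact le_rfl
          · push Not at h; linarith
      _ ≤ PiS y := by
          refine Finset.sum_le_sum_of_subset_of_nonneg ?_ ?_
          · intro p hp
            simp only [mem_filter, mem_image, mem_range] at hp ⊢
            obtain ⟨⟨i, _, rfl⟩, h⟩ := hp
            exact ⟨Nat.lt_succ_of_le (Nat.le_floor h), Nat.prime_nth_prime _⟩
          · intro p hp _
            simp only [mem_filter, mem_range] at hp
            have : (p:ℝ) ≤ y := (Nat.le_floor_iff hy).1 (Nat.lt_succ_iff.1 hp.1)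
            linarith
  linarith

/-- weighted sum bound for a finite set of primes -/
lemma theta_le (s : Finset ℕ) (hs : ∀ p ∈ s, p.Prime) {t : ℝ} (ht : 1 ≤ t) :
    ∑ p ∈ s, Real.log p * max (t - p) 0 ≤ t * psiA (Real.log t) := by
  have ht0 : 0 < t := by linarith
  have hsum := psiA_summable (Real.log_nonneg ht)
  have hinj : Set.InjOn (fun p : ℕ => p - 1) s := by
    intro a ha b hb hab
    have := (hs a ha).pos; have := (hs b hb).pos
    simp only at hab
    omega
  have h := hsum.sum_le_tsum (s.image (fun p => p - 1)) (fun m _ => mul_nonneg ArithmeticFunction.vonMangoldt_nonneg (le_max_right _ _))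
  rw [Finset.sum_image hinj] at h
  rw [psiA]
  refine le_trans (le_of_eq ?_) (mul_le_mul_of_nonneg_left h ht0.le)
  rw [Finset.mul_sum]
  refine Finset.sum_congr rfl fun p hp => ?_
  have hp1 : p - 1 + 1 = p := Nat.sub_add_cancel (hs p hp).pos
  rw [hp1, ArithmeticFunction.vonMangoldt_apply_prime (hs p hp), Real.exp_neg, Real.exp_log ht0]
  have : max (t - p) 0 = t * max (1 - (p:ℝ) * t⁻¹) 0 := by
    rw [mul_max_of_nonneg _ _ ht0.le, mul_zero]; congr 1; field_simp
  rw [this]; ring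

noncomputable def h2 (y t : ℝ) : ℝ := 2 / (t * Real.log t ^ 2) + (y - t) * (1 / (t^2 * Real.log t ^ 2) + 2 / (t^2 * Real.log t ^ 3))

lemma h2_int {y p : ℝ} (hp : 1 < p) (hpy : p ≤ y) :
    ∫ t in p..y, (t - p) * h2 y t = (y - p) / Real.log p - (y - p) / Real.log y := by
  have key : ∀ t ∈ Set.uIcc p y, HasDerivAt (fun t => (t - p) * (-1 / Real.log t - (y - t) / (t * Real.log t ^ 2)) - (y - t) / Real.log t) ((t - p) * h2 y t) t := by
    intro t ht
    rw [Set.uIcc_of_le hpy] at ht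
    have ht0 : t ≠ 0 := by have := ht.1; linarith
    have hl : Real.log t ≠ 0 := (Real.log_pos (by linarith [ht.1])).ne'
    have hlog := Real.hasDerivAt_log ht0
    have hid := hasDerivAt_id t
    have d1 := (hasDerivAt_const t (-1:ℝ)).div hlog hl
    have d2 := ((hasDerivAt_const t y).sub hid).div (hid.mul (hlog.pow 2)) (mul_ne_zero ht0 (pow_ne_zero 2 hl))
    have d3 := ((hasDerivAt_const t y).sub hid).div hlog hl
    have := ((hid.sub (hasDerivAt_const t p)).mul (d1.sub d2)).sub d3
    refine (this.congr_deriv ?_)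
    simp [h2]
    field_simp
    ring
  rw [intervalIntegral.integral_eq_sub_of_hasDerivAt key]
  · have : p ≠ 0 := by linarith
    simp; ring
  · apply ContinuousOn.intervalIntegrable
    rw [Set.uIcc_of_le hpy]
    intro t ht
    have ht0 : t ≠ 0 := by have := ht.1; linarith
    have hl : Real.log t ≠ 0 := (Real.log_pos (by linarith [ht.1])).ne'
    unfold h2
    apply ContinuousAt.continuousWithinAt
    have : ContinuousAt Real.log t := Real.continuousAt_log ht0
    fun_prop (disch := positivity)

open Finset Real

lemma exp5_lt : Real.exp 5 < 149 := by
  have h : Real.exp 5 = Real.exp 1 ^ 5 := by rw [← Real.exp_nat_mul]; norm_num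
  have h1 := Real.exp_one_lt_d9
  rw [h]
  calc Real.exp 1 ^ 5 < 2.7182818286 ^ 5 := by gcongr
    _ < 149 := by norm_num

lemma h2_cont {y t : ℝ} (ht : 1 < t) : ContinuousAt (h2 y) t := by
  have ht0 : t ≠ 0 := by linarith
  have hl : Real.log t ≠ 0 := (Real.log_pos ht).ne'
  unfold h2
  have : ContinuousAt Real.log t := Real.continuousAt_log ht0
  fun_prop (disch := positivity)

lemma h2_nonneg {y t : ℝ} (ht : 1 < t) (hty : t ≤ y) : 0 ≤ h2 y t := by
  have hl : 0 < Real.log t := Real.log_pos ht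
  have h0 : 0 < t := by linarith
  have : 0 ≤ y - t := by linarith
  unfold h2; positivity

noncomputable def Nf (y t : ℝ) : ℝ := (1/2) * (y * (t * (1 / Real.log t ^ 2 + 4 / Real.log t ^ 3 + 60 / Real.log t ^ 4)) + (1/2) * t^2 * (1 / Real.log t ^ 2 - 1 / Real.log t ^ 3))

noncomputable def Nf' (y t : ℝ) : ℝ := (1/2) * (y * (1 / Real.log t ^ 2 + 2 / Real.log t ^ 3 + 48 / Real.log t ^ 4 - 240 / Real.log t ^ 5) + t * (1 / Real.log t ^ 2 - 2 / Real.log t ^ 3 + 1.5 / Real.log t ^ 4))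

lemma Nf_deriv {y t : ℝ} (ht : 1 < t) : HasDerivAt (Nf y) (Nf' y t) t := by
  have ht0 : t ≠ 0 := by linarith
  have hl : Real.log t ≠ 0 := (Real.log_pos ht).ne'
  have hlog := Real.hasDerivAt_log ht0
  have hid := hasDerivAt_id t
  have c (c : ℝ) (k : ℕ) := (hasDerivAt_const t c).div (hlog.pow k) (pow_ne_zero k hl)
  have := (((hid.mul (((c 1 2).add (c 4 3)).add (c 60 4))).const_mul y).add (((hid.pow 2).const_mul (1/2)).mul ((c 1 2).sub (c 1 3)))).const_mul (1/2)
  refine (this.congr_deriv ?_)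
  simp [Nf']
  field_simp
  ring

lemma Nf'_cont {y t : ℝ} (ht : 1 < t) : ContinuousAt (Nf' y) t := by
  have ht0 : t ≠ 0 := by linarith
  have hl : Real.log t ≠ 0 := (Real.log_pos ht).ne'
  unfold Nf'
  have : ContinuousAt Real.log t := Real.continuousAt_log ht0
  fun_prop (disch := positivity)

lemma h2_le {y t : ℝ} (ht : 5 ≤ Real.log t) (ht1 : 1 < t) (hty : t ≤ y) : t^2 / 2 * h2 y t ≤ Nf' y t := by
  have h0 : 0 < t := by linarith
  unfold h2 Nf'
  set l := Real.log t
  have hl : 0 < l := by linarith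
  have e : (1/2) * (y * (1 / l ^ 2 + 2 / l ^ 3 + 48 / l ^ 4 - 240 / l ^ 5) + t * (1 / l ^ 2 - 2 / l ^ 3 + 1.5 / l ^ 4)) - t^2 / 2 * (2 / (t * l ^ 2) + (y - t) * (1 / (t^2 * l ^ 2) + 2 / (t^2 * l ^ 3))) = (1/2) * (y * (48 * (l - 5) / l^5) + t * (1.5 / l^4)) := by
    field_simp; ring
  have : 0 ≤ (1/2) * (y * (48 * (l - 5) / l^5) + t * (1.5 / l^4)) := by
    have : 0 ≤ l - 5 := by linarith
    have : 0 ≤ y := by linarith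
    positivity
  linarith

lemma PiS_le {L : ℝ} (hL : 5 ≤ L) :
    PiS (Real.exp L) ≤ Real.exp L ^ 2 / (2 * L) * (1 + eps L + 1.0465 * (1.5 / L + 3.5 / L^2 + 60 / L^3)) + 34 * Real.exp L := by
  set y := Real.exp L with hy
  have hlogy : Real.log y = L := Real.log_exp L
  have hy0 : 0 < y := Real.exp_pos _
  have hL0 : 0 < L := by linarith
  have h5y : Real.exp 5 ≤ y := Real.exp_le_exp.2 hL
  have h51 : (1:ℝ) < Real.exp 5 := Real.one_lt_exp_iff.2 (by norm_num)
  set P := (range (⌊y⌋₊ + 1)).filter Nat.Prime with hP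
  have hPmem : ∀ p ∈ P, p.Prime ∧ (p:ℝ) ≤ y := by
    intro p hp
    simp only [hP, mem_filter, mem_range] at hp
    exact ⟨hp.2, (Nat.le_floor_iff hy0.le).1 (Nat.lt_succ_iff.1 hp.1)⟩
  have hsplit : PiS y = ∑ p ∈ P.filter (fun p => p < 149), (y - (p:ℝ)) + ∑ p ∈ P.filter (fun p => ¬ p < 149), (y - (p:ℝ)) := by
    rw [Finset.sum_filter_add_sum_filter_not]; rfl
  set s := P.filter (fun p => ¬ p < 149) with hs
  have hsm : ∀ p ∈ s, p.Prime ∧ (p:ℝ) ≤ y ∧ (149:ℝ) ≤ p := by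
    intro p hp
    rw [hs, mem_filter] at hp
    exact ⟨(hPmem p hp.1).1, (hPmem p hp.1).2, by exact_mod_cast not_lt.1 hp.2⟩
  have hsmall : ∑ p ∈ P.filter (fun p => p < 149), (y - (p:ℝ)) ≤ 34 * y := by
    have hc : (P.filter (fun p => p < 149)).card ≤ 34 := by
      have h1 : P.filter (fun p => p < 149) ⊆ (range 149).filter Nat.Prime := by
        intro p hp
        simp only [hP, mem_filter, mem_range] at hp ⊢
        exact ⟨hp.2, hp.1.2⟩
      refine (Finset.card_le_card h1).trans ?_
      decide +kernel
    calc ∑ p ∈ P.filter (fun p => p < 149), (y - (p:ℝ)) ≤ ∑ p ∈ P.filter (fun p => p < 149), y :=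
          Finset.sum_le_sum fun p _ => by have : (0:ℝ) ≤ p := Nat.cast_nonneg p; linarith
      _ = (P.filter (fun p => p < 149)).card * y := by rw [Finset.sum_const, nsmul_eq_mul]
      _ ≤ 34 * y := by gcongr; exact_mod_cast hc
  have hint : ∀ p ∈ s, IntervalIntegrable (fun t => Real.log p * max (t - p) 0 * h2 y t) MeasureTheory.volume (Real.exp 5) y := by
    intro p hp
    apply ContinuousOn.intervalIntegrable
    rw [Set.uIcc_of_le h5y]
    intro t ht
    apply ContinuousAt.continuousWithinAt
    have := h2_cont (y := y) (t := t) (by linarith [ht.1])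
    exact ContinuousAt.mul (by fun_prop) this
  have hterm : ∀ p ∈ s, y - (p:ℝ) ≤ Real.log p * max (y - p) 0 / L + ∫ t in (Real.exp 5)..y, Real.log p * max (t - p) 0 * h2 y t := by
    intro p hp
    obtain ⟨hp1, hp2, hp3⟩ := hsm p hp
    have h5p : Real.exp 5 ≤ p := by linarith [exp5_lt]
    have hlp : 0 < Real.log p := Real.log_pos (by linarith)
    have e1 : ∫ t in (p:ℝ)..y, Real.log p * max (t - p) 0 * h2 y t = Real.log p * ((y - p) / Real.log p - (y - p) / L) := by
      rw [← hlogy, ← h2_int (by linarith) hp2, ← intervalIntegral.integral_const_mul]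
      refine intervalIntegral.integral_congr fun t ht => ?_
      rw [Set.uIcc_of_le hp2] at ht
      rw [max_eq_left (by linarith [ht.1])]; ring
    have e2 : ∫ t in (p:ℝ)..y, Real.log p * max (t - p) 0 * h2 y t ≤ ∫ t in (Real.exp 5)..y, Real.log p * max (t - p) 0 * h2 y t := by
      refine intervalIntegral.integral_mono_interval h5p hp2 le_rfl ?_ (hint p hp)
      refine (MeasureTheory.ae_restrict_iff' measurableSet_Ioc).2 (Filter.Eventually.of_forall fun t ht => ?_)
      exact mul_nonneg (mul_nonneg hlp.le (le_max_right _ _)) (h2_nonneg (by linarith [ht.1]) ht.2)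
    rw [e1] at e2
    rw [max_eq_left (by linarith)]
    have : Real.log p * ((y - p) / Real.log p - (y - p) / L) = (y - p) - Real.log p * (y - p) / L := by field_simp
    linarith
  have hbig : ∑ p ∈ s, (y - (p:ℝ)) ≤ (∑ p ∈ s, Real.log p * max (y - p) 0) / L + ∫ t in (Real.exp 5)..y, (∑ p ∈ s, Real.log p * max (t - p) 0) * h2 y t := by
    refine (Finset.sum_le_sum hterm).trans (le_of_eq ?_)
    rw [Finset.sum_add_distrib, Finset.sum_div, ← intervalIntegral.integral_finsetSum hint]
    simp_rw [Finset.sum_mul]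
  have hA : ∑ p ∈ s, Real.log p * max (y - p) 0 ≤ y^2 / 2 * (1 + eps L) := by
    refine (theta_le s (fun p hp => (hsm p hp).1) (by linarith)).trans ?_
    rw [hlogy]
    have := psiA_le hL
    rw [← hy] at this
    calc y * psiA L ≤ y * (y / 2 * (1 + eps L)) := by gcongr; linarith
      _ = _ := by ring
  have hI : ∫ t in (Real.exp 5)..y, (∑ p ∈ s, Real.log p * max (t - p) 0) * h2 y t ≤ ∫ t in (Real.exp 5)..y, 1.0465 * Nf' y t := by
    refine intervalIntegral.integral_mono_on h5y ?_ ?_ ?_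
    · simp_rw [Finset.sum_mul]
      have := IntervalIntegrable.sum _ hint
      simpa only [Finset.sum_fn] using this
    · apply ContinuousOn.intervalIntegrable
      rw [Set.uIcc_of_le h5y]
      intro t ht
      exact (continuousAt_const.mul (Nf'_cont (by linarith [ht.1]))).continuousWithinAt
    · intro t ht
      have ht1 : 1 < t := by linarith [ht.1]
      have hlt : 5 ≤ Real.log t := (Real.le_log_iff_exp_le (by linarith)).2 ht.1
      have h1 := theta_le s (fun p hp => (hsm p hp).1) ht1.le
      have h3 := psiA_le_one hlt
      rw [Real.exp_log (by linarith)] at h3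
      have h4 : ∑ p ∈ s, Real.log p * max (t - p) 0 ≤ 1.0465 * (t^2/2) := by
        refine h1.trans ?_
        calc t * psiA (Real.log t) ≤ t * (t/2 * (1 + 0.0465)) := by gcongr
          _ = _ := by ring
      calc (∑ p ∈ s, Real.log p * max (t - p) 0) * h2 y t ≤ 1.0465 * (t^2/2) * h2 y t :=
            mul_le_mul_of_nonneg_right h4 (h2_nonneg ht1 ht.2)
        _ = 1.0465 * (t^2/2 * h2 y t) := by ring
        _ ≤ _ := by have := h2_le hlt ht1 ht.2; linarith
  have hN : ∫ t in (Real.exp 5)..y, 1.0465 * Nf' y t = 1.0465 * (Nf y y - Nf y (Real.exp 5)) := by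
    rw [intervalIntegral.integral_const_mul]
    congr 1
    apply intervalIntegral.integral_eq_sub_of_hasDerivAt
    · intro t ht
      rw [Set.uIcc_of_le h5y] at ht
      exact Nf_deriv (by linarith [ht.1])
    · apply ContinuousOn.intervalIntegrable
      rw [Set.uIcc_of_le h5y]
      intro t ht
      exact (Nf'_cont (by linarith [ht.1])).continuousWithinAt
  have hN5 : 0 ≤ Nf y (Real.exp 5) := by
    rw [Nf, Real.log_exp]
    have : (0:ℝ) ≤ 1 / 5^2 - 1/5^3 := by norm_num
    positivity
  have hNy : Nf y y = y^2 / (2 * L) * (1.5 / L + 3.5 / L^2 + 60 / L^3) := by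
    rw [Nf, hlogy]; field_simp; ring
  have hA' : (∑ p ∈ s, Real.log p * max (y - p) 0) / L ≤ y^2 / (2*L) * (1 + eps L) := by
    calc _ ≤ (y^2 / 2 * (1 + eps L)) / L := by gcongr
      _ = _ := by field_simp
  rw [hsplit]
  rw [hN, hNy] at hI
  have : y ^ 2 / (2 * L) * (1 + eps L + 1.0465 * (1.5 / L + 3.5 / L^2 + 60 / L^3)) = y^2 / (2*L) * (1 + eps L) + 1.0465 * (y^2 / (2 * L) * (1.5 / L + 3.5 / L^2 + 60 / L^3)) := by ring
  linarith

open Finset Real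

lemma exp_n (n : ℕ) : Real.exp n = Real.exp 1 ^ n := by rw [← Real.exp_nat_mul]; simp

lemma log_of_exp {a m : ℝ} (k : ℕ) (hm : 0 < m) (q : ℕ) (hq : 0 < q) (ha : a = k / q)
    (h : (2.7182818286:ℝ) ^ k ≤ m ^ q) : a ≤ Real.log m := by
  have h1 : (k:ℝ) ≤ q * Real.log m := by
    rw [← Real.log_pow, Real.le_log_iff_exp_le (by positivity), exp_n]
    exact (pow_le_pow_left₀ (Real.exp_pos _).le Real.exp_one_lt_d9.le _).trans h
  have : (0:ℝ) < q := by exact_mod_cast hq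
  rw [ha, div_le_iff₀ this]; linarith

lemma log11_ge : (2.3968:ℝ) ≤ Real.log 11 := (by norm_num : (2.3968:ℝ) ≤ 151/63).trans (log_of_exp 151 (by norm_num) 63 (by norm_num) (by norm_num) (by norm_num))
lemma log20_ge : (2.987:ℝ) ≤ Real.log 20 := (by norm_num : (2.987:ℝ) ≤ 239/80).trans (log_of_exp 239 (by norm_num) 80 (by norm_num) (by norm_num) (by norm_num))
lemma log42_ge : (3.73:ℝ) ≤ Real.log 42 := (by norm_num : (3.73:ℝ) ≤ 250/67).trans (log_of_exp 250 (by norm_num) 67 (by norm_num) (by norm_num) (by norm_num))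
lemma log60_ge : (4.094:ℝ) ≤ Real.log 60 := (by norm_num : (4.094:ℝ) ≤ 217/53).trans (log_of_exp 217 (by norm_num) 53 (by norm_num) (by norm_num) (by norm_num))
lemma log5_le : Real.log 5 ≤ 1.61 := by
  have h : (5:ℝ)^100 ≤ 2.7182818283^161 := by norm_num
  have h1 : (100:ℕ) * Real.log 5 ≤ (161:ℕ) := by
    rw [← Real.log_pow, Real.log_le_iff_le_exp (by positivity), exp_n]
    exact h.trans (pow_le_pow_left₀ (by norm_num) Real.exp_one_gt_d9.le _)
  push_cast at h1; linarith

lemma log_tangent {x m : ℝ} (hx : 0 < x) (hm : 0 < m) : Real.log m + 1 - m / x ≤ Real.log x := by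
  have := Real.log_le_sub_one_of_pos (x := m / x) (by positivity)
  rw [Real.log_div hm.ne' hx.ne'] at this; linarith

lemma log_one_sub_ge {u : ℝ} (h0 : 0 < u) (h1 : u ≤ 1/11) : -u - 1.1 * u^2 ≤ Real.log (1 - u) := by
  have := Real.one_sub_inv_le_log_of_pos (x := 1 - u) (by linarith)
  have h2 : (1 - u)⁻¹ ≤ 1 + u + 1.1 * u^2 := by
    rw [inv_le_comm₀ (by linarith) (by positivity), inv_le_iff_one_le_mul₀ (by positivity)]
    nlinarith [mul_nonneg (sq_nonneg u) (by linarith : 0 ≤ 1/11 - u)]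
  linarith

/-- the margin inequality -/
lemma margin {L u : ℝ} (hL : 11 ≤ L) (hu : u = 1 / L) :
    0 < 0.3853 + (if 60 ≤ L then 0.1146 else 0) + Real.log L + Real.log (1 - u) - u - L * (1 - u)^2 * eps L
      - 1.0465 * (1 - u)^2 * (1.5 + 3.5 * u + 60 * u^2) := by
  have hL0 : 0 < L := by linarith
  have hu0 : 0 < u := by rw [hu]; positivity
  have hu11 : u ≤ 1/11 := by rw [hu]; gcongr
  have hLu : L * u = 1 := by rw [hu]; field_simp
  have hl1 := log_one_sub_ge hu0 hu11
  have hpoly : (1 - u)^2 * (1.5 + 3.5 * u + 60 * u^2) ≤ 1.5 + 0.5 * u + 54.5 * u^2 - 111 * u^3 := by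
    nlinarith [mul_nonneg (pow_nonneg hu0.le 3) (by linarith : 0 ≤ 1/11 - u)]
  split_ifs with h60
  · have hu60 : u ≤ 1/60 := by rw [hu]; gcongr
    have he := eps_le_two h60
    have hlog : Real.log (5 * L) = Real.log 5 + Real.log L := Real.log_mul (by norm_num) hL0.ne'
    rw [hlog] at he
    have hl60 : 4.094 ≤ Real.log L := log60_ge.trans (Real.log_le_log (by norm_num) h60)
    have h5 := log5_le
    have he2 : L * eps L ≤ 0.794 * Real.log L - 0.26866 := by
      rw [le_div_iff₀ hL0] at he; linarith
    have he3 : L * (1 - u)^2 * eps L ≤ (1-u)^2 * (0.794 * Real.log L - 0.26866) := by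
      have := mul_le_mul_of_nonneg_left he2 (sq_nonneg (1 - u)); linarith
    have hc : (1-u)^2 ≤ 1 := by nlinarith only [hu0, hu60]
    have h7 : (1 - 0.794 * (1-u)^2) * 4.094 ≤ (1 - 0.794 * (1-u)^2) * Real.log L := by
      apply mul_le_mul_of_nonneg_left hl60; linarith
    have h8 : 0 ≤ u^3 := by positivity
    nlinarith only [h7, he3, hpoly, hl1, hu0, hu60, h8]
  · push Not at h60
    have he : eps L ≤ 0.0465 := by
      have h1 := eps_le hL0.le
      have h2 : Real.exp (-L/2) ≤ 1/200 := by
        have e1 : Real.exp (-L/2) ≤ Real.exp (-(5 + 1/2)) := Real.exp_le_exp.2 (by linarith)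
        rw [Real.exp_neg, Real.exp_add] at e1
        have e2 : 140 ≤ Real.exp 5 := by
          have h := exp_n 5
          push_cast at h
          rw [h]
          refine le_trans ?_ (pow_le_pow_left₀ (by norm_num) Real.exp_one_gt_d9.le 5)
          norm_num
        have e3 : (1:ℝ)/2 + 1 ≤ Real.exp (1/2) := Real.add_one_le_exp _
        have e4 : (200:ℝ) ≤ Real.exp 5 * Real.exp (1/2) := by nlinarith
        calc _ ≤ _ := e1
          _ ≤ (200:ℝ)⁻¹ := by gcongr
          _ = 1/200 := by norm_num
      linarith
    have he2 : L * (1 - u)^2 * eps L ≤ 0.0465 * (L - 2 + u) := by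
      have : L * (1-u)^2 = L - 2 + u := by linear_combination (u - 2) * hLu
      rw [this]
      nlinarith
    have hu60 : 1/60 ≤ u := by rw [hu]; gcongr
    have red : ∀ m c : ℝ, 0 < m → c ≤ Real.log m → 0 < (c + 1 - m * u + 0.3853 - u - 1.1 * u^2 - u - 0.0465 * (u - 2) - 1.0465 * (1.5 + 0.5 * u + 54.5 * u^2 - 111 * u^3)) * u - 0.0465 → 
       0 < 0.3853 + 0 + Real.log L + Real.log (1 - u) - u - L * (1 - u)^2 * eps L - 1.0465 * (1 - u)^2 * (1.5 + 3.5 * u + 60 * u^2) := by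
      intro m c hm hc h
      have ht := log_tangent hL0 hm
      have : m / L = m * u := by rw [hu]; ring
      have h3 : 0 < (c + 1 - m * u + 0.3853 - u - 1.1 * u^2 - u - 0.0465 * (u - 2) - 1.0465 * (1.5 + 0.5 * u + 54.5 * u^2 - 111 * u^3)) - 0.0465 * L := by
        by_contra hneg
        push Not at hneg
        have := mul_nonpos_of_nonpos_of_nonneg hneg hu0.le
        nlinarith only [this, h, hLu]
      linarith
    have hq : ∀ a b : ℝ, a ≤ u → u ≤ b → 0 ≤ a → b ≤ 1/11 → 54.5 * u^2 - 111 * u^3 ≤ (54.5 * (a + b) - 111 * (a^2 + a*b + b^2)) * u - (54.5 - 111 * (a+b)) * a * b := by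
      intro a b h1 h2 h3 h4
      have : 0 ≤ (u - a) * (b - u) * (54.5 - 111 * (u + a + b)) := by
        apply mul_nonneg (mul_nonneg (by linarith) (by linarith)); linarith
      linarith
    rcases le_total (1/14) u with h14 | h14
    · apply red 11 2.3968 (by norm_num) log11_ge
      have := hq (1/14) (1/11) h14 hu11 (by norm_num) (by norm_num)
      nlinarith only [mul_le_mul_of_nonneg_right this hu0.le, mul_nonneg (sub_nonneg.2 h14) (sub_nonneg.2 hu11), mul_nonneg (mul_nonneg (sub_nonneg.2 h14) (sub_nonneg.2 hu11)) hu0.le, hu0]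
    rcases le_total (1/30) u with h30 | h30
    · apply red 20 2.987 (by norm_num) log20_ge
      have := hq (1/30) (1/14) h30 h14 (by norm_num) (by norm_num)
      nlinarith only [mul_le_mul_of_nonneg_right this hu0.le, mul_nonneg (sub_nonneg.2 h30) (sub_nonneg.2 h14), mul_nonneg (mul_nonneg (sub_nonneg.2 h30) (sub_nonneg.2 h14)) hu0.le, hu0]
    · apply red 42 3.73 (by norm_num) log42_ge
      have := hq (1/60) (1/30) hu60 h30 (by norm_num) (by norm_num)
      nlinarith only [mul_le_mul_of_nonneg_right this hu0.le, mul_nonneg (sub_nonneg.2 hu60) (sub_nonneg.2 h30), mul_nonneg (mul_nonneg (sub_nonneg.2 hu60) (sub_nonneg.2 h30)) hu0.le, hu0]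

lemma exp_sq_le {L : ℝ} (hL : 11 ≤ L) : 598.7 * (L - 1)^2 ≤ Real.exp L := by
  have e1 : (59870:ℝ) ≤ Real.exp 11 := by
    have h := exp_n 11
    push_cast at h
    rw [h]
    refine le_trans ?_ (pow_le_pow_left₀ (by norm_num) Real.exp_one_gt_d9.le 11)
    norm_num
  have e2 : 1 + (L - 11) + (L-11)^2/2 ≤ Real.exp (L - 11) := Real.quadratic_le_exp_of_nonneg (by linarith)
  have e3 : Real.exp L = Real.exp 11 * Real.exp (L - 11) := by rw [← Real.exp_add]; ring_nf
  have e4 : 59870 * (1 + (L - 11) + (L-11)^2/2) ≤ Real.exp 11 * Real.exp (L - 11) := by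
    refine mul_le_mul e1 e2 (by nlinarith) (Real.exp_pos _).le
  rw [e3]
  nlinarith

lemma exp_sq_le60 {L : ℝ} (hL : 60 ≤ L) : 1000000 * (L - 1)^2 ≤ Real.exp L := by
  have e1 : (10000000000:ℝ) ≤ Real.exp 60 := by
    have h := exp_n 60
    push_cast at h
    rw [h]
    refine le_trans ?_ (pow_le_pow_left₀ (by norm_num) Real.exp_one_gt_d9.le 60)
    norm_num
  have e2 : 1 + (L - 60) + (L-60)^2/2 ≤ Real.exp (L - 60) := Real.quadratic_le_exp_of_nonneg (by linarith)
  have e3 : Real.exp L = Real.exp 60 * Real.exp (L - 60) := by rw [← Real.exp_add]; ring_nf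
  have e4 : 10000000000 * (1 + (L - 60) + (L-60)^2/2) ≤ Real.exp 60 * Real.exp (L - 60) := by
    refine mul_le_mul e1 e2 (by nlinarith) (Real.exp_pos _).le
  rw [e3]
  nlinarith

set_option maxHeartbeats 1000000 in
lemma large {n : ℕ} (hn : 5988 ≤ n) :
    (n:ℝ)^2 / 2 * (Real.log n - 1/2) + 1/4 < ∑ i ∈ Icc 1 n, (nthPrime i : ℝ) := by
  have hnR : (5988:ℝ) ≤ n := by exact_mod_cast hn
  obtain ⟨L, hL, hLn⟩ : ∃ L : ℝ, 11 ≤ L ∧ Real.exp L / (L - 1) = n := by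
    have hc : ContinuousOn (fun L : ℝ => Real.exp L / (L - 1)) (Set.Icc 11 n) := by
      intro t ht
      have : t - 1 ≠ 0 := by have := ht.1; linarith
      apply ContinuousAt.continuousWithinAt
      fun_prop (disch := assumption)
    have h1 : Real.exp 11 / (11 - 1) ≤ n := by
      have h := exp_n 11
      push_cast at h
      rw [h]
      have : Real.exp 1 ^ 11 ≤ 2.7182818286 ^ 11 := pow_le_pow_left₀ (Real.exp_pos _).le Real.exp_one_lt_d9.le 11
      have h2 : (2.7182818286:ℝ) ^ 11 ≤ 59875 := by norm_num
      linarith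
    have h2 : (n:ℝ) ≤ Real.exp n / (n - 1) := by
      rw [le_div_iff₀ (by linarith)]
      have := Real.pow_div_factorial_le_exp (x := (n:ℝ)) (by linarith) 3
      norm_num [Nat.factorial] at this
      nlinarith [mul_nonneg (sq_nonneg (n:ℝ)) (sub_nonneg.2 hnR)]
    obtain ⟨L, hL, h⟩ := intermediate_value_Icc (by linarith : (11:ℝ) ≤ n) hc ⟨h1, h2⟩
    exact ⟨L, hL.1, h⟩
  set y := Real.exp L with hy
  have hy0 : 0 < y := Real.exp_pos _
  have hL0 : 0 < L := by linarith
  have hk : 0 < L - 1 := by linarith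
  have hS := sum_ge n hy0.le
  have hP := PiS_le (L := L) (by linarith)
  rw [← hy] at hP
  have hyn : y = n * (L - 1) := by rw [← hLn]; field_simp
  obtain ⟨u, hu⟩ : ∃ u : ℝ, u = 1 / L := ⟨_, rfl⟩
  have hLu : L * u = 1 := by rw [hu]; field_simp
  have hu0 : 0 < u := by rw [hu]; positivity
  have hm := margin hL hu
  have hlogn : Real.log n = L - (Real.log L + Real.log (1 - u)) := by
    have hu1 : 0 < 1 - u := by
      have : L * (1 - u) = L - 1 := by linear_combination -hLu
      by_contra hc; push Not at hc
      nlinarith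
    rw [← Real.log_mul hL0.ne' hu1.ne', ← hLn, Real.log_div hy0.ne' hk.ne', hy, Real.log_exp]
    congr 2
    linear_combination hLu
  have hn0 : (0:ℝ) < n := by linarith
  -- rewrite the upper bound in terms of n
  have hP2 : y ^ 2 / (2 * L) * (1 + eps L + 1.0465 * (1.5 / L + 3.5 / L^2 + 60 / L^3)) + 34 * y =
      n^2 / 2 * ((L - 2 + u) + L * (1 - u)^2 * eps L + 1.0465 * (1 - u)^2 * (1.5 + 3.5 * u + 60 * u^2)) + 34 * n * (L - 1) := by
    rw [hyn, hu]; field_simp; ring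
  have h34 : 34 * n * (L - 1) + 1/4 ≤ n^2 / 2 * (0.1147 - (if 60 ≤ L then 0.1146 else 0)) := by
    split_ifs with h60
    · have := exp_sq_le60 h60
      rw [← hy, hyn] at this
      have h2 : 1000000 * (L - 1) ≤ n := by
        by_contra hc; push Not at hc
        nlinarith
      nlinarith
    · have := exp_sq_le hL
      rw [← hy, hyn] at this
      have h2 : 598.7 * (L - 1) ≤ n := by
        by_contra hc; push Not at hc
        nlinarith
      nlinarith
  rw [hP2] at hP
  obtain ⟨c, hc⟩ : ∃ c : ℝ, c = (if 60 ≤ L then 0.1146 else 0) := ⟨_, rfl⟩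
  rw [← hc] at h34 hm
  have hfin : (n:ℝ)^2 / 2 * (Real.log n - 1/2) + 1/4 < n * y - (n^2 / 2 * ((L - 2 + u) + L * (1 - u)^2 * eps L + 1.0465 * (1 - u)^2 * (1.5 + 3.5 * u + 60 * u^2)) + 34 * n * (L - 1)) := by
    rw [hlogn]
    have hyn2 : n * y = n^2 * (L - 1) := by rw [hyn]; ring
    rw [hyn2]
    clear hP hP2 hS hLn hu hlogn
    generalize L * (1 - u)^2 * eps L = E at *
    generalize 1.0465 * (1 - u)^2 * (1.5 + 3.5 * u + 60 * u^2) = Q at *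
    have hmm := mul_pos (by positivity : (0:ℝ) < n^2/2) hm
    linarith only [hmm, h34]
  linarith

open Finset Real

/-- primes up to 250, tested by membership -/
def smallP : List ℕ := [2, 3, 5, 7, 11, 13, 17, 19, 23, 29, 31, 37, 41, 43, 47, 53, 59, 61, 67, 71, 73, 79, 83, 89, 97, 101, 103, 107, 109, 113, 127, 131, 137, 139, 149, 151, 157, 163, 167, 173, 179, 181, 191, 193, 197, 199, 211, 223, 227, 229, 233, 239, 241]

def Qn : ℕ := 256041159035492609053110100510385311995538591998443060216114576417920917800321526504084465112487730

/-- weight of `k`: at least `y - k` for each prime `k` -/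
def wgt (y k : ℕ) : ℕ := bif (Nat.ble k 250) then (bif (smallP.contains k) then y - k else 0) else (bif Nat.beq (Nat.gcd k 256041159035492609053110100510385311995538591998443060216114576417920917800321526504084465112487730) 1 then y - k else 0)

/-- binary summation over `[a, a + 2^d)` -/
def sumR (f : ℕ → ℕ) (d : ℕ) : ℕ → ℕ := Nat.rec (motive := fun _ => ℕ → ℕ) (fun a => f a) (fun d ih a => ih a + ih (a + 2^d)) d

lemma sumR_eq (f : ℕ → ℕ) (d a : ℕ) : sumR f d a = ∑ i ∈ range (2^d), f (a + i) := by
  induction d generalizing a with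
  | zero => simp [sumR]
  | succ d ih =>
    have : sumR f (d+1) a = sumR f d a + sumR f d (a + 2^d) := rfl
    rw [this, ih, ih, pow_succ, mul_two, Finset.sum_range_add]
    simp only [add_assoc]

lemma wgt_ge {y k : ℕ} (hk : k.Prime) : y - k ≤ wgt y k := by
  unfold wgt
  by_cases h : k ≤ 250
  · have h1 : ∀ k ≤ 250, k.Prime → smallP.contains k = true := by decide +kernel
    simp [Nat.ble_eq_true_of_le h, h1 k h hk, -List.contains_eq_mem]
  · have hb : Nat.ble k 250 = false := by
      by_contra hc
      exact h (Nat.le_of_ble_eq_true (by simpa using hc))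
    have hd : Qn ∣ Nat.factorial 250 := by decide +kernel
    have hg : Nat.gcd k Qn = 1 := by
      refine (Nat.Prime.coprime_iff_not_dvd hk).2 fun hdv => h ?_
      exact (Nat.Prime.dvd_factorial hk).1 (hdv.trans hd)
    rw [Qn] at hg
    rw [hb, hg]; simp

lemma PiS_nat (y P d : ℕ) (hd : y < 2^d) (h : Nat.ble (sumR (wgt y) d 0) P = true) : PiS y ≤ P := by
  have h1 := Nat.le_of_ble_eq_true h
  rw [sumR_eq] at h1
  rw [PiS, Nat.floor_natCast]
  have h3 : ∑ p ∈ (range (y+1)).filter Nat.Prime, (y - p) ≤ P := by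
    refine le_trans ?_ h1
    calc ∑ p ∈ (range (y+1)).filter Nat.Prime, (y - p) ≤ ∑ p ∈ (range (y+1)).filter Nat.Prime, wgt y (0 + p) :=
          Finset.sum_le_sum fun p hp => by rw [zero_add]; exact wgt_ge (mem_filter.1 hp).2
      _ ≤ _ := Finset.sum_le_sum_of_subset (fun p hp => by
          have := (mem_filter.1 hp).1
          rw [mem_range] at this ⊢
          omega)
  have h4 : ∑ p ∈ (range (y+1)).filter Nat.Prime, ((y:ℝ) - p) = ((∑ p ∈ (range (y+1)).filter Nat.Prime, (y - p) : ℕ) : ℝ) := by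
    push_cast
    refine Finset.sum_congr rfl fun p hp => ?_
    have := (mem_filter.1 hp).1
    rw [mem_range] at this
    rw [Nat.cast_sub (by omega)]
  rw [h4]; exact_mod_cast h3

lemma log_nat_le {m : ℝ} (k q : ℕ) (hm : 0 < m) (hq : 0 < q) (h : m ^ q ≤ (2.7182818283:ℝ) ^ k) : Real.log m ≤ k / q := by
  have h1 : q * Real.log m ≤ (k:ℕ) := by
    rw [← Real.log_pow, Real.log_le_iff_le_exp (by positivity), exp_n]
    exact h.trans (pow_le_pow_left₀ (by norm_num) Real.exp_one_gt_d9.le _)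
  have : (0:ℝ) < q := by exact_mod_cast hq
  rw [le_div_iff₀ this]; linarith

lemma tangent_check (a b y P d m k q : ℕ) (hd : y < 2^d) (h : Nat.ble (sumR (wgt y) d 0) P = true)
    (hm : 0 < m) (hq : 0 < q) (hlog : (m:ℝ) ^ q ≤ (2.7182818283:ℝ) ^ k) (hc : (1.5:ℝ) ≤ k / q)
    (ha : 0 < (a:ℝ) * y - P - (a:ℝ)^2 / 2 * (k / q - 1.5) - a^3 / (2 * m) - 1/4)
    (hb : 0 < (b:ℝ) * y - P - (b:ℝ)^2 / 2 * (k / q - 1.5) - b^3 / (2 * m) - 1/4)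
    (n : ℕ) (han : a ≤ n) (hnb : n ≤ b) (hn : 1 ≤ n) :
    (n:ℝ)^2 / 2 * (Real.log n - 1/2) + 1/4 < ∑ i ∈ Icc 1 n, (nthPrime i : ℝ) := by
  have hS := sum_ge n (Nat.cast_nonneg (α := ℝ) y)
  have hP := PiS_nat y P d hd h
  have hmR : (0:ℝ) < m := by exact_mod_cast hm
  have hl := log_nat_le k q hmR hq hlog
  have hnR : (1:ℝ) ≤ n := by exact_mod_cast hn
  have haR : (a:ℝ) ≤ n := by exact_mod_cast han
  have hbR : (n:ℝ) ≤ b := by exact_mod_cast hnb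
  have ha0 : (0:ℝ) ≤ a := Nat.cast_nonneg a
  have hln : Real.log n ≤ k / q + n / m - 1 := by
    have := Real.log_le_sub_one_of_pos (x := (n:ℝ) / m) (by positivity)
    rw [Real.log_div (by positivity) hmR.ne'] at this
    linarith
  obtain ⟨c, hcd⟩ : ∃ c : ℝ, c = k / q - 1.5 := ⟨_, rfl⟩
  rw [← hcd] at ha hb
  have hc0 : 0 ≤ c := by rw [hcd]; linarith
  have h1 : (n:ℝ)^2 / 2 * (Real.log n - 1/2) ≤ (n:ℝ)^2 / 2 * (c + n / m) := by
    apply mul_le_mul_of_nonneg_left _ (by positivity)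
    rw [hcd]; linarith
  have h2 : (n:ℝ)^2 / 2 * (c + n / m) = n^2 / 2 * c + n^3 / (2 * m) := by field_simp
  obtain ⟨w, hw⟩ : ∃ w : ℝ, w = 1 / (2 * m) := ⟨_, rfl⟩
  have hw0 : 0 < w := by rw [hw]; positivity
  have hdiv : ∀ x : ℝ, x / (2 * m) = x * w := fun x => by rw [hw]; ring
  rw [hdiv] at h2 ha hb
  have hfin : 0 < (n:ℝ) * y - P - (n:ℝ)^2 / 2 * c - n^3 * w - 1/4 := by
    obtain hab | hab := eq_or_lt_of_le (haR.trans hbR)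
    · have : (n:ℝ) = a := le_antisymm (by linarith) haR
      rw [this]; exact ha
    · have key : ((b:ℝ) - a) * ((n:ℝ) * y - P - (n:ℝ)^2 / 2 * c - n^3 * w - 1/4) =
          (b - n) * ((a:ℝ) * y - P - (a:ℝ)^2 / 2 * c - a^3 * w - 1/4) + (n - a) * ((b:ℝ) * y - P - (b:ℝ)^2 / 2 * c - b^3 * w - 1/4)
          + (n - a) * (b - n) * (b - a) * (c / 2 + w * (a + b + n)) := by ring
      have p1 : 0 ≤ ((b:ℝ) - n) * ((a:ℝ) * y - P - (a:ℝ)^2 / 2 * c - a^3 * w - 1/4) := mul_nonneg (by linarith) ha.le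
      have p2 : 0 ≤ ((n:ℝ) - a) * ((b:ℝ) * y - P - (b:ℝ)^2 / 2 * c - b^3 * w - 1/4) := mul_nonneg (by linarith) hb.le
      have p3 : 0 ≤ ((n:ℝ) - a) * (b - n) * (b - a) * (c / 2 + w * (a + b + n)) := by
        have q1 : 0 ≤ (n:ℝ) - a := by linarith
        have q2 : 0 ≤ (b:ℝ) - n := by linarith
        have q3 : 0 ≤ (b:ℝ) - a := by linarith
        positivity
      have p12 : 0 < ((b:ℝ) - n) * ((a:ℝ) * y - P - (a:ℝ)^2 / 2 * c - a^3 * w - 1/4) + ((n:ℝ) - a) * ((b:ℝ) * y - P - (b:ℝ)^2 / 2 * c - b^3 * w - 1/4) := by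
        obtain hx | hx := eq_or_lt_of_le haR
        · have : 0 < ((b:ℝ) - n) * ((a:ℝ) * y - P - (a:ℝ)^2 / 2 * c - a^3 * w - 1/4) := mul_pos (by linarith) ha
          linarith
        · have : 0 < ((n:ℝ) - a) * ((b:ℝ) * y - P - (b:ℝ)^2 / 2 * c - b^3 * w - 1/4) := mul_pos (by linarith) hb
          linarith
      exact pos_of_mul_pos_right (by rw [key]; linarith) (by linarith : 0 ≤ (b:ℝ) - a)
  linarith

lemma tiny {n : ℕ} (hn : 1 ≤ n) (hn4 : n ≤ 4) :
    (n:ℝ)^2 / 2 * (Real.log n - 1/2) + 1/4 < ∑ i ∈ Icc 1 n, (nthPrime i : ℝ) := by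
  have hS := sum_ge n (Nat.cast_nonneg (α := ℝ) 3)
  have hP := PiS_nat 3 1 2 (by norm_num) (by decide +kernel)
  have hl : Real.log 2 ≤ 0.7 := by have := Real.log_two_lt_d9; linarith
  have hnR : (1:ℝ) ≤ n := by exact_mod_cast hn
  have hln : Real.log n ≤ 0.7 + n / 2 - 1 := by
    have := Real.log_le_sub_one_of_pos (x := (n:ℝ) / 2) (by positivity)
    rw [Real.log_div (by positivity) (by norm_num)] at this
    linarith
  have h1 : (n:ℝ)^2 / 2 * (Real.log n - 1/2) ≤ (n:ℝ)^2 / 2 * (0.7 + n / 2 - 1 - 1/2) := by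
    gcongr
  have h2 : (n:ℝ)^2 / 2 * (0.7 + n / 2 - 1 - 1/2) + 1/4 < n * 3 - 1 := by
    clear h1 hln hnR hS
    interval_cases n <;> norm_num
  push_cast at hS hP
  linarith

lemma all_n (n : ℕ) (hn : 1 ≤ n) :
    (n:ℝ)^2 / 2 * (Real.log n - 1/2) + 1/4 < ∑ i ∈ Icc 1 n, (nthPrime i : ℝ) := by
  rcases le_or_gt n 4 with h4 | h4
  · exact tiny hn h4
  rcases le_or_gt n 12 with h12 | h12
  · exact tangent_check 5 12 19 75 5 8 52 25 (by norm_num) (by decide +kernel) (by norm_num) (by norm_num) (by norm_num) (by norm_num) (by norm_num) (by norm_num) n (by omega) h12 hn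
  rcases le_or_gt n 27 with h27 | h27
  · exact tangent_check 13 27 61 597 6 20 3 1 (by norm_num) (by decide +kernel) (by norm_num) (by norm_num) (by norm_num) (by norm_num) (by norm_num) (by norm_num) n (by omega) h27 hn
  rcases le_or_gt n 55 with h55 | h55
  · exact tangent_check 28 55 157 3225 8 43 79 21 (by norm_num) (by decide +kernel) (by norm_num) (by norm_num) (by norm_num) (by norm_num) (by norm_num) (by norm_num) n (by omega) h55 hn
  rcases le_or_gt n 109 with h109 | h109
  · exact tangent_check 56 109 367 14825 9 86 49 11 (by norm_num) (by decide +kernel) (by norm_num) (by norm_num) (by norm_num) (by norm_num) (by norm_num) (by norm_num) n (by omega) h109 hn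
  rcases le_or_gt n 213 with h213 | h213
  · exact tangent_check 110 213 827 64919 10 171 36 7 (by norm_num) (by decide +kernel) (by norm_num) (by norm_num) (by norm_num) (by norm_num) (by norm_num) (by norm_num) n (by omega) h213 hn
  rcases le_or_gt n 411 with h411 | h411
  · exact tangent_check 214 411 1801 271271 11 333 122 21 (by norm_num) (by decide +kernel) (by norm_num) (by norm_num) (by norm_num) (by norm_num) (by norm_num) (by norm_num) n (by omega) h411 hn
  rcases le_or_gt n 793 with h793 | h793
  · exact tangent_check 412 793 3863 1111991 12 642 97 15 (by norm_num) (by decide +kernel) (by norm_num) (by norm_num) (by norm_num) (by norm_num) (by norm_num) (by norm_num) n (by omega) h793 hn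
  rcases le_or_gt n 1533 with h1533 | h1533
  · exact tangent_check 794 1533 8233 4554935 14 1238 57 8 (by norm_num) (by decide +kernel) (by norm_num) (by norm_num) (by norm_num) (by norm_num) (by norm_num) (by norm_num) n (by omega) h1533 hn
  rcases le_or_gt n 2959 with h2959 | h2959
  · exact tangent_check 1534 2959 17351 18427513 15 2392 249 32 (by norm_num) (by decide +kernel) (by norm_num) (by norm_num) (by norm_num) (by norm_num) (by norm_num) (by norm_num) n (by omega) h2959 hn
  rcases le_or_gt n 5700 with h5700 | h5700
  · exact tangent_check 2960 5700 36269 73924995 16 4617 211 25 (by norm_num) (by decide +kernel) (by norm_num) (by norm_num) (by norm_num) (by norm_num) (by norm_num) (by norm_num) n (by omega) h5700 hn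
  rcases le_or_gt n 5987 with h5987 | h5987
  · exact tangent_check 5701 5987 56207 169258887 16 4560 59 7 (by norm_num) (by decide +kernel) (by norm_num) (by norm_num) (by norm_num) (by norm_num) (by norm_num) (by norm_num) n (by omega) h5987 hn
  exact large h5987

theorem stmt2 (n : ℕ) (hn : 1 ≤ n) :
    avgPrime n > ((n : ℝ) / 2) * (Real.log n - 1 / 2) + 1 / (4 * (n : ℝ)) := by
  have h := all_n n hn
  have hn0 : (0:ℝ) < n := by exact_mod_cast hn
  have e : ((n : ℝ) / 2) * (Real.log n - 1 / 2) + 1 / (4 * (n : ℝ)) = (1 / (n:ℝ)) * ((n:ℝ)^2 / 2 * (Real.log n - 1/2) + 1/4) := by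
    field_simp
  rw [avgPrime, e]
  exact mul_lt_mul_of_pos_left h (by positivity)
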